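/- arXiv:2106.09615 — 2 statements merged into one kernel-verified Lean document; each statement's English description precedes it below -/
import Mathlib

section
/- There exist absolute constants C0, C1, C2 > 0 with the following property. Let p be a prime, α, β ∈ F_p^*, and let f : F_p → F_p be given by f(x) = x/(αx + β) when αx + β ≠ 0 and f(−β/α) = 1/α. Let X, Y1, Y2, Z ⊆ F_p^* be finite nonempty sets, put A = X·Y1 and B = X·Y2, and let K_*, K ≥ 1 and K̃ ≥ 2 be reals with |X||Y1| = K_*·|A|, |X||Y2| = K_*·|B|, |X·Z| ≤ K·|X| and |Z·Z| ≤ K̃·|Z|. Suppose log p > log K̃ (so that log(log p / log K̃) is defined and positive where needed), and that |Z| ≥ p^δ for some δ ∈ (0,1] with δ ≥ C0 / log(log p / log K̃). Then there is an integer k with 1 ≤ k ≤ C1/δ such that #{(a, b) ∈ A × B : a = f(b)} − K²·K_*²·|A||B|/p ≤ C2·K²·K_*²·K̃·sqrt(|A||B|)·p^{−1/16^k}. -/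
open scoped BigOperators Pointwise

/-!
If `a = f b` then `a⁻¹ = α + β b⁻¹`. Replacing `a` and `b` by their multiples `w a` and `z b` with
`z, w ∈ Z`, which stay in sets of size at most `K Kstar #A` and `K Kstar #B`, each solution yields
`#Z ^ 2` solutions of `z v + α = w u` with `u = (w a)⁻¹` and `v = β (z b)⁻¹`. So it suffices to
show that the matrix counting the pairs `(z, w) ∈ Z × Z` with `z v + α = w u` has small discrepancy.

All its row and column sums equal `#Z ^ 2`, so the discrepancy is controlled by the trace of a high
even moment. Expanding the product into affine maps, this trace is controlled by the `L²` norms of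
the functions counting representations as signed sums of elements of quotients `Z^r / Z^r`. These
sets have few products with `Z`, so the sum-product phenomenon applies: a function on `F_p` which
correlates with many of its dilates and whose self-convolution has almost the same `L²` norm would,
by Balog–Szemerédi–Gowers, produce a dense set nearly invariant under addition and under many
dilations. Hence each doubling of the number of summands gains a power of `p`, until the energy is
that of a nearly uniform distribution.
-/

namespace ModularHyperbola

open Finset
open scoped Combinatorics.Additive

lemma sum_sum_mul_sub {G : Type*} [AddCommGroup G] [Fintype G] (f : G → ℝ) :
    ∑ u, ∑ e, f e * f (e - u) = (∑ e, f e) ^ 2 := by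
  rw [sum_comm, sq, sum_mul]
  refine sum_congr rfl fun e _ ↦ ?_
  rw [← mul_sum]
  exact congrArg _ (Equiv.sum_comp (Equiv.subLeft e) f)

section BalogSzemerediGowers

variable {G : Type*} [AddCommGroup G] [DecidableEq G]

lemma addEnergy_neg_right (A B : Finset G) : E[A, -B] = E[A, B] :=
  card_nbij' (fun x ↦ (x.1, -x.2.2, -x.2.1)) (fun x ↦ (x.1, -x.2.2, -x.2.1))
    (by
      rintro ⟨⟨a, a'⟩, b, b'⟩ h
      simp only [mem_coe, mem_filter, mem_product, mem_neg'] at h ⊢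
      exact ⟨⟨h.1.1, h.1.2.2, h.1.2.1⟩, by rw [← sub_eq_add_neg, ← sub_eq_add_neg,
        sub_eq_sub_iff_add_eq_add, h.2]⟩)
    (by
      rintro ⟨⟨a, a'⟩, b, b'⟩ h
      simp only [mem_coe, mem_filter, mem_product, mem_neg', neg_neg] at h ⊢
      exact ⟨⟨h.1.1, h.1.2.2, h.1.2.1⟩, by rw [← sub_eq_add_neg, ← sub_eq_add_neg,
        sub_eq_sub_iff_add_eq_add, h.2]⟩)
    (by simp [Set.LeftInvOn]) (by simp [Set.LeftInvOn])

lemma card_good_of_card_bad_pairs_lt {α : Type*} (B : Finset α) (R : α → α → Prop)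
    [DecidableRel R] (h : 16 * #{x ∈ B ×ˢ B | R x.1 x.2} < #B ^ 2) :
    3 * #B ≤ 4 * #{a ∈ B | 4 * #{b ∈ B | R a b} ≤ #B} := by
  by_contra! hlt
  have hsplit := card_filter_add_card_filter_not (s := B) (fun a ↦ 4 * #{b ∈ B | R a b} ≤ #B)
  have hpairs : #{x ∈ B ×ˢ B | R x.1 x.2} = ∑ a ∈ B, #{b ∈ B | R a b} := by
    simp only [card_filter, sum_product]
  have hbad : #{a ∈ B | ¬ 4 * #{b ∈ B | R a b} ≤ #B} * #B ≤ 4 * ∑ a ∈ B, #{b ∈ B | R a b} :=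
    calc _ = ∑ a ∈ B with ¬ 4 * #{b ∈ B | R a b} ≤ #B, #B := by rw [sum_const, smul_eq_mul]
      _ ≤ ∑ a ∈ B with ¬ 4 * #{b ∈ B | R a b} ≤ #B, 4 * #{b ∈ B | R a b} :=
          sum_le_sum fun a ha ↦ (not_le.1 (mem_filter.1 ha).2).le
      _ ≤ _ := by rw [mul_sum]; exact sum_le_sum_of_subset (filter_subset _ _)
  nlinarith

variable [Fintype G]

lemma sum_addConvolution (A B : Finset G) : ∑ x, A.addConvolution B x = #A * #B := by
  rw [← card_product]
  exact (card_eq_sum_card_fiberwise fun _ _ ↦ mem_coe.2 (mem_univ _)).symm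

lemma card_mem_vadd_mem_vadd (A : Finset G) (a b : G) :
    #{d : G | a ∈ d +ᵥ A ∧ b ∈ d +ᵥ A} = A.addConvolution (-A) (a - b) := by
  rw [← card_inter_vadd]
  refine card_equiv (Equiv.subLeft a) fun d ↦ ?_
  simp [← neg_vadd_mem_iff, neg_add_eq_sub]

/-- The pairs in `A ∩ (d +ᵥ A)` whose difference has fewer than `t` representations as a difference
of two elements of `A`. -/
noncomputable def unpopularPairs (A : Finset G) (t : ℝ) (d : G) : Finset (G × G) :=
  {x ∈ (A ∩ (d +ᵥ A)) ×ˢ (A ∩ (d +ᵥ A)) | (A.addConvolution (-A) (x.1 - x.2) : ℝ) < t}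

lemma sum_card_unpopularPairs_le (A : Finset G) {t : ℝ} (ht : 0 ≤ t) :
    ∑ d, (#(unpopularPairs A t d) : ℝ) ≤ t * #A ^ 2 := by
  set U : Finset (G × G) := {x ∈ A ×ˢ A | (A.addConvolution (-A) (x.1 - x.2) : ℝ) < t} with hU
  have count : ∑ d, #(unpopularPairs A t d) = ∑ x ∈ U, A.addConvolution (-A) (x.1 - x.2) := by
    have fiber : ∀ d, unpopularPairs A t d =
        U.bipartiteAbove (fun d x ↦ x.1 ∈ d +ᵥ A ∧ x.2 ∈ d +ᵥ A) d := fun d ↦ by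
      ext x
      simp only [hU, unpopularPairs, bipartiteAbove, mem_filter, mem_product, mem_inter]
      tauto
    simp only [fiber, ← card_mem_vadd_mem_vadd]
    exact sum_card_bipartiteAbove_eq_sum_card_bipartiteBelow _
  calc ∑ d, (#(unpopularPairs A t d) : ℝ)
      = ∑ x ∈ U, (A.addConvolution (-A) (x.1 - x.2) : ℝ) := by exact_mod_cast count
    _ ≤ ∑ _ ∈ U, t := sum_le_sum fun x hx ↦ (mem_filter.1 hx).2.le
    _ = #U * t := by rw [sum_const, nsmul_eq_mul]
    _ ≤ (#(A ×ˢ A) : ℕ) * t := by gcongr; exact filter_subset _ _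
    _ = t * #A ^ 2 := by rw [card_product]; push_cast; ring

lemma addEnergy_self_eq_sum_sq (A : Finset G) :
    E[A] = ∑ d : G, #(A ∩ (d +ᵥ A)) ^ 2 := by
  simp only [card_inter_vadd]
  rw [← addEnergy_neg_right, addEnergy_eq_sum_sq]
  rfl

omit [Fintype G] in
lemma exists_shift_few_unpopularPairs [Finite G] {A : Finset G} (hA : A.Nonempty) {K : ℝ}
    (hK : 0 < K) (hE : (#A : ℝ) ^ 3 ≤ K * E[A]) :
    ∃ d : G, (#A : ℝ) < 4 * K * #(A ∩ (d +ᵥ A)) ∧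
      16 * #(unpopularPairs A (#A / (32 * K)) d) < #(A ∩ (d +ᵥ A)) ^ 2 := by
  cases nonempty_fintype G
  have : (0 : ℝ) < #A := by exact_mod_cast hA.card_pos
  have sum_r : ∑ d : G, (#(A ∩ (d +ᵥ A)) : ℝ) = #A ^ 2 := by
    simp only [card_inter_vadd]
    rw [← Nat.cast_sum, sum_addConvolution, card_neg, ← sq, Nat.cast_pow]
  have sum_r_sq : (#A : ℝ) ^ 3 / K ≤ ∑ d : G, (#(A ∩ (d +ᵥ A)) : ℝ) ^ 2 := by
    rw [div_le_iff₀' hK]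
    exact_mod_cast addEnergy_self_eq_sum_sq A ▸ hE
  have sum_U := sum_card_unpopularPairs_le A (t := #A / (32 * K)) (by positivity)
  have average : ∑ d : G, (16 * (#(unpopularPairs A (#A / (32 * K)) d) : ℝ) +
      #A / (4 * K) * #(A ∩ (d +ᵥ A))) < ∑ d : G, (#(A ∩ (d +ᵥ A)) : ℝ) ^ 2 := by
    rw [sum_add_distrib, ← mul_sum, ← mul_sum, sum_r]
    have hA3 : 0 < (#A : ℝ) ^ 3 / K := by positivity
    calc 16 * ∑ d, (#(unpopularPairs A (#A / (32 * K)) d) : ℝ) + #A / (4 * K) * #A ^ 2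
        ≤ 16 * (#A / (32 * K) * #A ^ 2) + #A / (4 * K) * #A ^ 2 := by gcongr
      _ = 3 / 4 * ((#A : ℝ) ^ 3 / K) := by field_simp; norm_num
      _ < (#A : ℝ) ^ 3 / K := by linarith
      _ ≤ _ := sum_r_sq
  obtain ⟨d, -, hd⟩ := exists_lt_of_sum_lt average
  refine ⟨d, ?_, ?_⟩
  · rw [← div_lt_iff₀' (by positivity)]
    have : #A / (4 * K) * #(A ∩ (d +ᵥ A)) < (#(A ∩ (d +ᵥ A)) : ℝ) * #(A ∩ (d +ᵥ A)) :=
      (le_add_of_nonneg_left (by positivity)).trans_lt (hd.trans_eq (sq _))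
    exact lt_of_mul_lt_mul_right this (Nat.cast_nonneg _)
  · exact_mod_cast (le_add_of_nonneg_right (by positivity)).trans_lt hd

omit [Fintype G] in
lemma card_le_of_popular_paths [Finite G] {A B D : Finset G} {s t : ℝ} (ht : 0 ≤ t)
    (hD : ∀ u ∈ D, ∃ a : G, s ≤ #{c ∈ B | t ≤ A.addConvolution (-A) (a - c) ∧
      t ≤ A.addConvolution (-A) (a - u - c)}) :
    #D * (s * t ^ 2) ≤ (#A : ℝ) ^ 4 := by
  cases nonempty_fintype G
  set r : G → ℝ := fun x ↦ A.addConvolution (-A) x with hr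
  have hr0 : ∀ x, 0 ≤ r x := fun x ↦ Nat.cast_nonneg _
  have paths : ∀ u ∈ D, s * t ^ 2 ≤ ∑ e, r e * r (e - u) := fun u hu ↦ by
    obtain ⟨a, ha⟩ := hD u hu
    calc s * t ^ 2 ≤ #{c ∈ B | t ≤ r (a - c) ∧ t ≤ r (a - u - c)} * t ^ 2 := by gcongr
      _ = ∑ c ∈ B with t ≤ r (a - c) ∧ t ≤ r (a - u - c), t ^ 2 := by
          rw [sum_const, nsmul_eq_mul]
      _ ≤ ∑ c ∈ B with t ≤ r (a - c) ∧ t ≤ r (a - u - c), r (a - c) * r (a - u - c) :=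
          sum_le_sum fun c hc ↦ by
            rw [sq]
            exact mul_le_mul (mem_filter.1 hc).2.1 (mem_filter.1 hc).2.2 ht (hr0 _)
      _ ≤ ∑ c, r (a - c) * r (a - u - c) :=
          sum_le_univ_sum_of_nonneg fun c ↦ mul_nonneg (hr0 _) (hr0 _)
      _ = ∑ c, r (a - c) * r (a - c - u) := by simp only [sub_right_comm]
      _ = ∑ e, r e * r (e - u) := Equiv.sum_comp (Equiv.subLeft a) fun e ↦ r e * r (e - u)
  calc #D * (s * t ^ 2) = ∑ _ ∈ D, s * t ^ 2 := by rw [sum_const, nsmul_eq_mul]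
    _ ≤ ∑ u ∈ D, ∑ e, r e * r (e - u) := sum_le_sum paths
    _ ≤ ∑ u, ∑ e, r e * r (e - u) :=
        sum_le_univ_sum_of_nonneg fun _ ↦ sum_nonneg fun e _ ↦ mul_nonneg (hr0 _) (hr0 _)
    _ = (#A : ℝ) ^ 4 := by
        rw [sum_sum_mul_sub, hr, ← Nat.cast_sum, sum_addConvolution, card_neg]
        push_cast
        ring

omit [Fintype G] in
theorem balog_szemeredi_gowers [Finite G] {A : Finset G} (hA : A.Nonempty) {K : ℝ} (hK : 0 < K)
    (hE : (#A : ℝ) ^ 3 ≤ K * E[A]) :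
    ∃ A' ⊆ A, A'.Nonempty ∧ (#A : ℝ) ≤ 6 * K * #A' ∧ (#(A' - A') : ℝ) ≤ 2 ^ 13 * K ^ 3 * #A := by
  have hn : (0 : ℝ) < #A := by exact_mod_cast hA.card_pos
  obtain ⟨d, hd, hbad⟩ := exists_shift_few_unpopularPairs hA hK hE
  set B := A ∩ (d +ᵥ A)
  set t : ℝ := #A / (32 * K) with ht
  set A' := {a ∈ B | 4 * #{b ∈ B | (A.addConvolution (-A) (a - b) : ℝ) < t} ≤ #B}
  have hA'B : 3 * #B ≤ 4 * #A' := card_good_of_card_bad_pairs_lt B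
    (fun a b ↦ (A.addConvolution (-A) (a - b) : ℝ) < t) hbad
  have hA'B' : (3 : ℝ) * #B ≤ 4 * #A' := by exact_mod_cast hA'B
  have hB : (0 : ℝ) < #B := pos_of_mul_pos_right (hn.trans hd) (by positivity)
  refine ⟨A', (filter_subset _ _).trans inter_subset_left, card_pos.1 ?_, by nlinarith, ?_⟩
  · have : 0 < #B := by exact_mod_cast hB
    omega
  have paths : #(A' - A') * (#B / 2 * t ^ 2) ≤ (#A : ℝ) ^ 4 := by
    refine card_le_of_popular_paths (B := B) (by positivity) fun u hu ↦ ?_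
    obtain ⟨a, ha, b, hb, rfl⟩ := mem_sub.1 hu
    refine ⟨a, ?_⟩
    rw [sub_sub_cancel, div_le_iff₀ two_pos]
    have ha' := (mem_filter.1 ha).2
    have hb' := (mem_filter.1 hb).2
    have hcover : B ⊆ {c ∈ B | t ≤ A.addConvolution (-A) (a - c) ∧
        t ≤ A.addConvolution (-A) (b - c)} ∪
        ({c ∈ B | (A.addConvolution (-A) (a - c) : ℝ) < t} ∪
          {c ∈ B | (A.addConvolution (-A) (b - c) : ℝ) < t}) := fun c hc ↦ by
      simp only [mem_union, mem_filter, hc, true_and, ← not_le]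
      tauto
    have := (card_le_card hcover).trans ((card_union_le _ _).trans
      (Nat.add_le_add_left (card_union_le _ _) _))
    norm_cast
    omega
  have hpaths : #A / (4 * K) / 2 * t ^ 2 ≤ #B / 2 * t ^ 2 := by
    gcongr
    rw [div_le_iff₀' (by positivity)]
    exact hd.le
  have hconst : (#A : ℝ) / (4 * K) / 2 * t ^ 2 = #A ^ 3 / (2 ^ 13 * K ^ 3) := by
    rw [ht]; field_simp; norm_num
  have := (mul_le_mul_of_nonneg_left (hconst.symm.le.trans hpaths) (Nat.cast_nonneg _)).trans paths
  rw [← mul_div_assoc, div_le_iff₀ (by positivity)] at this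
  exact le_of_mul_le_mul_right (by linarith) (pow_pos hn 3)

end BalogSzemerediGowers

section Covering

variable {G : Type*} [AddCommGroup G] {n m : ℝ} {S S' T T' : Set G}

lemma covByVAdd_add (h : CovByVAdd G n S T) (h' : CovByVAdd G m S' T') :
    CovByVAdd G (n * m) (S + S') (T + T') := by
  classical
  have hn := h.nonneg
  obtain ⟨F, hF, h⟩ := h
  obtain ⟨F', hF', h'⟩ := h'
  refine ⟨F + F', ?_, ?_⟩
  · calc (#(F + F') : ℝ) ≤ #F * #F' := mod_cast card_add_le
      _ ≤ n * m := by gcongr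
  · rw [vadd_eq_add] at h h' ⊢
    rw [coe_add, add_add_add_comm]
    exact Set.add_subset_add h h'

lemma covByVAdd_neg (h : CovByVAdd G n S T) : CovByVAdd G n (-S) (-T) := by
  classical
  obtain ⟨F, hF, h⟩ := h
  refine ⟨-F, by rwa [card_neg], ?_⟩
  rw [vadd_eq_add] at h ⊢
  rw [coe_neg, ← neg_add]
  exact Set.neg_subset_neg.2 h

lemma covByVAdd_sub (h : CovByVAdd G n S T) (h' : CovByVAdd G m S' T') :
    CovByVAdd G (n * m) (S - S') (T - T') := by
  simpa only [sub_eq_add_neg] using covByVAdd_add h (covByVAdd_neg h')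

lemma covByVAdd_nsmul (h : CovByVAdd G n S T) (j : ℕ) : CovByVAdd G (n ^ j) (j • S) (j • T) := by
  induction j with
  | zero => simp
  | succ j ih => simpa only [pow_succ, succ_nsmul] using covByVAdd_add ih h

lemma covByVAdd_smul {Γ : Type*} [Monoid Γ] [DistribMulAction Γ G] (c : Γ)
    (h : CovByVAdd G n S T) : CovByVAdd G n (c • S) (c • T) := by
  classical
  obtain ⟨F, hF, h⟩ := h
  refine ⟨c • F, le_trans (mod_cast card_smul_finset_le) hF, ?_⟩
  rw [vadd_eq_add] at h ⊢
  rw [coe_smul_finset, ← smul_add]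
  exact Set.smul_set_mono h

lemma covByVAdd_biUnion {ι : Type*} (I : Finset ι) {S : ι → Set G}
    (h : ∀ i ∈ I, CovByVAdd G n (S i) T) : CovByVAdd G (#I * n) (⋃ i ∈ I, S i) T := by
  classical
  choose! F hF hS using h
  refine ⟨I.biUnion F, ?_, Set.iUnion₂_subset fun i hi ↦ (hS i hi).trans ?_⟩
  · calc (#(I.biUnion F) : ℝ) ≤ ∑ i ∈ I, (#(F i) : ℝ) := mod_cast card_biUnion_le
      _ ≤ #I * n := by simpa using sum_le_sum hF
  · exact Set.vadd_subset_vadd_right (mod_cast subset_biUnion_of_mem F hi)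

lemma covByVAdd_smul_of_covByVAdd_nsmul_sub {Γ : Type*} [Monoid Γ] [DistribMulAction Γ G] {c : Γ}
    {A : Set G} {j : ℕ} (h : CovByVAdd G n S (j • (A - A))) (hc : CovByVAdd G m (c • A) (A - A)) :
    CovByVAdd G (n * (m * m) ^ j) (c • S) ((2 * j) • (A - A)) := by
  refine (covByVAdd_smul c h).trans ?_
  have hT : (2 * j) • (A - A) = j • ((A - A) - (A - A)) := by
    rw [mul_comm, mul_nsmul, two_nsmul, sub_eq_add_neg (A - A), neg_sub, nsmul_add]
  have hS : c • j • (A - A) = j • (c • A - c • A) := by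
    rw [smul_comm, sub_eq_add_neg, smul_add, Set.smul_set_neg, ← sub_eq_add_neg]
  rw [hT, hS]
  exact covByVAdd_nsmul (covByVAdd_sub hc hc) j

variable [DecidableEq G]

lemma card_nsmul_sub_nsmul_le {A : Finset G} (hA : A.Nonempty) {M : ℝ} (hM : #(A - A) ≤ M * #A)
    (m n : ℕ) : #(m • A - n • A) ≤ M ^ (m + n) * #A := by
  have hpos : (0 : ℝ) < #A := mod_cast hA.card_pos
  have h : (#(m • A - n • A) : ℝ) ≤ (#(A - A) / #A) ^ (m + n) * #A := by
    have h := (NNRat.cast_le (K := ℝ)).2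
      (pluennecke_ruzsa_inequality_nsmul_sub_nsmul_sub hA A m n)
    push_cast at h
    exact h
  refine h.trans ?_
  gcongr
  rwa [div_le_iff₀ hpos]

lemma card_le_of_covByVAdd_nsmul_sub {A S : Finset G} (hA : A.Nonempty) {M : ℝ}
    (hM : #(A - A) ≤ M * #A) {j : ℕ} (h : CovByVAdd G n (S : Set G) (j • (A - A : Set G))) :
    #S ≤ n * (M ^ (2 * j) * #A) := by
  have hn := h.nonneg
  obtain ⟨F, hF, h⟩ := h
  have h : S ⊆ F + j • (A - A) := by
    rw [← coe_subset]
    push_cast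
    exact h
  calc (#S : ℝ) ≤ #F * #(j • (A - A)) := mod_cast (card_le_card h).trans card_add_le
    _ ≤ n * (M ^ (2 * j) * #A) := by
      rw [nsmul_sub, two_mul]
      gcongr
      exact card_nsmul_sub_nsmul_le hA hM j j

end Covering

section PopularDilates

lemma exists_small_subset_avoided_by_few {ι κ : Type*} {T : Finset ι} (hT : T.Nonempty)
    (B : Finset κ) (R : ι → κ → Prop) [∀ i, DecidablePred (R i)] {θ : ℝ} (hθ : θ ≤ 1)
    (h : ∀ b ∈ B, θ * #T ≤ #{t ∈ T | R t b}) (n : ℕ) :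
    ∃ T' ⊆ T, #T' ≤ n ∧ #{b ∈ B | ∀ t ∈ T', ¬ R t b} ≤ (1 - θ) ^ n * #B := by
  classical
  induction n with
  | zero => exact ⟨∅, by simp, by simp, by simp⟩
  | succ n ih =>
    obtain ⟨T', hT', hcard, hB⟩ := ih
    set B' := {b ∈ B | ∀ t ∈ T', ¬ R t b} with hB'
    obtain ⟨t, ht, htB⟩ : ∃ t ∈ T, θ * #B' ≤ #{b ∈ B' | R t b} := by
      refine exists_le_of_sum_le hT ?_
      calc ∑ _ ∈ T, θ * #B' = ∑ _ ∈ B', θ * #T := by simp only [sum_const, nsmul_eq_mul]; ring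
        _ ≤ ∑ b ∈ B', (#{t ∈ T | R t b} : ℝ) := sum_le_sum fun b hb ↦ h b (mem_filter.1 hb).1
        _ = ∑ t ∈ T, (#{b ∈ B' | R t b} : ℝ) :=
            mod_cast (sum_card_bipartiteAbove_eq_sum_card_bipartiteBelow R).symm
    refine ⟨insert t T', insert_subset ht hT', (card_insert_le _ _).trans (by omega), ?_⟩
    have hins : {b ∈ B | ∀ t' ∈ insert t T', ¬ R t' b} = {b ∈ B' | ¬ R t b} := by
      ext b
      simp only [hB', mem_filter, forall_mem_insert]
      tauto
    have hsplit : (#{b ∈ B' | R t b} : ℝ) + #{b ∈ B' | ¬ R t b} = #B' :=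
      mod_cast card_filter_add_card_filter_not _
    calc (#{b ∈ B | ∀ t' ∈ insert t T', ¬ R t' b} : ℝ) ≤ (1 - θ) * #B' := by
          rw [hins]; linarith
      _ ≤ (1 - θ) * ((1 - θ) ^ n * #B) := mul_le_mul_of_nonneg_left hB (by linarith)
      _ = (1 - θ) ^ (n + 1) * #B := by ring

lemma card_le_card_filter_of_le_sum {ι : Type*} {s : Finset ι} {f : ι → ℝ} {a M : ℝ} (ha : 0 < a)
    (hM : 0 < M) (hf : ∀ i ∈ s, f i ≤ a) (h : #s * a ≤ M * ∑ i ∈ s, f i) :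
    #s ≤ 2 * M * #{i ∈ s | a ≤ 2 * M * f i} := by
  have hsum : 2 * M * ∑ i ∈ s, f i ≤ ∑ i ∈ s, (a + if a ≤ 2 * M * f i then 2 * M * a else 0) := by
    rw [mul_sum]
    refine sum_le_sum fun i hi ↦ ?_
    have := hf i hi
    split_ifs with hc
    · nlinarith
    · linarith
  rw [sum_add_distrib, ← sum_filter, sum_const, sum_const, nsmul_eq_mul, nsmul_eq_mul] at hsum
  exact le_of_mul_le_mul_right (by linarith) ha

lemma sq_sum_card_le_card_mul_sum_card_inter {ι α : Type*} [DecidableEq α] (s : Finset ι)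
    (D : Finset α) (S : ι → Finset α) (hS : ∀ i ∈ s, S i ⊆ D) :
    (∑ i ∈ s, #(S i)) ^ 2 ≤ #D * ∑ i ∈ s, ∑ j ∈ s, #(S i ∩ S j) := by
  have hcard {T : Finset α} (hT : T ⊆ D) : #T = ∑ x ∈ D, if x ∈ T then 1 else 0 := by
    rw [← sum_filter, filter_mem_eq_inter, inter_eq_right.2 hT, card_eq_sum_ones]
  have hsum : ∑ i ∈ s, #(S i) = ∑ x ∈ D, ∑ i ∈ s, if x ∈ S i then 1 else 0 := by
    rw [sum_comm]
    exact sum_congr rfl fun i hi ↦ hcard (hS i hi)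
  rw [hsum]
  refine sq_sum_le_card_mul_sum_sq.trans_eq ?_
  congr 1
  calc ∑ x ∈ D, (∑ i ∈ s, if x ∈ S i then 1 else 0) ^ 2
      = ∑ x ∈ D, ∑ i ∈ s, ∑ j ∈ s, if x ∈ S i ∩ S j then 1 else 0 := by
        refine sum_congr rfl fun x _ ↦ ?_
        rw [sq, sum_mul_sum]
        simp only [mem_inter, ite_and, ite_mul, one_mul, zero_mul]
    _ = ∑ i ∈ s, ∑ j ∈ s, #(S i ∩ S j) := by
        rw [sum_comm]
        refine sum_congr rfl fun i hi ↦ ?_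
        rw [sum_comm]
        exact sum_congr rfl fun j _ ↦ (hcard (inter_subset_left.trans (hS i hi))).symm

lemma exists_popular_dilates {Γ α : Type*} [CommGroup Γ] [DecidableEq Γ] [MulAction Γ α]
    [DecidableEq α] {A : Finset α} {H : Finset Γ} {M : ℝ} (hA : A.Nonempty) (hH : H.Nonempty)
    (hHA : #(H • A) ≤ M * #A) (hHH : #(H / H) ≤ M * #H) :
    ∃ B : Finset Γ, B.Nonempty ∧ #H ≤ 2 * M * #B ∧ #(B / B) ≤ 2 * M ^ 2 * #B ∧
      ∀ b ∈ B, #A ≤ 2 * M * #(A ∩ b • A) := by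
  have hA₀ : (0 : ℝ) < #A := mod_cast hA.card_pos
  have hH₀ : (0 : ℝ) < #H := mod_cast hH.card_pos
  have hM : 0 < M := pos_of_mul_pos_left (hHA.trans_lt' (mod_cast (hH.smul hA).card_pos)) hA₀.le
  obtain ⟨h₀, -, hsum⟩ : ∃ h₀ ∈ H, #H * #A ≤ M * ∑ h ∈ H, (#(A ∩ (h / h₀) • A) : ℝ) := by
    have hcs := sq_sum_card_le_card_mul_sum_card_inter H (H • A) (· • A)
      fun h hh ↦ smul_finset_subset_smul hh
    simp only [card_smul_finset, sum_const, smul_eq_mul] at hcs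
    refine exists_le_of_sum_le hH ?_
    rw [sum_const, nsmul_eq_mul, ← mul_sum]
    have hinter (h₀ h : Γ) : #(h₀ • A ∩ h • A) = #(A ∩ (h / h₀) • A) := by
      rw [← card_smul_finset h₀ (A ∩ _), smul_finset_inter, smul_smul, mul_div_cancel]
    simp only [hinter] at hcs
    have hcs : ((#H : ℝ) * #A) ^ 2 ≤ #(H • A) * ∑ i ∈ H, ∑ j ∈ H, (#(A ∩ (j / i) • A) : ℝ) :=
      mod_cast hcs
    refine le_of_mul_le_mul_right ?_ hA₀
    calc (#H : ℝ) * (#H * #A) * #A = (#H * #A) ^ 2 := by ring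
      _ ≤ M * #A * ∑ i ∈ H, ∑ j ∈ H, (#(A ∩ (j / i) • A) : ℝ) := hcs.trans (by gcongr)
      _ = _ := by ring
  set H' := {h ∈ H | (#A : ℝ) ≤ 2 * M * #(A ∩ (h / h₀) • A)}
  have hH' : #H ≤ 2 * M * #H' := card_le_card_filter_of_le_sum hA₀ hM
    (fun h _ ↦ mod_cast card_le_card inter_subset_left) hsum
  have hdiv : (h₀⁻¹ • H') / (h₀⁻¹ • H') ⊆ H / H := by
    rw [div_subset_iff]
    intro x hx y hy
    obtain ⟨h, hh, rfl⟩ := mem_smul_finset.1 hx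
    obtain ⟨h', hh', rfl⟩ := mem_smul_finset.1 hy
    rw [smul_eq_mul, smul_eq_mul, mul_div_mul_left_eq_div]
    exact div_mem_div (mem_filter.1 hh).1 (mem_filter.1 hh').1
  refine ⟨h₀⁻¹ • H', ?_, by rwa [card_smul_finset], ?_, fun b hb ↦ ?_⟩
  · rw [smul_finset_nonempty, ← card_pos]
    exact_mod_cast pos_of_mul_pos_right (hH₀.trans_le hH') (by positivity)
  · calc (#((h₀⁻¹ • H') / (h₀⁻¹ • H')) : ℝ) ≤ M * #H := hHH.trans' (mod_cast card_le_card hdiv)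
      _ ≤ M * (2 * M * #H') := by gcongr
      _ = 2 * M ^ 2 * #(h₀⁻¹ • H') := by rw [card_smul_finset]; ring
  · obtain ⟨h, hh, rfl⟩ := mem_smul_finset.1 hb
    rw [smul_eq_mul, inv_mul_eq_div]
    exact (mem_filter.1 hh).2

lemma one_sub_inv_pow_ceil_le {x : ℝ} (hx : 1 ≤ x) : (1 - x⁻¹) ^ ⌈3 * x⌉₊ ≤ 1 / 8 := by
  have hx₀ : 0 < x := by positivity
  have hexp : (2 : ℝ) ≤ Real.exp 1 := by linarith [Real.add_one_le_exp (1 : ℝ)]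
  calc (1 - x⁻¹) ^ ⌈3 * x⌉₊ ≤ Real.exp (-x⁻¹) ^ ⌈3 * x⌉₊ :=
        pow_le_pow_left₀ (sub_nonneg.2 (inv_le_one_of_one_le₀ hx))
          (by linarith [Real.add_one_le_exp (-x⁻¹)]) _
    _ = Real.exp (-(⌈3 * x⌉₊ * x⁻¹)) := by rw [← Real.exp_nat_mul, mul_neg]
    _ ≤ Real.exp (-3) := by
        gcongr
        rw [le_mul_inv_iff₀ hx₀]
        exact Nat.le_ceil _
    _ = (Real.exp 1 ^ 3)⁻¹ := by rw [← Real.exp_nat_mul, ← Real.exp_neg]; norm_num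
    _ ≤ (2 ^ 3)⁻¹ := by gcongr
    _ = 1 / 8 := by norm_num

lemma card_inter_inv_smul {Γ α : Type*} [Group Γ] [MulAction Γ α] [DecidableEq α] (A : Finset α)
    (b : Γ) : #(A ∩ b⁻¹ • A) = #(A ∩ b • A) := by
  rw [← card_smul_finset b, smul_finset_inter, smul_inv_smul, inter_comm]

section Action

variable {Γ G : Type*} [DecidableEq G] {A : Finset G} {M : ℝ}

variable (A M) in
/-- The elements of `A` that stay in `A` under many of the dilations by elements of `B`. -/
noncomputable def popularElements [SMul Γ G] (B : Finset Γ) : Finset G :=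
  {x ∈ A | #B ≤ 4 * M * #{b ∈ B | b • x ∈ A}}

lemma card_le_card_popularElements [Group Γ] [MulAction Γ G] (hM : 0 < M) {B : Finset Γ}
    (hB : B.Nonempty) (h : ∀ b ∈ B, #A ≤ 2 * M * #(A ∩ b • A)) :
    #A ≤ 4 * M * #(popularElements A M B) := by
  have hcount : ∑ b ∈ B, (#(A ∩ b • A) : ℝ) = ∑ x ∈ A, (#{b ∈ B | b • x ∈ A} : ℝ) := by
    have hstay (b : Γ) : #(A ∩ b • A) = #{x ∈ A | b • x ∈ A} := by
      rw [← card_inter_inv_smul]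
      congr 1
      ext x
      rw [mem_inter, mem_filter, mem_inv_smul_finset_iff]
    simp only [hstay]
    exact_mod_cast sum_card_bipartiteAbove_eq_sum_card_bipartiteBelow fun b x ↦ b • x ∈ A
  have := card_le_card_filter_of_le_sum (s := A) (f := fun x ↦ (#{b ∈ B | b • x ∈ A} : ℝ))
    (a := #B) (M := 2 * M) (mod_cast hB.card_pos) (by positivity)
    (fun x _ ↦ mod_cast card_filter_le _ _) (by
      rw [← hcount, mul_comm, mul_sum, ← nsmul_eq_mul, ← sum_const]
      exact sum_le_sum h)
  rw [← mul_assoc] at this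
  norm_num at this
  exact this

variable [AddCommGroup G]

lemma covByVAdd_smul_of_popular [Group Γ] [DistribMulAction Γ G] (hM : 2 ≤ M) (hA : A.Nonempty)
    (hAA : #(A - A) ≤ M * #A) {b : Γ} (hb : #A ≤ 2 * M * #(A ∩ b • A)) :
    CovByVAdd G (M ^ 4) (b • (A : Set G)) (A - A) := by
  have hA₀ : (0 : ℝ) < #A := mod_cast hA.card_pos
  have hP : (A ∩ b • A).Nonempty := by
    rw [← card_pos]
    exact_mod_cast pos_of_mul_pos_right (hA₀.trans_le hb) (by positivity)
  have hsum : #(b • A + A ∩ b • A) ≤ M ^ 4 * #(A ∩ b • A) := by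
    have hAA' := card_nsmul_sub_nsmul_le hA hAA 2 0
    rw [two_nsmul, zero_nsmul, sub_zero] at hAA'
    calc (#(b • A + A ∩ b • A) : ℝ) ≤ #(b • (A + A)) := by
          rw [smul_add]
          exact_mod_cast card_le_card (add_subset_add_left inter_subset_right)
      _ ≤ M ^ 2 * (2 * M * #(A ∩ b • A)) := by
          rw [card_smul_finset]
          exact hAA'.trans (by gcongr)
      _ = 2 * M ^ 3 * #(A ∩ b • A) := by ring
      _ ≤ M * M ^ 3 * #(A ∩ b • A) := by gcongr
      _ = M ^ 4 * #(A ∩ b • A) := by ring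
  obtain ⟨F, -, hF, hcov⟩ := ruzsa_covering_add hP hsum
  refine ⟨F, hF, ?_⟩
  have hcov := hcov.trans (add_subset_add_left (sub_subset_sub inter_subset_left inter_subset_left))
  rw [← coe_subset] at hcov
  push_cast at hcov
  exact hcov

lemma covByVAdd_div_smul_of_popular [CommGroup Γ] [DistribMulAction Γ G] (hM : 2 ≤ M)
    (hA : A.Nonempty) (hAA : #(A - A) ≤ M * #A) {b c : Γ} (hb : #A ≤ 2 * M * #(A ∩ b • A))
    (hc : #A ≤ 2 * M * #(A ∩ c • A)) :
    CovByVAdd G (M ^ 12) ((b / c) • (A : Set G)) (2 • (A - A : Set G)) := by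
  have hc' : CovByVAdd G (M ^ 4) (c⁻¹ • (A : Set G)) (1 • (A - A : Set G)) := by
    rw [one_nsmul]
    exact covByVAdd_smul_of_popular hM hA hAA (by rwa [card_inter_inv_smul])
  have := covByVAdd_smul_of_covByVAdd_nsmul_sub hc' (covByVAdd_smul_of_popular hM hA hAA hb)
  rw [smul_smul, ← div_eq_mul_inv, mul_one] at this
  exact this.mono (by ring_nf; rfl)

lemma card_le_card_filter_div_mem [CommGroup Γ] [DecidableEq Γ] {B C : Finset Γ} {b : Γ}
    (hb : b ∈ B) (hC : C ⊆ B) : #C ≤ #{t ∈ B / B | b / t ∈ C} := by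
  refine card_le_card_of_injOn (b / ·) (fun c hc ↦ ?_) (div_right_injective (b := b)).injOn
  rw [mem_coe, mem_filter, div_div_cancel]
  exact ⟨div_mem_div hb (hC hc), hc⟩

lemma exists_covByVAdd_smul_popularElement [CommGroup Γ] [DecidableEq Γ] [DistribMulAction Γ G]
    (hM : 2 ≤ M) (hA : A.Nonempty) (hAA : #(A - A) ≤ M * #A) {B : Finset Γ} (hB : B.Nonempty)
    (hBB : #(B / B) ≤ 2 * M ^ 2 * #B) (h : ∀ b ∈ B, #A ≤ 2 * M * #(A ∩ b • A)) {x : G}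
    (hx : x ∈ popularElements A M B) :
    ∃ B' ⊆ B, #(B \ B') ≤ (#B / 8 : ℝ) ∧
      CovByVAdd G (M ^ 20) ((· • x) '' (B' : Set Γ)) (2 • (A - A : Set G)) := by
  set Bx := {b ∈ B | b • x ∈ A}
  have hM3 : (1 : ℝ) ≤ 8 * M ^ 3 := by nlinarith [pow_le_pow_left₀ zero_le_two hM 3]
  have hdense (b : Γ) (hb : b ∈ B) :
      (8 * M ^ 3)⁻¹ * #(B / B) ≤ (#{t ∈ B / B | b / t ∈ Bx} : ℝ) := by
    rw [inv_mul_le_iff₀ (by positivity)]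
    calc (#(B / B) : ℝ) ≤ 2 * M ^ 2 * (4 * M * #Bx) :=
          hBB.trans (by gcongr; exact (mem_filter.1 hx).2)
      _ = 8 * M ^ 3 * #Bx := by ring
      _ ≤ 8 * M ^ 3 * #{t ∈ B / B | b / t ∈ Bx} := by
          gcongr 8 * M ^ 3 * ?_
          exact mod_cast card_le_card_filter_div_mem hb (filter_subset (· • x ∈ A) B)
  obtain ⟨T, hT, hTcard, hfew⟩ := exists_small_subset_avoided_by_few (hB.div hB) B
    (fun t b ↦ b / t ∈ Bx) (inv_le_one_of_one_le₀ hM3) hdense ⌈3 * (8 * M ^ 3)⌉₊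
  refine ⟨{b ∈ B | ∃ t ∈ T, b / t ∈ Bx}, filter_subset _ _, ?_, ?_⟩
  · rw [← filter_not]
    simp only [not_exists, not_and]
    refine hfew.trans ?_
    calc _ ≤ 1 / 8 * (#B : ℝ) := by gcongr; exact one_sub_inv_pow_ceil_le hM3
      _ = #B / 8 := by ring
  · have hTM : (#T : ℝ) ≤ M ^ 8 := by
      have := (Nat.ceil_lt_add_one (by positivity : 0 ≤ 3 * (8 * M ^ 3))).le
      calc (#T : ℝ) ≤ 3 * (8 * M ^ 3) + 1 := le_trans (mod_cast hTcard) this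
        _ ≤ 2 ^ 5 * M ^ 3 := by linarith
        _ ≤ M ^ 5 * M ^ 3 := by gcongr
        _ = M ^ 8 := by ring
    have hcov : CovByVAdd G (#T * M ^ 12) (⋃ t ∈ T, t • (A : Set G)) (2 • (A - A : Set G)) := by
      refine covByVAdd_biUnion T fun t ht ↦ ?_
      obtain ⟨b, hb, c, hc, rfl⟩ := mem_div.1 (hT ht)
      exact covByVAdd_div_smul_of_popular hM hA hAA (h b hb) (h c hc)
    refine (hcov.subset_left ?_).mono ?_
    · rintro _ ⟨b, hb, rfl⟩
      obtain ⟨-, t, ht, hbt⟩ := mem_filter.1 hb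
      refine Set.mem_iUnion₂.2 ⟨t, ht, (b / t) • x, (mem_filter.1 hbt).2, ?_⟩
      simp only [smul_smul, mul_div_cancel]
    · calc #T * M ^ 12 ≤ M ^ 8 * M ^ 12 := by gcongr
        _ = M ^ 20 := by ring

end Action

end PopularDilates

section SumProduct

section Collisions

variable {F : Type*} [Field F] [DecidableEq F]

/-- The number of solutions of `w + ξ * b = w' + ξ * b'` with `w, w' ∈ W` and `b, b' ∈ B`. -/
def collisions (W B : Finset F) (ξ : F) : ℕ :=
  ∑ b ∈ B, ∑ b' ∈ B, #((ξ * b +ᵥ W) ∩ (ξ * b' +ᵥ W))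

lemma collisions_mono_right {W B B' : Finset F} (h : B ⊆ B') (ξ : F) :
    collisions W B ξ ≤ collisions W B' ξ :=
  (sum_le_sum fun _ _ ↦ sum_le_sum_of_subset h).trans (sum_le_sum_of_subset h)

lemma sq_card_mul_card_le_card_add_mul_collisions (W B : Finset F) (ξ : F) :
    (#W * #B) ^ 2 ≤ #(W + ξ • B) * collisions W B ξ := by
  have := sq_sum_card_le_card_mul_sum_card_inter B (W + ξ • B) (fun b ↦ ξ * b +ᵥ W) fun b hb ↦ by
    rw [add_comm, ← vadd_eq_add]
    exact vadd_finset_subset_vadd (smul_mem_smul_finset hb)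
  simpa only [collisions, card_vadd_finset, sum_const, smul_eq_mul, mul_comm #B] using this

lemma card_vadd_inter_vadd (W : Finset F) (x y : F) :
    #((x +ᵥ W) ∩ (y +ᵥ W)) = #(W ∩ ((y - x) +ᵥ W)) := by
  rw [← card_vadd_finset x (W ∩ _), vadd_finset_inter, vadd_vadd, add_sub_cancel]

lemma collisions_le_card_mul_card {W B : Finset F} {ξ : F}
    (h : ∀ b ∈ B, ∀ b' ∈ B, b ≠ b' → ∀ x ∈ W, ∀ y ∈ W, ξ * (b - b') ≠ x - y) :
    collisions W B ξ ≤ #W * #B := by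
  have hb (b) (hb : b ∈ B) : ∑ b' ∈ B, #((ξ * b +ᵥ W) ∩ (ξ * b' +ᵥ W)) ≤ #W := by
    rw [sum_eq_single_of_mem b hb fun b' hb' hne ↦ ?_]
    · rw [inter_self, card_vadd_finset]
    · rw [card_eq_zero, eq_empty_iff_forall_notMem]
      intro z hz
      obtain ⟨⟨y, hy, rfl⟩, x, hx, hxy⟩ :=
        (mem_inter.1 hz).imp mem_vadd_finset.1 mem_vadd_finset.1
      simp only [vadd_eq_add] at hxy
      exact h b hb b' hb' hne.symm x hx y hy (by linear_combination -hxy)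
  calc collisions W B ξ ≤ ∑ _ ∈ B, #W := sum_le_sum hb
    _ = #W * #B := by rw [sum_const, smul_eq_mul, mul_comm]

lemma sum_collisions_le [Fintype F] (W B : Finset F) :
    ∑ ξ, collisions W B ξ ≤ Fintype.card F * (#W * #B) + (#W * #B) ^ 2 := by
  have hpair (b b' : F) : ∑ ξ, #((ξ * b +ᵥ W) ∩ (ξ * b' +ᵥ W)) ≤
      (if b = b' then Fintype.card F * #W else 0) + #W ^ 2 := by
    simp only [card_vadd_inter_vadd, ← mul_sub]
    split_ifs with hbb'
    · simp [hbb', card_univ]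
    · rw [zero_add]
      refine (Equiv.sum_comp (Equiv.mulRight₀ (b' - b) (sub_ne_zero.2 (Ne.symm hbb')))
        fun u ↦ #(W ∩ (u +ᵥ W))).trans_le ?_
      simp only [card_inter_vadd, sum_addConvolution, card_neg, sq, le_refl]
  calc ∑ ξ, collisions W B ξ = ∑ b ∈ B, ∑ b' ∈ B, ∑ ξ, #((ξ * b +ᵥ W) ∩ (ξ * b' +ᵥ W)) := by
        simp only [collisions]
        rw [sum_comm]
        exact sum_congr rfl fun b _ ↦ sum_comm
    _ ≤ ∑ b ∈ B, ∑ b' ∈ B, ((if b = b' then Fintype.card F * #W else 0) + #W ^ 2) :=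
        sum_le_sum fun b _ ↦ sum_le_sum fun b' _ ↦ hpair b b'
    _ = Fintype.card F * (#W * #B) + (#W * #B) ^ 2 := by
        simp only [sum_add_distrib, sum_ite_eq, sum_ite_mem, inter_self, sum_const, smul_eq_mul]
        ring

end Collisions

variable {p : ℕ} [Fact p.Prime]

lemma exists_mem_add_mem_of_compl_subset {S Q : Set (ZMod p)} {w : ZMod p} (hw : w ≠ 0)
    (hS : S.Nonempty) (hSQ : Sᶜ ⊆ Q) (hQ : 0 ∈ Q) : ∃ ξ ∈ Q, ξ + w ∈ S := by
  by_contra! hcon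
  have hmul (k : ℕ) : k * w ∈ Q := by
    induction k with
    | zero => simpa using hQ
    | succ k ih =>
      rw [Nat.cast_succ, add_one_mul]
      exact hSQ (hcon _ ih)
  obtain ⟨η, hη⟩ := hS
  refine hcon _ (hmul ((η - w) / w).val) ?_
  rwa [ZMod.natCast_zmod_val, div_mul_cancel₀ _ hw, sub_add_cancel]

lemma exists_quotient_add_few_collisions {W B : Finset (ZMod p)} {w : ZMod p} (hw : w ∈ W)
    (hw₀ : w ≠ 0) (hB : 1 < #B) :
    ∃ ξ, (∃ b ∈ B, ∃ b' ∈ B, b ≠ b' ∧ ∃ x ∈ W, ∃ y ∈ W, ξ * (b - b') = x - y) ∧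
      collisions W B (ξ + w) ≤ (#W * #B + (#W * #B) ^ 2 / p : ℝ) := by
  have hp : (0 : ℝ) < p := mod_cast (Fact.out : p.Prime).pos
  refine exists_mem_add_mem_of_compl_subset
    (S := {ξ | collisions W B ξ ≤ (#W * #B + (#W * #B) ^ 2 / p : ℝ)})
    (Q := {ξ | ∃ b ∈ B, ∃ b' ∈ B, b ≠ b' ∧ ∃ x ∈ W, ∃ y ∈ W, ξ * (b - b') = x - y}) hw₀ ?_ ?_ ?_
  · have hsum : ∑ ξ, (collisions W B ξ : ℝ) ≤
        ∑ _ : ZMod p, (#W * #B + (#W * #B) ^ 2 / p : ℝ) := by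
      have := sum_collisions_le W B
      rw [ZMod.card] at this
      rw [sum_const, card_univ, ZMod.card, nsmul_eq_mul, mul_add, mul_div_cancel₀ _ hp.ne']
      exact_mod_cast this
    obtain ⟨ξ, -, hξ⟩ := exists_le_of_sum_le univ_nonempty hsum
    exact ⟨ξ, hξ⟩
  · refine Set.compl_subset_comm.1 fun ξ hξ ↦ ?_
    have hle : (collisions W B ξ : ℝ) ≤ #W * #B := by
      refine mod_cast collisions_le_card_mul_card fun b hb b' hb' hne x hx y hy heq ↦ ?_
      exact hξ ⟨b, hb, b', hb', hne, x, hx, y, hy, heq⟩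
    exact hle.trans (le_add_of_nonneg_right (by positivity))
  · obtain ⟨b, hb, b', hb', hne⟩ := one_lt_card.1 hB
    exact ⟨b, hb, b', hb', hne, w, hw, w, hw, by simp⟩

lemma card_mul_card_le_or_le_of_few_collisions {W B B' : Finset (ZMod p)} {ξ : ZMod p}
    (hW : W.Nonempty) (hB : B.Nonempty) (hB' : B' ⊆ B) (hcard : (#B : ℝ) ≤ 2 * #B')
    (h : collisions W B ξ ≤ (#W * #B + (#W * #B) ^ 2 / p : ℝ)) :
    (#W * #B : ℝ) ≤ 8 * #(W + ξ • B') ∨ (p : ℝ) ≤ 8 * #(W + ξ • B') := by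
  have hp : (0 : ℝ) < p := mod_cast (Fact.out : p.Prime).pos
  have hm : (0 : ℝ) < #W * #B := mod_cast mul_pos hW.card_pos hB.card_pos
  have hcs : ((#W : ℝ) * #B') ^ 2 ≤ #(W + ξ • B') * collisions W B ξ := by
    exact_mod_cast (sq_card_mul_card_le_card_add_mul_collisions W B' ξ).trans
      (Nat.mul_le_mul_left _ (collisions_mono_right hB' ξ))
  set N : ℝ := #W * #B with hN
  have hmain : N ^ 2 ≤ 4 * #(W + ξ • B') * (N + N ^ 2 / p) := by
    calc N ^ 2 ≤ (#W * (2 * #B') : ℝ) ^ 2 := by rw [hN]; gcongr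
      _ = 4 * (#W * #B' : ℝ) ^ 2 := by ring
      _ ≤ 4 * (#(W + ξ • B') * (N + N ^ 2 / p)) := by gcongr; exact hcs.trans (by gcongr)
      _ = _ := by ring
  by_contra! hlt
  obtain ⟨hltN, hltp⟩ := hlt
  have hltp : 8 * (#(W + ξ • B') : ℝ) * (N ^ 2 / p) < N ^ 2 := by
    rw [mul_div_assoc', div_lt_iff₀ hp, mul_comm]
    exact mul_lt_mul_of_pos_left hltp (by positivity)
  nlinarith

-- Dilating by `b - b'` clears the denominator of `ξ`, so that the set lands in a sum of dilates
-- each of which is covered by few translates of a sum of copies of `A - A`.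
lemma card_add_smul_le_of_covByVAdd {A W V : Finset (ZMod p)} {M : ℝ} {b b' : (ZMod p)ˣ}
    {x y w ξ : ZMod p} (hA : A.Nonempty) (hAA : #(A - A) ≤ M * #A) (hWA : W ⊆ A) (hne : b ≠ b')
    (hξ : ξ * (b - b') = x - y) (hb : CovByVAdd (ZMod p) (M ^ 4) (b • (A : Set (ZMod p))) (A - A))
    (hb' : CovByVAdd (ZMod p) (M ^ 4) (b' • (A : Set (ZMod p))) (A - A))
    (hx : CovByVAdd (ZMod p) (M ^ 20) (x • (V : Set (ZMod p))) (2 • (A - A : Set (ZMod p))))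
    (hy : CovByVAdd (ZMod p) (M ^ 20) (y • (V : Set (ZMod p))) (2 • (A - A : Set (ZMod p))))
    (hw : CovByVAdd (ZMod p) (M ^ 20) (w • (V : Set (ZMod p))) (2 • (A - A : Set (ZMod p)))) :
    #(W + (ξ + w) • V) ≤ M ^ 148 * #A := by
  have hcov := covByVAdd_add (covByVAdd_add (covByVAdd_sub hb hb') (covByVAdd_sub hx hy))
    (covByVAdd_sub (covByVAdd_smul_of_covByVAdd_nsmul_sub hw hb)
      (covByVAdd_smul_of_covByVAdd_nsmul_sub hw hb'))
  have hT (D : Set (ZMod p)) (hD : -D = D) :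
      D - D + (2 • D - 2 • D) + ((2 * 2) • D - (2 * 2) • D) = 14 • D := by
    simp only [sub_eq_add_neg, ← neg_nsmul, hD]
    abel
  rw [hT _ (by rw [neg_sub])] at hcov
  have hsub : (((b - b' : ZMod p) • (W + (ξ + w) • V) : Finset (ZMod p)) : Set (ZMod p)) ⊆
      b • (A : Set (ZMod p)) - b' • (A : Set (ZMod p)) +
        (x • (V : Set (ZMod p)) - y • (V : Set (ZMod p))) +
        (b • w • (V : Set (ZMod p)) - b' • w • (V : Set (ZMod p))) := by
    intro z hz
    obtain ⟨s, hs, rfl⟩ := mem_smul_finset.1 (mem_coe.1 hz)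
    obtain ⟨a, ha, t, ht, rfl⟩ := mem_add.1 hs
    obtain ⟨v, hv, rfl⟩ := mem_smul_finset.1 ht
    have hid : (b - b' : ZMod p) • (a + (ξ + w) • v) =
        (b • a - b' • a) + (x • v - y • v) + (b • w • v - b' • w • v) := by
      simp only [smul_eq_mul, Units.smul_def]
      linear_combination v * hξ
    rw [hid]
    have smul_mem {R : Type} [SMul R (ZMod p)] (c : R) {s : Set (ZMod p)} {u : ZMod p}
      (hu : u ∈ s) : c • u ∈ c • s := Set.smul_mem_smul_set hu
    exact Set.add_mem_add (Set.add_mem_add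
      (Set.sub_mem_sub (smul_mem b (hWA ha)) (smul_mem b' (hWA ha)))
      (Set.sub_mem_sub (smul_mem x hv) (smul_mem y hv)))
      (Set.sub_mem_sub (smul_mem b (smul_mem w hv)) (smul_mem b' (smul_mem w hv)))
  have hcard := card_le_of_covByVAdd_nsmul_sub hA hAA (hcov.subset_left hsub)
  rw [card_smul_finset₀ (sub_ne_zero.2 (Units.val_injective.ne hne))] at hcard
  exact hcard.trans_eq (by ring)

lemma exists_subset_covByVAdd_three {A : Finset (ZMod p)} {B : Finset (ZMod p)ˣ} {M : ℝ}
    (hM : 2 ≤ M) (hA : A.Nonempty) (hAA : #(A - A) ≤ M * #A) (hB : B.Nonempty)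
    (hBB : #(B / B) ≤ 2 * M ^ 2 * #B) (h : ∀ b ∈ B, #A ≤ 2 * M * #(A ∩ b • A))
    {x : Fin 3 → ZMod p} (hx : ∀ i, x i ∈ popularElements A M B) :
    ∃ B' ⊆ B, (#B : ℝ) ≤ 2 * #B' ∧ ∀ i, CovByVAdd (ZMod p) (M ^ 20)
      (x i • (Units.val '' (B' : Set (ZMod p)ˣ))) (2 • (A - A : Set (ZMod p))) := by
  choose B' _ hcard hcov using fun i ↦
    exists_covByVAdd_smul_popularElement hM hA hAA hB hBB h (hx i)
  set E := univ.biUnion fun i ↦ B \ B' i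
  refine ⟨B \ E, sdiff_subset, ?_, fun i ↦ (hcov i).subset_left ?_⟩
  · have hE : (#E : ℝ) ≤ 3 * (#B / 8) := by
      calc (#E : ℝ) ≤ ∑ i, (#(B \ B' i) : ℝ) := mod_cast card_biUnion_le
        _ ≤ 3 * (#B / 8) := by simpa using sum_le_sum fun i (_ : i ∈ univ) ↦ hcard i
    have : (#B : ℝ) ≤ #(B \ E) + #E := by
      have := le_card_sdiff E B
      exact_mod_cast (by omega : #B ≤ #(B \ E) + #E)
    linarith [(Nat.cast_nonneg #B : (0 : ℝ) ≤ #B)]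
  · rintro _ ⟨_, ⟨b, hb, rfl⟩, rfl⟩
    refine ⟨b, ?_, by simp only [Units.smul_def, smul_eq_mul, mul_comm]⟩
    simp only [E, mem_coe, mem_sdiff, mem_biUnion, mem_univ, true_and, not_exists, not_and,
      not_not] at hb
    exact hb.2 i hb.1

lemma card_mul_card_le_or_le_of_popular {A : Finset (ZMod p)} {B : Finset (ZMod p)ˣ} {M : ℝ}
    (hM : 2 ≤ M) (hA : A.Nonempty) (hAA : #(A - A) ≤ M * #A) (hB : 1 < #B)
    (hBB : #(B / B) ≤ 2 * M ^ 2 * #B) (h : ∀ b ∈ B, #A ≤ 2 * M * #(A ∩ b • A))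
    (hW : 1 < #(popularElements A M B)) :
    #(popularElements A M B) * #B ≤ M ^ 151 * #A ∨ p ≤ M ^ 151 * #A := by
  have hB₀ : B.Nonempty := card_pos.1 (zero_lt_one.trans hB)
  have hW₀ : (popularElements A M B).Nonempty := card_pos.1 (zero_lt_one.trans hW)
  obtain ⟨w, hw, hw₀⟩ := exists_mem_ne hW 0
  obtain ⟨ι, hι⟩ : ∃ ι : (ZMod p)ˣ ↪ ZMod p, ⇑ι = Units.val := ⟨⟨_, Units.val_injective⟩, rfl⟩
  obtain ⟨ξ, ⟨_, hb, _, hb', hne, x, hx, y, hy, hξ⟩, hfew⟩ :=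
    exists_quotient_add_few_collisions (B := B.map ι) hw hw₀ (by rwa [card_map])
  obtain ⟨b, hbB, rfl⟩ := mem_map.1 hb
  obtain ⟨b', hbB', rfl⟩ := mem_map.1 hb'
  obtain ⟨B', hB'B, hBB', hcov⟩ := exists_subset_covByVAdd_three hM hA hAA hB₀ hBB h
    (x := ![x, y, w]) (Fin.forall_fin_succ.2 ⟨hx, Fin.forall_fin_succ.2 ⟨hy, by simpa using hw⟩⟩)
  simp only [← hι, ← coe_map] at hcov
  have hupper : #(popularElements A M B + (ξ + w) • B'.map ι) ≤ M ^ 148 * #A :=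
    card_add_smul_le_of_covByVAdd hA hAA (filter_subset _ _) (ne_of_apply_ne ι hne)
      (by simpa [hι] using hξ) (covByVAdd_smul_of_popular hM hA hAA (h b hbB))
      (covByVAdd_smul_of_popular hM hA hAA (h b' hbB')) (hcov 0) (hcov 1) (hcov 2)
  have hupper : 8 * #(popularElements A M B + (ξ + w) • B'.map ι) ≤ M ^ 151 * #A := by
    calc 8 * (#(popularElements A M B + (ξ + w) • B'.map ι) : ℝ)
        ≤ 2 ^ 3 * (M ^ 148 * #A) := by linarith
      _ ≤ M ^ 3 * (M ^ 148 * #A) := by gcongr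
      _ = M ^ 151 * #A := by ring
  have hlower := card_mul_card_le_or_le_of_few_collisions hW₀ (hB₀.map (f := ι))
    (map_subset_map.2 hB'B) (by simpa only [card_map] using hBB') hfew
  rw [card_map] at hlower
  exact hlower.imp hupper.trans' hupper.trans'

theorem sum_product_alternative {A : Finset (ZMod p)} {H : Finset (ZMod p)ˣ} {M : ℝ} (hM : 2 ≤ M)
    (hA : A.Nonempty) (hH : H.Nonempty) (hHA : #(H • A) ≤ M * #A) (hAA : #(A - A) ≤ M * #A)
    (hHH : #(H / H) ≤ M * #H) :
    #A ≤ 4 * M ∨ #H ≤ M ^ 156 ∨ p ≤ M ^ 151 * #A := by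
  have hA₀ : (0 : ℝ) < #A := mod_cast hA.card_pos
  have hM₁ : 1 ≤ M := by linarith
  have hdilates := exists_popular_dilates (Γ := (ZMod p)ˣ) (α := ZMod p) (M := M) hA hH hHA hHH
  obtain ⟨B, hB, hHB, hBB, hpop⟩ := hdilates
  have hAW := card_le_card_popularElements (by positivity) hB hpop
  rw [or_iff_not_imp_left, not_le]
  intro hA4
  have hW : 1 < #(popularElements A M B) := by
    have : (1 : ℝ) < #(popularElements A M B) :=
      lt_of_mul_lt_mul_left (by linarith) (by positivity : 0 ≤ 4 * M)
    exact_mod_cast this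
  obtain hB₁ | hB₁ := le_or_gt #B 1
  · left
    calc (#H : ℝ) ≤ 2 * M * #B := hHB
      _ ≤ M * M * 1 := by gcongr; exact_mod_cast hB₁
      _ = M ^ 2 := by ring
      _ ≤ M ^ 156 := pow_le_pow_right₀ hM₁ (by norm_num)
  refine (card_mul_card_le_or_le_of_popular hM hA hAA hB₁ hBB hpop hW).imp_left fun h ↦ ?_
  have hBM : (#B : ℝ) ≤ 4 * M ^ 152 := by
    refine le_of_mul_le_mul_left ?_ hA₀
    calc (#A : ℝ) * #B ≤ 4 * M * #(popularElements A M B) * #B := by gcongr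
      _ = 4 * M * (#(popularElements A M B) * #B) := by ring
      _ ≤ 4 * M * (M ^ 151 * #A) := by gcongr
      _ = #A * (4 * M ^ 152) := by ring
  calc (#H : ℝ) ≤ 2 * M * (4 * M ^ 152) := hHB.trans (by gcongr)
    _ = 2 ^ 3 * M ^ 153 := by ring
    _ ≤ M ^ 3 * M ^ 153 := by gcongr
    _ = M ^ 156 := by ring

end SumProduct

section Convolution

variable {G : Type*} [AddCommGroup G] [Fintype G]

/-- The convolution of two real functions on a finite abelian group, with respect to counting
measure. -/
def convolution (f g : G → ℝ) (x : G) : ℝ := ∑ y, f y * g (x - y)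

lemma sum_sub_right (f : G → ℝ) (y : G) : ∑ x, f (x - y) = ∑ x, f x :=
  Equiv.sum_comp (Equiv.subRight y) f

lemma convolution_nonneg {f g : G → ℝ} (hf : 0 ≤ f) (hg : 0 ≤ g) : 0 ≤ convolution f g :=
  fun _ ↦ sum_nonneg fun y _ ↦ mul_nonneg (hf y) (hg _)

lemma convolution_mono {f f' g g' : G → ℝ} (hf : 0 ≤ f) (hg : 0 ≤ g) (hff' : f ≤ f')
    (hgg' : g ≤ g') : convolution f g ≤ convolution f' g' :=
  fun _ ↦ sum_le_sum fun y _ ↦ mul_le_mul (hff' y) (hgg' _) (hg _) ((hf y).trans (hff' y))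

lemma convolution_comm (f g : G → ℝ) : convolution f g = convolution g f := by
  ext x
  rw [convolution, ← Equiv.sum_comp (Equiv.subLeft x)]
  exact sum_congr rfl fun y _ ↦ by rw [Equiv.subLeft_apply, sub_sub_cancel, mul_comm]

lemma convolution_smul_smul (c : ℝ) (f g : G → ℝ) :
    convolution (c • f) (c • g) = c ^ 2 • convolution f g := by
  ext x
  simp only [convolution, Pi.smul_apply, smul_eq_mul, mul_sum]
  exact sum_congr rfl fun y _ ↦ by ring

lemma sum_convolution_sq_le {f : G → ℝ} (hf : 0 ≤ f) (g : G → ℝ) :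
    ∑ x, convolution f g x ^ 2 ≤ (∑ x, f x) ^ 2 * ∑ x, g x ^ 2 :=
  calc ∑ x, convolution f g x ^ 2
      ≤ ∑ x, (∑ y, f y) * ∑ y, f y * g (x - y) ^ 2 := sum_le_sum fun x _ ↦
        sum_sq_le_sum_mul_sum_of_sq_le_mul univ (fun y _ ↦ hf y)
          (fun y _ ↦ mul_nonneg (hf y) (sq_nonneg _)) fun y _ ↦ by rw [mul_pow, sq (f y), mul_assoc]
    _ = (∑ y, f y) * ∑ y, f y * ∑ x, g (x - y) ^ 2 := by
        rw [← mul_sum, sum_comm]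
        simp only [← mul_sum]
    _ = (∑ x, f x) ^ 2 * ∑ x, g x ^ 2 := by
        simp only [sum_sub_right (fun x ↦ g x ^ 2), ← sum_mul]
        ring

lemma convolution_self_le_add {f m l h : G → ℝ} (hm : 0 ≤ m) (hl : 0 ≤ l) (hh : 0 ≤ h)
    (hmf : m ≤ f) (hf : f ≤ m + l + h) :
    convolution f f ≤ convolution m m + (2 : ℝ) • convolution f l + (2 : ℝ) • convolution h f := by
  intro x
  calc convolution f f x
      ≤ ∑ y, (m y * m (x - y) + f y * l (x - y) + l y * f (x - y)
          + (h y * f (x - y) + f y * h (x - y))) := by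
        refine sum_le_sum fun y _ ↦ ?_
        have h₁ : f y * f (x - y) ≤ f y * (m (x - y) + l (x - y) + h (x - y)) :=
          mul_le_mul_of_nonneg_left (hf _) ((hm y).trans (hmf y))
        have h₂ : f y * m (x - y) ≤ (m y + l y + h y) * m (x - y) :=
          mul_le_mul_of_nonneg_right (hf y) (hm _)
        have h₃ : (l y + h y) * m (x - y) ≤ (l y + h y) * f (x - y) :=
          mul_le_mul_of_nonneg_left (hmf _) (add_nonneg (hl y) (hh y))
        linarith
    _ = convolution m m x + convolution f l x + convolution l f x
          + (convolution h f x + convolution f h x) := by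
        simp only [convolution, sum_add_distrib]
    _ = _ := by
        rw [convolution_comm l, convolution_comm f h]
        simp only [Pi.add_apply, Pi.smul_apply, smul_eq_mul]
        ring

lemma sum_convolution_self_sq_le_add {f m l h : G → ℝ} (hm : 0 ≤ m) (hl : 0 ≤ l) (hh : 0 ≤ h)
    (hmf : m ≤ f) (hf : f ≤ m + l + h) :
    ∑ x, convolution f f x ^ 2 ≤ 3 * ∑ x, convolution m m x ^ 2 +
      12 * ∑ x, convolution f l x ^ 2 + 12 * ∑ x, convolution h f x ^ 2 := by
  simp only [mul_sum, ← sum_add_distrib]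
  refine sum_le_sum fun x _ ↦ ?_
  have hff : 0 ≤ convolution f f x := convolution_nonneg (hm.trans hmf) (hm.trans hmf) x
  have hle := convolution_self_le_add hm hl hh hmf hf x
  simp only [Pi.add_apply, Pi.smul_apply, smul_eq_mul] at hle
  calc convolution f f x ^ 2
      ≤ (convolution m m x + 2 * convolution f l x + 2 * convolution h f x) ^ 2 := by gcongr
    _ ≤ _ := by
        nlinarith [sq_nonneg (convolution m m x - 2 * convolution f l x),
          sq_nonneg (convolution m m x - 2 * convolution h f x),
          sq_nonneg (2 * convolution f l x - 2 * convolution h f x)]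

variable [DecidableEq G]

lemma convolution_indicator_one (A : Finset G) (x : G) :
    convolution ((A : Set G).indicator 1) ((A : Set G).indicator 1) x =
      #{ab ∈ A ×ˢ A | ab.1 + ab.2 = x} := by
  have fiber : ∀ a, ∑ b ∈ A, (if a + b = x then (1 : ℝ) else 0) = if x - a ∈ A then 1 else 0 :=
    fun a ↦ by simp only [← eq_sub_iff_add_eq', sum_ite_eq']
  rw [card_filter, Nat.cast_sum, sum_product]
  simp only [Nat.cast_ite, Nat.cast_one, Nat.cast_zero, fiber]
  rw [convolution, ← sum_indicator_subset _ (subset_univ A)]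
  refine sum_congr rfl fun y _ ↦ ?_
  by_cases hy : y ∈ A <;> simp [hy, Set.indicator_apply]

lemma sum_convolution_indicator_one_sq (A : Finset G) :
    ∑ x, convolution ((A : Set G).indicator 1) ((A : Set G).indicator 1) x ^ 2 = (E[A] : ℝ) := by
  simp only [addEnergy_eq_sum_sq, convolution_indicator_one, Nat.cast_sum, Nat.cast_pow]

omit [Fintype G] in
lemma addEnergy_self_le_card_pow_three [Finite G] (A : Finset G) : (E[A] : ℝ) ≤ (#A : ℝ) ^ 3 := by
  cases nonempty_fintype G
  have hsum : ∑ x, (A : Set G).indicator (1 : G → ℝ) x = #A := by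
    rw [sum_indicator_subset _ (subset_univ A)]
    simp
  have hsq : ∀ x, (A : Set G).indicator (1 : G → ℝ) x ^ 2 = (A : Set G).indicator 1 x := fun x ↦ by
    by_cases hx : x ∈ A <;> simp [hx]
  rw [← sum_convolution_indicator_one_sq]
  have hnonneg : 0 ≤ (A : Set G).indicator (1 : G → ℝ) := Set.indicator_nonneg fun _ _ ↦ zero_le_one
  refine (sum_convolution_sq_le hnonneg _).trans_eq ?_
  simp only [hsq, hsum]
  ring

end Convolution

section LevelSet

variable {α : Type*} [Fintype α]

lemma card_mul_le_sum {f : α → ℝ} (hf : 0 ≤ f) {A : Finset α} {t : ℝ} (hA : ∀ a ∈ A, t ≤ f a) :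
    #A * t ≤ ∑ x, f x :=
  calc (#A : ℝ) * t = #A • t := (nsmul_eq_mul _ _).symm
    _ ≤ ∑ x ∈ A, f x := card_nsmul_le_sum _ _ _ hA
    _ ≤ ∑ x, f x := sum_le_univ_sum_of_nonneg hf

lemma sum_indicator_lt_sq_le {f : α → ℝ} (hf : 0 ≤ f) {t : ℝ} (ht : 0 ≤ t) :
    ∑ x, {x | f x < t}.indicator f x ^ 2 ≤ t * ∑ x, f x := by
  rw [mul_sum]
  refine sum_le_sum fun x _ ↦ ?_
  by_cases hx : f x < t
  · rw [Set.indicator_of_mem (s := {x | f x < t}) hx, sq]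
    exact mul_le_mul_of_nonneg_right hx.le (hf x)
  · rw [Set.indicator_of_notMem (s := {x | f x < t}) hx, zero_pow two_ne_zero]
    exact mul_nonneg ht (hf x)

lemma mul_sum_indicator_gt_le {f : α → ℝ} (hf : 0 ≤ f) (t : ℝ) :
    t * ∑ x, {x | t < f x}.indicator f x ≤ ∑ x, f x ^ 2 := by
  rw [mul_sum]
  refine sum_le_sum fun x _ ↦ ?_
  by_cases hx : t < f x
  · rw [Set.indicator_of_mem (s := {x | t < f x}) hx, sq]
    exact mul_le_mul_of_nonneg_right hx.le (hf x)
  · rw [Set.indicator_of_notMem (s := {x | t < f x}) hx, mul_zero]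
    exact sq_nonneg _

lemma card_mul_le_of_level_le {f : α → ℝ} (hf : 0 ≤ f) {M N e : ℝ} (hM : 2 ≤ M) (hN : 0 < N)
    (hfN : ∑ x, f x ≤ N) {A : Finset α} (hA : ∀ a ∈ A, e / (48 * M * N) ≤ f a) :
    #A * e ≤ M ^ 7 * N ^ 2 := by
  have hcard := (card_mul_le_sum hf hA).trans hfN
  rw [← mul_div_assoc, div_le_iff₀ (by positivity)] at hcard
  calc #A * e ≤ 48 * M * N ^ 2 := by linarith
    _ ≤ 2 ^ 6 * M * N ^ 2 := by gcongr; norm_num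
    _ ≤ M ^ 6 * M * N ^ 2 := by gcongr
    _ = M ^ 7 * N ^ 2 := by ring

variable {G : Type*} [AddCommGroup G] [Fintype G] [DecidableEq G]

lemma sum_convolution_indicator_self_sq_le {f : G → ℝ} (hf : 0 ≤ f) {u : ℝ} {A : Finset G}
    (hA : ∀ x ∈ A, f x ≤ u) :
    ∑ x, convolution ((A : Set G).indicator f) ((A : Set G).indicator f) x ^ 2 ≤ u ^ 4 * E[A] := by
  set m := (A : Set G).indicator f
  have hm : 0 ≤ m := Set.indicator_nonneg fun x _ ↦ hf x
  have hmu : m ≤ u • (A : Set G).indicator 1 := fun x ↦ by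
    by_cases hx : x ∈ A
    · simpa [m, hx] using hA x hx
    · simp [m, hx]
  rw [← sum_convolution_indicator_one_sq, mul_sum]
  refine sum_le_sum fun x _ ↦ ?_
  have := convolution_mono hm hm hmu hmu x
  rw [convolution_smul_smul, Pi.smul_apply, smul_eq_mul] at this
  calc convolution m m x ^ 2 ≤ (u ^ 2 * _) ^ 2 := by
        gcongr
        exact convolution_nonneg hm hm x
    _ = _ := by ring

lemma sum_convolution_self_sq_le_addEnergy {f : G → ℝ} (hf : 0 ≤ f) {t u : ℝ} (ht : 0 ≤ t)
    (hu : 0 < u) {A : Finset G} (hA : ∀ x, x ∈ A ↔ t ≤ f x ∧ f x ≤ u) :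
    ∑ x, convolution f f x ^ 2 ≤ 3 * (u ^ 4 * E[A]) + 12 * ((∑ x, f x) ^ 2 * (t * ∑ x, f x)) +
      12 * (((∑ x, f x ^ 2) / u) ^ 2 * ∑ x, f x ^ 2) := by
  set m := (A : Set G).indicator f
  set l := {x | f x < t}.indicator f
  set h := {x | u < f x}.indicator f
  have nonneg (s : Set G) : 0 ≤ s.indicator f := Set.indicator_nonneg fun x _ ↦ hf x
  have split : f ≤ m + l + h := fun x ↦ by
    have hm : 0 ≤ m x := nonneg _ x
    have hl : 0 ≤ l x := nonneg _ x
    have hh : 0 ≤ h x := nonneg _ x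
    simp only [Pi.add_apply]
    obtain hx | hx := lt_or_ge (f x) t
    · have : l x = f x := Set.indicator_of_mem (s := {x | f x < t}) hx f
      linarith
    obtain hx' | hx' := lt_or_ge u (f x)
    · have : h x = f x := Set.indicator_of_mem (s := {x | u < f x}) hx' f
      linarith
    · have : m x = f x := Set.indicator_of_mem (mem_coe.2 ((hA x).2 ⟨hx, hx'⟩)) f
      linarith
  have middle : ∑ x, convolution m m x ^ 2 ≤ u ^ 4 * E[A] :=
    sum_convolution_indicator_self_sq_le hf fun x hx ↦ ((hA x).1 hx).2
  have low : ∑ x, convolution f l x ^ 2 ≤ (∑ x, f x) ^ 2 * (t * ∑ x, f x) :=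
    (sum_convolution_sq_le hf l).trans (by gcongr; exact sum_indicator_lt_sq_le hf ht)
  have high : ∑ x, convolution h f x ^ 2 ≤ ((∑ x, f x ^ 2) / u) ^ 2 * ∑ x, f x ^ 2 := by
    refine (sum_convolution_sq_le (nonneg _) f).trans ?_
    gcongr
    · exact sum_nonneg fun x _ ↦ nonneg _ x
    · rw [le_div_iff₀' hu]
      exact mul_sum_indicator_gt_le hf u
  calc _ ≤ _ := sum_convolution_self_sq_le_add (nonneg _) (nonneg _) (nonneg _)
        (Set.indicator_le_self' fun x _ ↦ hf x) split
    _ ≤ _ := by gcongr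

lemma pow_six_le_addEnergy_of_large_energy {f : G → ℝ} (hf : 0 ≤ f) {M N e : ℝ} (hM : 1 ≤ M)
    (hN : 0 < N) (he : 0 < e) (hfN : ∑ x, f x ≤ N) (hfe : ∑ x, f x ^ 2 ≤ e)
    (hE : N ^ 2 * e ≤ M * ∑ x, convolution f f x ^ 2) {A : Finset G}
    (hA : ∀ x, x ∈ A ↔ e / (48 * M * N) ≤ f x ∧ f x ≤ 48 * M * e / N) :
    N ^ 6 ≤ 6 * M * (48 * M) ^ 4 * e ^ 3 * E[A] := by
  have : 0 < M := by linarith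
  have hf₁ : 0 ≤ ∑ x, f x := sum_nonneg fun x _ ↦ hf x
  have : 0 ≤ ∑ x, f x ^ 2 := sum_nonneg fun x _ ↦ sq_nonneg _
  have low : (∑ x, f x) ^ 2 * (e / (48 * M * N) * ∑ x, f x) ≤ N ^ 2 * e / (48 * M) :=
    calc _ ≤ N ^ 2 * (e / (48 * M * N) * N) := by gcongr
      _ = N ^ 2 * e / (48 * M) := by field_simp
  have high : ((∑ x, f x ^ 2) / (48 * M * e / N)) ^ 2 * ∑ x, f x ^ 2 ≤ N ^ 2 * e / (48 * M) :=
    calc _ ≤ (e / (48 * M * e / N)) ^ 2 * e := by gcongr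
      _ = N ^ 2 * e / (48 * M) / (48 * M) := by field_simp
      _ ≤ N ^ 2 * e / (48 * M) := div_le_self (by positivity) (by linarith)
  have half : N ^ 2 * e ≤ 6 * M * ((48 * M * e / N) ^ 4 * E[A]) := by
    have hsplit := sum_convolution_self_sq_le_addEnergy hf (by positivity) (by positivity) hA
    have hle : N ^ 2 * e ≤ M * (3 * ((48 * M * e / N) ^ 4 * E[A]) +
        12 * (N ^ 2 * e / (48 * M)) + 12 * (N ^ 2 * e / (48 * M))) :=
      hE.trans (by gcongr; exact hsplit.trans (by gcongr))
    have hcancel : M * (N ^ 2 * e / (48 * M)) = N ^ 2 * e / 48 := by field_simp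
    linarith
  have : N ^ 6 * e ≤ 6 * M * (48 * M) ^ 4 * e ^ 3 * E[A] * e :=
    calc N ^ 6 * e = N ^ 4 * (N ^ 2 * e) := by ring
      _ ≤ N ^ 4 * (6 * M * ((48 * M * e / N) ^ 4 * E[A])) := by gcongr
      _ = _ := by field_simp
  exact le_of_mul_le_mul_right this he

lemma exists_level_set_large_addEnergy {f : G → ℝ} (hf : 0 ≤ f) {M N e : ℝ} (hM : 2 ≤ M)
    (hN : 0 < N) (he : 0 < e) (hfN : ∑ x, f x ≤ N) (hfe : ∑ x, f x ^ 2 ≤ e)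
    (hE : N ^ 2 * e ≤ M * ∑ x, convolution f f x ^ 2) :
    ∃ A : Finset G, (∀ a ∈ A, e / (48 * M * N) ≤ f a) ∧ (#A : ℝ) ^ 3 ≤ M ^ 53 * E[A] ∧
      N ^ 2 ≤ M ^ 11 * (#A * e) := by
  classical
  set A : Finset G := {x | e / (48 * M * N) ≤ f x ∧ f x ≤ 48 * M * e / N}
  have mem_A : ∀ x, x ∈ A ↔ e / (48 * M * N) ≤ f x ∧ f x ≤ 48 * M * e / N := fun x ↦ by simp [A]
  have hA : ∀ a ∈ A, e / (48 * M * N) ≤ f a := fun a ha ↦ ((mem_A a).1 ha).1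
  have hcard := card_mul_le_of_level_le hf hM hN hfN hA
  have henergy : N ^ 6 ≤ M ^ 32 * e ^ 3 * E[A] :=
    calc N ^ 6 ≤ 6 * M * (48 * M) ^ 4 * e ^ 3 * E[A] :=
        pow_six_le_addEnergy_of_large_energy hf (by linarith) hN he hfN hfe hE mem_A
      _ ≤ 2 ^ 3 * M * (2 ^ 6 * M) ^ 4 * e ^ 3 * E[A] := by gcongr <;> norm_num
      _ ≤ M ^ 3 * M * (M ^ 6 * M) ^ 4 * e ^ 3 * E[A] := by gcongr
      _ = M ^ 32 * e ^ 3 * E[A] := by ring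
  refine ⟨A, hA, ?_, ?_⟩
  · refine le_of_mul_le_mul_right ?_ (pow_pos he 3)
    calc (#A : ℝ) ^ 3 * e ^ 3 = (#A * e) ^ 3 := by ring
      _ ≤ (M ^ 7 * N ^ 2) ^ 3 := by gcongr
      _ = M ^ 21 * N ^ 6 := by ring
      _ ≤ M ^ 21 * (M ^ 32 * e ^ 3 * E[A]) := by gcongr
      _ = M ^ 53 * E[A] * e ^ 3 := by ring
  · refine le_of_pow_le_pow_left₀ (n := 3) three_ne_zero (by positivity) ?_
    calc (N ^ 2) ^ 3 = N ^ 6 := by ring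
      _ ≤ M ^ 32 * e ^ 3 * (#A : ℝ) ^ 3 := henergy.trans (by
          gcongr
          exact addEnergy_self_le_card_pow_three A)
      _ ≤ M ^ 33 * e ^ 3 * (#A : ℝ) ^ 3 := by
          gcongr
          · linarith
          · norm_num
      _ = (M ^ 11 * (#A * e)) ^ 3 := by ring

lemma exists_level_set_small_doubling {f : G → ℝ} (hf : 0 ≤ f) {M N e : ℝ} (hM : 2 ≤ M)
    (hN : 0 < N) (he : 0 < e) (hfN : ∑ x, f x ≤ N) (hfe : ∑ x, f x ^ 2 ≤ e)
    (hE : N ^ 2 * e ≤ M * ∑ x, convolution f f x ^ 2) :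
    ∃ A : Finset G, A.Nonempty ∧ (∀ a ∈ A, e / (48 * M * N) ≤ f a) ∧
      (#(A - A) : ℝ) ≤ M ^ 228 * #A ∧ N ^ 2 ≤ M ^ 67 * (#A * e) := by
  have : 1 ≤ M := by linarith
  obtain ⟨B, hB, hBE, hBN⟩ := exists_level_set_large_addEnergy hf hM hN he hfN hfe hE
  have hB₀ : B.Nonempty := by
    by_contra! hempty
    have : 0 < N ^ 2 := by positivity
    rw [hempty, card_empty, Nat.cast_zero, zero_mul, mul_zero] at hBN
    linarith
  obtain ⟨A, hAB, hA₀, hBA, hAA⟩ := balog_szemeredi_gowers hB₀ (by positivity) hBE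
  have hcard : (#B : ℝ) ≤ M ^ 56 * #A :=
    calc (#B : ℝ) ≤ 6 * M ^ 53 * #A := hBA
      _ ≤ 2 ^ 3 * M ^ 53 * #A := by gcongr; norm_num
      _ ≤ M ^ 3 * M ^ 53 * #A := by gcongr
      _ = M ^ 56 * #A := by ring
  refine ⟨A, hA₀, fun a ha ↦ hB a (hAB ha), ?_, ?_⟩
  · calc (#(A - A) : ℝ) ≤ 2 ^ 13 * (M ^ 53) ^ 3 * #B := hAA
      _ ≤ M ^ 13 * (M ^ 53) ^ 3 * (M ^ 56 * #A) := by gcongr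
      _ = M ^ 228 * #A := by ring
  · calc N ^ 2 ≤ M ^ 11 * (#B * e) := hBN
      _ ≤ M ^ 11 * (M ^ 56 * #A * e) := by gcongr
      _ = M ^ 67 * (#A * e) := by ring

end LevelSet

section Flattening

variable {p : ℕ} [Fact p.Prime] {f g : ZMod p → ℝ} {H : Finset (ZMod p)ˣ}

lemma sum_smul_left (g : ZMod p → ℝ) (h : (ZMod p)ˣ) : ∑ x, g (h • x) = ∑ x, g x :=
  Equiv.sum_comp (MulAction.toPerm h) g

/-- The exponent of the losses in `flattening`. Its value is not optimised: any number that is at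
least `297`, `228 * 156` and `228 * 151 + 7` will do. -/
def flatteningExponent : ℕ := 40000

lemma card_smul_level_le (hfg : ∀ h ∈ H, ∀ x, f x ≤ g (h • x)) (hg : 0 ≤ g) {M N e : ℝ}
    (hM : 2 ≤ M) (hN : 0 < N) (he : 0 < e) (hgN : ∑ x, g x ≤ N) {A : Finset (ZMod p)}
    (hA : ∀ a ∈ A, e / (48 * M * N) ≤ f a) (hNA : N ^ 2 ≤ M ^ 67 * (#A * e)) :
    #(H • A) ≤ M ^ 74 * #A := by
  have hlevel : ∀ y ∈ H • A, e / (48 * M * N) ≤ g y := by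
    intro y hy
    obtain ⟨k, hk, a, ha, rfl⟩ := mem_smul.1 hy
    exact (hA a ha).trans (hfg k hk a)
  refine le_of_mul_le_mul_right ?_ he
  calc #(H • A) * e ≤ M ^ 7 * N ^ 2 := card_mul_le_of_level_le hg hM hN hgN hlevel
    _ ≤ M ^ 7 * (M ^ 67 * (#A * e)) := by gcongr
    _ = M ^ 74 * #A * e := by ring

theorem flattening (hf : 0 ≤ f) (hH : H.Nonempty) (hfg : ∀ h ∈ H, ∀ x, f x ≤ g (h • x)) {M : ℝ}
    (hM : 2 ≤ M) (hHH : #(H / H) ≤ M * #H) (hg₁ : 0 < ∑ x, g x) (hg₂ : 0 < ∑ x, g x ^ 2)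
    (hE : (∑ x, g x) ^ 2 * ∑ x, g x ^ 2 ≤ M * ∑ x, convolution f f x ^ 2) :
    (∑ x, g x) ^ 2 ≤ M ^ flatteningExponent * ∑ x, g x ^ 2 ∨ #H ≤ M ^ flatteningExponent ∨
      p * ∑ x, g x ^ 2 ≤ M ^ flatteningExponent * (∑ x, g x) ^ 2 := by
  obtain ⟨h, hh⟩ := hH
  have hM₁ : 1 ≤ M := by linarith
  have hg : 0 ≤ g := fun x ↦ (hf (h⁻¹ • x)).trans (by simpa using hfg h hh (h⁻¹ • x))
  have hfg₁ : ∑ x, f x ≤ ∑ x, g x := by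
    rw [← sum_smul_left g h]
    exact sum_le_sum fun x _ ↦ hfg h hh x
  have hfg₂ : ∑ x, f x ^ 2 ≤ ∑ x, g x ^ 2 := by
    rw [← sum_smul_left (fun x ↦ g x ^ 2) h]
    exact sum_le_sum fun x _ ↦ pow_le_pow_left₀ (hf x) (hfg h hh x) 2
  set N := ∑ x, g x
  set e := ∑ x, g x ^ 2
  obtain ⟨A, hA₀, hA, hAA, hNA⟩ := exists_level_set_small_doubling hf hM hg₁ hg₂ hfg₁ hfg₂ hE
  have hAe : #A * e ≤ M ^ 7 * N ^ 2 := card_mul_le_of_level_le hf hM hg₁ hfg₁ hA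
  have hHA : #(H • A) ≤ M ^ 228 * #A :=
    (card_smul_level_le hfg hg hM hg₁ hg₂ le_rfl hA hNA).trans (by gcongr; norm_num)
  have hM228 : M ≤ M ^ 228 := le_self_pow₀ hM₁ (by norm_num)
  have habsorb {n : ℕ} (hn : n ≤ flatteningExponent) : M ^ n ≤ M ^ flatteningExponent :=
    pow_le_pow_right₀ hM₁ hn
  obtain h₁ | h₂ | h₃ := sum_product_alternative (hM.trans hM228) hA₀ ⟨h, hh⟩ hHA hAA
    (hHH.trans (by gcongr))
  · left
    calc N ^ 2 ≤ M ^ 67 * (#A * e) := hNA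
      _ ≤ M ^ 67 * (2 ^ 2 * M ^ 228 * e) := by gcongr; linarith
      _ ≤ M ^ 67 * (M ^ 2 * M ^ 228 * e) := by gcongr
      _ = M ^ 297 * e := by ring
      _ ≤ M ^ flatteningExponent * e :=
        mul_le_mul_of_nonneg_right (habsorb (by norm_num [flatteningExponent])) hg₂.le
  · right; left
    rw [← pow_mul] at h₂
    exact h₂.trans (habsorb (by norm_num [flatteningExponent]))
  · right; right
    rw [← pow_mul] at h₃
    calc p * e ≤ M ^ (228 * 151) * #A * e := by gcongr
      _ = M ^ (228 * 151) * (#A * e) := mul_assoc _ _ _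
      _ ≤ M ^ (228 * 151) * (M ^ 7 * N ^ 2) := by gcongr
      _ = M ^ (228 * 151 + 7) * N ^ 2 := by rw [pow_add, mul_assoc]
      _ ≤ M ^ flatteningExponent * N ^ 2 :=
        mul_le_mul_of_nonneg_right (habsorb (by norm_num [flatteningExponent])) (sq_nonneg N)

end Flattening

section SumReps

variable {G : Type*} [AddCommGroup G] [DecidableEq G] {A B : Finset G}

/-- The number of ways to write an element of an abelian group as an ordered sum of `m` elements
of `A`, as a real number. -/
def sumReps (A : Finset G) : ℕ → G → ℝ
  | 0 => fun x ↦ if x = 0 then 1 else 0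
  | m + 1 => fun x ↦ ∑ a ∈ A, sumReps A m (x - a)

lemma sumReps_nonneg (A : Finset G) (m : ℕ) : 0 ≤ sumReps A m := by
  induction m with
  | zero => exact fun x ↦ ite_nonneg zero_le_one le_rfl
  | succ m ih => exact fun x ↦ sum_nonneg fun a _ ↦ ih _

lemma sumReps_one (A : Finset G) (x : G) : sumReps A 1 x = if x ∈ A then 1 else 0 := by
  simp only [sumReps, sub_eq_zero, sum_ite_eq]

lemma sumReps_le_sumReps_smul {Γ : Type*} [Group Γ] [DistribMulAction Γ G] {g : Γ}
    (h : g • A ⊆ B) (m : ℕ) (x : G) : sumReps A m x ≤ sumReps B m (g • x) := by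
  induction m generalizing x with
  | zero => simp only [sumReps, smul_eq_zero_iff_eq, le_refl]
  | succ m ih =>
    calc ∑ a ∈ A, sumReps A m (x - a)
        ≤ ∑ a ∈ A, sumReps B m (g • x - g • a) :=
          sum_le_sum fun a _ ↦ by simpa only [smul_sub] using ih (x - a)
      _ = ∑ b ∈ g • A, sumReps B m (g • x - b) :=
          by rw [← image_smul, sum_image (MulAction.injective g).injOn]
      _ ≤ ∑ b ∈ B, sumReps B m (g • x - b) :=
          sum_le_sum_of_subset_of_nonneg h fun b _ _ ↦ sumReps_nonneg B m _

variable [Fintype G]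

lemma sum_sumReps (A : Finset G) (m : ℕ) : ∑ x, sumReps A m x = (#A : ℝ) ^ m := by
  induction m with
  | zero => simp [sumReps]
  | succ m ih =>
    simp only [sumReps]
    rw [sum_comm]
    simp only [sum_sub_right, ih, sum_const, nsmul_eq_mul, pow_succ']

lemma sumReps_add (A : Finset G) (m n : ℕ) :
    sumReps A (m + n) = convolution (sumReps A m) (sumReps A n) := by
  induction m with
  | zero => ext x; simp [convolution, sumReps]
  | succ m ih =>
    ext x
    rw [Nat.add_right_comm]
    simp only [sumReps, convolution, ih, sum_mul]
    conv_rhs => rw [sum_comm]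
    refine sum_congr rfl fun a _ ↦ ?_
    rw [← sum_sub_right _ a]
    simp only [sub_sub_sub_cancel_right]

lemma sum_sumReps_one_sq (A : Finset G) : ∑ x, sumReps A 1 x ^ 2 = #A := by
  simp [sumReps_one]

lemma sum_sumReps_succ_sq_le (A : Finset G) (m : ℕ) :
    ∑ x, sumReps A (m + 1) x ^ 2 ≤ (#A : ℝ) ^ (2 * m + 1) := by
  rw [sumReps_add]
  refine (sum_convolution_sq_le (sumReps_nonneg A m) _).trans_eq ?_
  rw [sum_sumReps, sum_sumReps_one_sq]
  ring

lemma sum_sumReps_sq_pos (hA : A.Nonempty) (m : ℕ) : 0 < ∑ x, sumReps A m x ^ 2 := by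
  have hsum : ∑ x, sumReps A m x ≠ 0 := by
    rw [sum_sumReps]
    exact pow_ne_zero _ (mod_cast hA.card_ne_zero)
  obtain ⟨x, -, hx⟩ := exists_ne_zero_of_sum_ne_zero hsum
  exact sum_pos' (fun _ _ ↦ sq_nonneg _) ⟨x, mem_univ x, by positivity⟩

lemma sum_sumReps_two_mul_sq_le {Γ : Type*} [Group Γ] [DistribMulAction Γ G] {g : Γ}
    (h : g • A ⊆ B) (m : ℕ) :
    ∑ x, sumReps A (2 * m) x ^ 2 ≤ (#B : ℝ) ^ (2 * m) * ∑ x, sumReps B m x ^ 2 := by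
  have hcard : (#A : ℝ) ≤ #B := by
    rw [← card_smul_finset g A]
    exact_mod_cast card_le_card h
  rw [two_mul, sumReps_add, pow_add, ← sq]
  refine (sum_convolution_sq_le (sumReps_nonneg A m) _).trans ?_
  rw [sum_sumReps, ← Equiv.sum_comp (MulAction.toPerm g) fun x ↦ sumReps B m x ^ 2]
  gcongr with x
  · exact sumReps_nonneg A m x
  · exact sumReps_le_sumReps_smul h m x

end SumReps

section EnergyDecay

variable {p : ℕ} [Fact p.Prime] {Z : Finset (ZMod p)ˣ} {M : ℝ}

lemma energy_gain_or_equidistributed {S T : Finset (ZMod p)} (hM : 2 ≤ M) (hZ : Z.Nonempty)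
    (hZZ : #(Z / Z) ≤ M * #Z) (hMZ : M ^ flatteningExponent < #Z)
    (hMT : M ^ flatteningExponent < #T) (hST : Z • S ⊆ T) {m : ℕ} (hm : m ≠ 0) :
    M * ∑ x, sumReps S (2 * m) x ^ 2 ≤ (#T : ℝ) ^ (2 * m) * ∑ x, sumReps T m x ^ 2 ∨
      p * ∑ x, sumReps T m x ^ 2 ≤ M ^ flatteningExponent * (#T : ℝ) ^ (2 * m) := by
  rw [or_iff_not_imp_left, not_le]
  intro hE
  have hT : (0 : ℝ) < #T := (by positivity : (0 : ℝ) ≤ M ^ flatteningExponent).trans_lt hMT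
  have hsum : (∑ x, sumReps T m x) ^ 2 = (#T : ℝ) ^ (2 * m) := by
    rw [sum_sumReps, ← pow_mul, mul_comm]
  have hdilate : ∀ z ∈ Z, ∀ x, sumReps S m x ≤ sumReps T m (z • x) := fun z hz ↦
    sumReps_le_sumReps_smul ((smul_finset_subset_smul hz).trans hST) m
  have hflat := flattening (sumReps_nonneg S m) hZ hdilate hM hZZ
    (by rw [sum_sumReps]; positivity)
    (sum_sumReps_sq_pos (card_pos.1 (mod_cast hT)) m)
    (by rw [hsum, ← sumReps_add, ← two_mul]; exact hE.le)
  rw [hsum] at hflat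
  obtain h | h | h := hflat
  · obtain ⟨n, rfl⟩ := Nat.exists_eq_add_one_of_ne_zero hm
    have : (#T : ℝ) ^ (2 * (n + 1)) < #T ^ (2 * (n + 1)) :=
      calc (#T : ℝ) ^ (2 * (n + 1))
          ≤ M ^ flatteningExponent * ∑ x, sumReps T (n + 1) x ^ 2 := h
        _ ≤ M ^ flatteningExponent * #T ^ (2 * n + 1) := by
            gcongr; exact sum_sumReps_succ_sq_le T n
        _ < #T * #T ^ (2 * n + 1) := by gcongr
        _ = #T ^ (2 * (n + 1)) := by ring
    exact absurd this (lt_irrefl _)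
  · exact absurd h hMZ.not_ge
  · exact h

lemma sum_sumReps_two_mul_sq_le_max {S T : Finset (ZMod p)} (hM : 2 ≤ M) (hZ : Z.Nonempty)
    (hZZ : #(Z / Z) ≤ M * #Z) (hMZ : M ^ flatteningExponent < #Z)
    (hMT : M ^ flatteningExponent < #T) (hST : Z • S ⊆ T) {m : ℕ} (hm : m ≠ 0) :
    ∑ x, sumReps S (2 * m) x ^ 2 ≤ (#T : ℝ) ^ (2 * m) *
      max (M⁻¹ * ∑ x, sumReps T m x ^ 2) (#T ^ (2 * m) * (M ^ flatteningExponent / p)) := by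
  obtain hgain | hflat := energy_gain_or_equidistributed hM hZ hZZ hMZ hMT hST hm
  · rw [← le_inv_mul_iff₀ (by linarith), mul_left_comm] at hgain
    exact hgain.trans (by gcongr; exact le_max_left _ _)
  · obtain ⟨z, hz⟩ := hZ
    have hp : (0 : ℝ) < p := mod_cast (Fact.out : p.Prime).pos
    rw [← le_div_iff₀' hp, mul_div_right_comm, mul_comm] at hflat
    refine (sum_sumReps_two_mul_sq_le ((smul_finset_subset_smul hz).trans hST) m).trans ?_
    gcongr
    exact hflat.trans (le_max_right _ _)

theorem sum_sumReps_two_pow_sq_le {S : ℕ → Finset (ZMod p)} {Λ : ℝ} {J : ℕ} (hM : 2 ≤ M)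
    (hZ : Z.Nonempty) (hZZ : #(Z / Z) ≤ M * #Z) (hMZ : M ^ flatteningExponent < #Z)
    (hS : ∀ i, Z • S i ⊆ S (i + 1)) (hZS : ∀ i, #Z ≤ #(S i)) (hSΛ : ∀ i ≤ J, (#(S i) : ℝ) ≤ Λ)
    {j : ℕ} (hj : j ≤ J) :
    ∑ x, sumReps (S (J - j)) (2 ^ j) x ^ 2 ≤
      Λ ^ (2 * 2 ^ j) * max (M ^ j)⁻¹ (M ^ flatteningExponent / p) := by
  have hMS i : M ^ flatteningExponent < #(S i) := hMZ.trans_le (mod_cast hZS i)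
  have hM₁ : 1 ≤ M := by linarith
  have hΛ : 1 ≤ Λ := (one_le_pow₀ hM₁).trans ((hMS 0).le.trans (hSΛ 0 J.zero_le))
  set b : ℝ := M ^ flatteningExponent / p
  have hb : 0 ≤ b := by positivity
  induction j with
  | zero =>
    rw [pow_zero, sum_sumReps_one_sq, pow_zero, inv_one]
    calc (#(S J) : ℝ) ≤ Λ := hSΛ J le_rfl
      _ ≤ Λ ^ (2 * 1) := le_self_pow₀ hΛ two_ne_zero
      _ ≤ Λ ^ (2 * 1) * max 1 b := le_mul_of_one_le_right (by positivity) (le_max_left _ _)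
  | succ j ih =>
    have hstep : Z • S (J - (j + 1)) ⊆ S (J - j) := by
      have := hS (J - (j + 1))
      rwa [show J - (j + 1) + 1 = J - j by lia] at this
    have hT : (#(S (J - j)) : ℝ) ≤ Λ := hSΛ _ (Nat.sub_le J j)
    have hmax : max (M⁻¹ * max (M ^ j)⁻¹ b) b ≤ max (M ^ (j + 1))⁻¹ b := by
      rw [mul_max_of_nonneg _ _ (by positivity), ← mul_inv, ← pow_succ']
      exact max_le (max_le_max_left _ (mul_le_of_le_one_left hb (inv_le_one_of_one_le₀ hM₁)))
        (le_max_right _ _)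
    rw [pow_succ' 2 j]
    calc _ ≤ _ := sum_sumReps_two_mul_sq_le_max hM hZ hZZ hMZ (hMS (J - j)) hstep (by positivity)
      _ ≤ Λ ^ (2 * 2 ^ j) *
            max (M⁻¹ * (Λ ^ (2 * 2 ^ j) * max (M ^ j)⁻¹ b)) (Λ ^ (2 * 2 ^ j) * b) := by
          gcongr
          exact ih (by lia)
      _ = Λ ^ (2 * 2 ^ j) * (Λ ^ (2 * 2 ^ j) * max (M⁻¹ * max (M ^ j)⁻¹ b) b) := by
          rw [mul_left_comm M⁻¹, ← mul_max_of_nonneg _ b (by positivity)]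
      _ ≤ Λ ^ (2 * 2 ^ j) * (Λ ^ (2 * 2 ^ j) * max (M ^ (j + 1))⁻¹ b) := by gcongr
      _ = _ := by ring

end EnergyDecay

section Discrepancy

open Matrix

lemma sub_smul_pow_succ {k R : Type*} [CommRing k] [Ring R] [Algebra k R] {a e : R} {r : k}
    (he : IsIdempotentElem e) (hae : a * e = r • e) (hea : e * a = r • e) (n : ℕ) :
    (a - r • e) ^ (n + 1) = a ^ (n + 1) - r ^ (n + 1) • e := by
  have hpow (m : ℕ) : a ^ m * e = r ^ m • e := by
    induction m with
    | zero => simp only [pow_zero, one_mul, one_smul]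
    | succ m ih => rw [pow_succ, mul_assoc, hae, mul_smul_comm, ih, smul_smul, ← pow_succ']
  induction n with
  | zero => simp only [zero_add, pow_one]
  | succ n ih =>
    rw [pow_succ, ih, sub_mul, mul_sub, mul_sub, ← pow_succ, mul_smul_comm, hpow, smul_mul_assoc,
      hea, smul_mul_assoc, mul_smul_comm, he.eq, smul_smul, smul_smul, ← pow_succ', ← pow_succ,
      sub_self, sub_zero]

variable {ι : Type*} [Fintype ι]

lemma dotProduct_sq_le (x y : ι → ℝ) : (x ⬝ᵥ y) ^ 2 ≤ (x ⬝ᵥ x) * (y ⬝ᵥ y) := by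
  simpa only [dotProduct, sq] using sum_mul_sq_le_sq_mul_sq univ x y

lemma dotProduct_self_nonneg (x : ι → ℝ) : 0 ≤ x ⬝ᵥ x :=
  sum_nonneg fun _ _ ↦ mul_self_nonneg _

lemma mulVec_dotProduct_self_le (M : Matrix ι ι ℝ) (x : ι → ℝ) :
    M *ᵥ x ⬝ᵥ M *ᵥ x ≤ (M * Mᵀ).trace * (x ⬝ᵥ x) := by
  rw [trace, sum_mul]
  refine sum_le_sum fun i _ ↦ ?_
  rw [← sq]
  exact dotProduct_sq_le (M i) x

/-- The matrix of the orthogonal projection onto the constant functions. -/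
noncomputable def averagingMatrix (ι : Type*) [Fintype ι] : Matrix ι ι ℝ :=
  (Fintype.card ι : ℝ)⁻¹ • vecMulVec 1 1

lemma mul_averagingMatrix {G : Matrix ι ι ℝ} {q : ℝ} (h : G *ᵥ 1 = q • 1) :
    G * averagingMatrix ι = q • averagingMatrix ι := by
  rw [averagingMatrix, mul_smul_comm, mul_vecMulVec, h, smul_vecMulVec, smul_comm]

lemma averagingMatrix_mul {G : Matrix ι ι ℝ} {q : ℝ} (h : 1 ᵥ* G = q • 1) :
    averagingMatrix ι * G = q • averagingMatrix ι := by
  rw [averagingMatrix, smul_mul_assoc, vecMulVec_mul, h, vecMulVec_smul, smul_comm]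

lemma transpose_averagingMatrix : (averagingMatrix ι)ᵀ = averagingMatrix ι := by
  rw [averagingMatrix, transpose_smul, transpose_vecMulVec]

lemma trace_averagingMatrix [Nonempty ι] : (averagingMatrix ι).trace = 1 := by
  rw [averagingMatrix, trace_smul, trace_vecMulVec, one_dotProduct_one, smul_eq_mul]
  exact inv_mul_cancel₀ (Nat.cast_ne_zero.2 Fintype.card_ne_zero)

lemma isIdempotentElem_averagingMatrix [Nonempty ι] :
    IsIdempotentElem (averagingMatrix ι) := by
  have h : averagingMatrix ι *ᵥ 1 = (1 : ℝ) • 1 := by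
    rw [averagingMatrix, smul_mulVec, vecMulVec_mulVec, one_dotProduct_one, op_smul_eq_smul,
      smul_smul, inv_mul_cancel₀ (Nat.cast_ne_zero.2 Fintype.card_ne_zero)]
  rw [IsIdempotentElem, mul_averagingMatrix h, one_smul]

variable [DecidableEq ι]

lemma dotProduct_mulVec_self_pow_le {M : Matrix ι ι ℝ} (hM : M.IsSymm) (x : ι → ℝ) (J : ℕ) :
    (x ⬝ᵥ M *ᵥ x) ^ 2 ^ (J + 1) ≤ (x ⬝ᵥ x) ^ 2 ^ (J + 1) * (M ^ 2 ^ (J + 1)).trace := by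
  have hx := dotProduct_self_nonneg x
  induction J generalizing M with
  | zero =>
    calc (x ⬝ᵥ M *ᵥ x) ^ 2 ≤ (x ⬝ᵥ x) * (M *ᵥ x ⬝ᵥ M *ᵥ x) := dotProduct_sq_le _ _
      _ ≤ (x ⬝ᵥ x) * ((M * Mᵀ).trace * (x ⬝ᵥ x)) := by
          gcongr
          exact mulVec_dotProduct_self_le M x
      _ = (x ⬝ᵥ x) ^ 2 * (M ^ 2).trace := by rw [hM.eq, ← sq]; ring
  | succ J ih =>
    have hsq : x ⬝ᵥ M ^ 2 *ᵥ x = M *ᵥ x ⬝ᵥ M *ᵥ x := by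
      rw [sq, ← mulVec_mulVec, dotProduct_mulVec, ← mulVec_transpose, hM.eq]
    rw [pow_succ' 2 (J + 1), pow_mul, pow_mul, pow_mul M]
    calc ((x ⬝ᵥ M *ᵥ x) ^ 2) ^ 2 ^ (J + 1)
        ≤ ((x ⬝ᵥ x) * (x ⬝ᵥ M ^ 2 *ᵥ x)) ^ 2 ^ (J + 1) := by
          gcongr
          rw [hsq]
          exact dotProduct_sq_le _ _
      _ ≤ (x ⬝ᵥ x) ^ 2 ^ (J + 1) * ((x ⬝ᵥ x) ^ 2 ^ (J + 1) * ((M ^ 2) ^ 2 ^ (J + 1)).trace) := by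
          rw [mul_pow]
          gcongr
          exact ih (hM.pow 2)
      _ = _ := by ring

lemma dotProduct_mulVec_pow_le (B : Matrix ι ι ℝ) (x y : ι → ℝ) (J : ℕ) :
    (x ⬝ᵥ B *ᵥ y) ^ (2 * 2 ^ (J + 1)) ≤
      ((x ⬝ᵥ x) * (y ⬝ᵥ y)) ^ 2 ^ (J + 1) * ((B * Bᵀ) ^ 2 ^ (J + 1)).trace := by
  have hcs : (x ⬝ᵥ B *ᵥ y) ^ 2 ≤ (x ⬝ᵥ (B * Bᵀ) *ᵥ x) * (y ⬝ᵥ y) := by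
    rw [← mulVec_mulVec, dotProduct_mulVec, dotProduct_mulVec x B, ← mulVec_transpose]
    exact dotProduct_sq_le _ _
  have hquad := dotProduct_mulVec_self_pow_le (isSymm_mul_transpose_self B) x J
  have hy := dotProduct_self_nonneg y
  calc (x ⬝ᵥ B *ᵥ y) ^ (2 * 2 ^ (J + 1))
      ≤ ((x ⬝ᵥ (B * Bᵀ) *ᵥ x) * (y ⬝ᵥ y)) ^ 2 ^ (J + 1) := by
        rw [pow_mul]
        gcongr
    _ ≤ (x ⬝ᵥ x) ^ 2 ^ (J + 1) * ((B * Bᵀ) ^ 2 ^ (J + 1)).trace * (y ⬝ᵥ y) ^ 2 ^ (J + 1) := by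
        rw [mul_pow]
        gcongr
    _ = _ := by rw [mul_pow]; ring

/-- Subtracting the Perron component removes the top eigenvalue `q ^ 2` of `G * Gᵀ`. -/
lemma trace_centered_pow [Nonempty ι] {G : Matrix ι ι ℝ} {q : ℝ} (hrow : G *ᵥ 1 = q • 1)
    (hcol : 1 ᵥ* G = q • 1) (n : ℕ) :
    (((G - q • averagingMatrix ι) * (G - q • averagingMatrix ι)ᵀ) ^ (n + 1)).trace =
      ((G * Gᵀ) ^ (n + 1)).trace - q ^ (2 * (n + 1)) := by
  have hrow' := mul_averagingMatrix hrow
  have hcol' := averagingMatrix_mul hcol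
  have hrowT : averagingMatrix ι * Gᵀ = q • averagingMatrix ι :=
    averagingMatrix_mul (by rw [vecMul_transpose, hrow])
  have hcolT : Gᵀ * averagingMatrix ι = q • averagingMatrix ι :=
    mul_averagingMatrix (by rw [mulVec_transpose, hcol])
  have hcentered : (G - q • averagingMatrix ι) * (G - q • averagingMatrix ι)ᵀ =
      G * Gᵀ - q ^ 2 • averagingMatrix ι := by
    rw [transpose_sub, transpose_smul, transpose_averagingMatrix, sub_mul, mul_sub, mul_sub,
      mul_smul_comm, smul_mul_assoc, smul_mul_assoc, mul_smul_comm, hrow', hrowT,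
      isIdempotentElem_averagingMatrix.eq, sub_self, sub_zero, smul_smul, sq]
  rw [hcentered, sub_smul_pow_succ isIdempotentElem_averagingMatrix, trace_sub, trace_smul,
    trace_averagingMatrix, smul_eq_mul, mul_one, ← pow_mul]
  · rw [mul_assoc, hcolT, mul_smul_comm, hrow', smul_smul, sq]
  · rw [← mul_assoc, hcol', smul_mul_assoc, hrowT, smul_smul, sq]

/-- An expander mixing lemma with the spectral gap measured by a trace. -/
theorem discrepancy_pow_le [Nonempty ι] {G : Matrix ι ι ℝ} {q : ℝ} (hrow : G *ᵥ 1 = q • 1)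
    (hcol : 1 ᵥ* G = q • 1) (U V : Finset ι) (J : ℕ) :
    (∑ u ∈ U, ∑ v ∈ V, G u v - q * #U * #V / Fintype.card ι) ^ (2 * 2 ^ (J + 1)) ≤
      (#U * #V : ℝ) ^ 2 ^ (J + 1) *
        (((G * Gᵀ) ^ 2 ^ (J + 1)).trace - q ^ (2 * 2 ^ (J + 1))) := by
  have hdot (W : Finset ι) (f : ι → ℝ) : (W : Set ι).indicator 1 ⬝ᵥ f = ∑ w ∈ W, f w := by
    simp [dotProduct, Set.indicator_apply]
  have hself (W : Finset ι) :
      (W : Set ι).indicator 1 ⬝ᵥ (W : Set ι).indicator (1 : ι → ℝ) = #W := by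
    rw [hdot, sum_congr rfl fun w hw ↦ Set.indicator_of_mem (mem_coe.2 hw) _]
    simp
  have hform : (U : Set ι).indicator 1 ⬝ᵥ
      (G - q • averagingMatrix ι) *ᵥ (V : Set ι).indicator 1 =
        ∑ u ∈ U, ∑ v ∈ V, G u v - q * #U * #V / Fintype.card ι := by
    simp only [hdot, mulVec, dotProduct_comm _ (Set.indicator _ _), averagingMatrix,
      Matrix.sub_apply, Matrix.smul_apply, vecMulVec_apply, Pi.one_apply, mul_one, smul_eq_mul,
      sum_sub_distrib, sum_const, nsmul_eq_mul]
    ring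
  have h := dotProduct_mulVec_pow_le (G - q • averagingMatrix ι)
    ((U : Set ι).indicator 1) ((V : Set ι).indicator 1) J
  obtain ⟨n, hn⟩ : ∃ n, 2 ^ (J + 1) = n + 1 := ⟨_, (Nat.sub_add_cancel Nat.one_le_two_pow).symm⟩
  rwa [hform, hself, hself, hn, trace_centered_pow hrow hcol, ← hn] at h

end Discrepancy

section DifferenceReps

variable {G : Type*} [AddCommGroup G] [Fintype G] [DecidableEq G] (A : Finset G)

/-- The number of ways to write an element of an abelian group as the difference of an ordered sum
of `m` elements of `A` and an ordered sum of `n` elements of `A`, as a real number. -/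
def diffReps (m n : ℕ) (x : G) : ℝ :=
  ∑ y, sumReps A m (x + y) * sumReps A n y

lemma diffReps_one_zero (x : G) : diffReps A 1 0 x = if x ∈ A then 1 else 0 := by
  simp only [diffReps, sumReps_one]
  simp [sumReps]

lemma diffReps_self_zero (m : ℕ) : diffReps A m m 0 = ∑ x, sumReps A m x ^ 2 := by
  simp only [diffReps, zero_add, sq]

lemma diffReps_succ_left (m n : ℕ) (x : G) :
    diffReps A (m + 1) n x = ∑ a ∈ A, diffReps A m n (x - a) := by
  simp only [diffReps, sumReps, sum_mul]
  rw [sum_comm]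
  simp only [sub_add_eq_add_sub]

lemma diffReps_succ_right (m n : ℕ) (x : G) :
    diffReps A m (n + 1) x = ∑ a ∈ A, diffReps A m n (x + a) := by
  simp only [diffReps, sumReps, mul_sum]
  rw [sum_comm]
  refine sum_congr rfl fun a _ ↦ ?_
  conv_rhs => rw [← sum_sub_right _ a]
  simp only [add_assoc, add_sub_cancel]

end DifferenceReps

section SumProductMatrix

open Matrix

variable {F : Type*} [Field F] [Fintype F] [DecidableEq F] {Z : Finset Fˣ} {S : Finset F}
  {N : Fˣ → F → ℝ} {ε : F}

/-- The matrix of the operator `f ↦ (v ↦ ∑ z ∈ Z, f (z v))`. -/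
def dilationMatrix (Z : Finset Fˣ) : Matrix F F ℝ :=
  ∑ z ∈ Z, (MulAction.toPerm z : Equiv.Perm F).permMatrix ℝ

/-- The matrix of the operator `f ↦ (v ↦ f (v + t))`. -/
def translationMatrix (t : F) : Matrix F F ℝ :=
  (Equiv.addRight t).permMatrix ℝ

/-- The matrix whose entry at `(v, u)` is the number of `(z, w) ∈ Z × Z` with `z v + t = w u`. -/
def sumProductMatrix (Z : Finset Fˣ) (t : F) : Matrix F F ℝ :=
  dilationMatrix Z * translationMatrix t * (dilationMatrix Z)ᵀ

lemma transpose_sumProductMatrix (Z : Finset Fˣ) (t : F) :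
    (sumProductMatrix Z t)ᵀ = sumProductMatrix Z (-t) := by
  have htrans : (translationMatrix t)ᵀ = translationMatrix (-t) := by
    rw [translationMatrix, transpose_permMatrix, translationMatrix]
    rfl
  rw [sumProductMatrix, transpose_mul, transpose_mul, transpose_transpose, htrans,
    ← Matrix.mul_assoc, sumProductMatrix]

lemma sumProductMatrix_apply (Z : Finset Fˣ) (t v u : F) :
    sumProductMatrix Z t v u = ∑ z ∈ Z, ∑ w ∈ Z, if z • v + t = w • u then 1 else 0 := by
  simp only [sumProductMatrix, dilationMatrix, translationMatrix, transpose_sum,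
    transpose_permMatrix, sum_mul, mul_sum, ← permMatrix_mul, Matrix.sum_apply]
  refine sum_comm.trans <| sum_congr rfl fun z _ ↦ sum_congr rfl fun w _ ↦ ?_
  have heq : w⁻¹ • (z • v + t) = u ↔ z • v + t = w • u := inv_smul_eq_iff
  simp [Equiv.toPEquiv_apply, PEquiv.toMatrix_apply, ← heq]

lemma sumProductMatrix_mulVec_one (Z : Finset Fˣ) (t : F) :
    sumProductMatrix Z t *ᵥ 1 = ((#Z : ℝ) ^ 2) • 1 := by
  simp only [sumProductMatrix, dilationMatrix, translationMatrix, transpose_sum,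
    transpose_permMatrix, sum_mul, mul_sum, ← permMatrix_mul, sum_mulVec, permMatrix_mulVec,
    Pi.one_comp, sum_const, smul_smul]
  rw [← sq, ← Nat.cast_smul_eq_nsmul ℝ, Nat.cast_pow]

lemma one_vecMul_sumProductMatrix (Z : Finset Fˣ) (t : F) :
    1 ᵥ* sumProductMatrix Z t = ((#Z : ℝ) ^ 2) • 1 := by
  rw [← mulVec_transpose, transpose_sumProductMatrix, sumProductMatrix_mulVec_one]

/-- The affine permutation `v ↦ a⁻¹ (v + b)`. -/
def affinePerm (a : Fˣ) (b : F) : Equiv.Perm F :=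
  MulAction.toPerm a⁻¹ * Equiv.addRight b

lemma ncard_fixedPoints_affinePerm_le (a : Fˣ) (b : F) :
    ((Function.fixedPoints (affinePerm a b)).ncard : ℝ) ≤
      1 + if a = 1 ∧ b = 0 then (Fintype.card F : ℝ) else 0 := by
  split_ifs with h
  · have hcard := Set.ncard_le_card (Function.fixedPoints (affinePerm a b))
    rw [Nat.card_eq_fintype_card] at hcard
    exact (Nat.cast_le.2 hcard).trans (le_add_of_nonneg_left zero_le_one)
  · have hfix {v : F} (hv : v ∈ Function.fixedPoints (affinePerm a b)) : v + b = a * v :=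
      inv_smul_eq_iff.1 (show a⁻¹ • (v + b) = v from hv)
    have huniq : (Function.fixedPoints (affinePerm a b)).Subsingleton := fun v hv w hw ↦ by
      by_contra hvw
      have hmul : ((a : F) - 1) * (v - w) = 0 := by linear_combination hfix hw - hfix hv
      have ha : (a : F) = 1 :=
        sub_eq_zero.1 ((mul_eq_zero.1 hmul).resolve_right (sub_ne_zero.2 hvw))
      exact h ⟨Units.ext ha, by linear_combination hfix hv + v * ha⟩
    rw [add_zero]
    exact_mod_cast Set.ncard_le_one_iff_subsingleton.2 huniq

/-- The combination of the affine permutation matrices `v ↦ y⁻¹ (v + α s)` with coefficients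
`N y s`. -/
def affineCombination (α : F) (N : Fˣ → F → ℝ) : Matrix F F ℝ :=
  ∑ y, ∑ s, N y s • (affinePerm y (α * s)).permMatrix ℝ

/-- The effect on coefficients of composing an affine combination with the dilations by `w / z`,
`z, w ∈ Z`, followed by the translation by `ε α`. -/
def walkStep (Z : Finset Fˣ) (ε : F) (N : Fˣ → F → ℝ) (y : Fˣ) (s : F) : ℝ :=
  ∑ w ∈ Z, ∑ z ∈ Z, N (y * w / z) (s - ε * y)

omit [Fintype F] [DecidableEq F] in
lemma addRight_mul_toPerm_mul_affinePerm (a z w : Fˣ) (b t : F) :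
    Equiv.addRight t * (MulAction.toPerm w * (MulAction.toPerm z)⁻¹) * affinePerm a b =
      affinePerm (a * z / w) (b + (a * z / w : Fˣ) * t) := by
  ext v
  change w • z⁻¹ • a⁻¹ • (v + b) + t = (a * z / w)⁻¹ • (v + (b + (a * z / w) • t))
  have hinv : (a * z / w)⁻¹ = w * (z⁻¹ * a⁻¹) := by
    rw [inv_div, div_eq_mul_inv, mul_inv, mul_comm a⁻¹]
  rw [← add_assoc, smul_add _ (v + b), inv_smul_smul, hinv, mul_smul, mul_smul]

lemma affineCombination_mul (Z : Finset Fˣ) (α ε : F) (N : Fˣ → F → ℝ) :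
    affineCombination α N * ((dilationMatrix Z)ᵀ * dilationMatrix Z * translationMatrix (ε * α)) =
      affineCombination α (walkStep Z ε N) := by
  have hreindex (z w : Fˣ) :
      ∑ y, ∑ s, N y s • (affinePerm (y * z / w) (α * s + (y * z / w : Fˣ) * (ε * α))).permMatrix ℝ =
        ∑ y, ∑ s, N (y * w / z) (s - ε * y) • (affinePerm y (α * s)).permMatrix ℝ := by
    refine Fintype.sum_equiv (Equiv.mulRight (z / w)) _ _ fun y ↦ ?_
    refine Fintype.sum_equiv (Equiv.addRight (ε * (y * (z / w) : Fˣ))) _ _ fun s ↦ ?_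
    have hy : y * (z / w) * w / z = y := by rw [mul_assoc, div_mul_cancel, mul_div_cancel_right]
    have hs : α * (s + ε * (y * (z / w) : Fˣ)) = α * s + (y * (z / w) : Fˣ) * (ε * α) := by ring
    simp only [Equiv.coe_mulRight, Equiv.coe_addRight, add_sub_cancel_right, hy, hs, mul_div_assoc]
  simp only [affineCombination, dilationMatrix, translationMatrix, transpose_sum,
    transpose_permMatrix, sum_mul, mul_sum, ← permMatrix_mul, smul_mul_assoc, walkStep, sum_smul,
    addRight_mul_toPerm_mul_affinePerm, hreindex]
  rw [sum_comm_cycle]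
  exact sum_congr rfl fun y _ ↦ sum_comm_cycle

omit [Fintype F] [DecidableEq F] in
lemma walkStep_nonneg (h : ∀ y s, 0 ≤ N y s) (y : Fˣ) (s : F) : 0 ≤ walkStep Z ε N y s :=
  sum_nonneg fun _ _ ↦ sum_nonneg fun _ _ ↦ h _ _

omit [Fintype F] in
lemma mem_mul_div_of_walkStep_ne_zero {T : Finset Fˣ} (h : ∀ y s, N y s ≠ 0 → y ∈ T) {y : Fˣ}
    {s : F} (hy : walkStep Z ε N y s ≠ 0) : y ∈ T * (Z / Z) := by
  obtain ⟨w, hw, hy⟩ := exists_ne_zero_of_sum_ne_zero hy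
  obtain ⟨z, hz, hy⟩ := exists_ne_zero_of_sum_ne_zero hy
  rw [← mul_div_cancel_right y w, ← div_mul_div_cancel (y * w) z w]
  exact mul_mem_mul (h _ _ hy) (div_mem_div hz hw)

lemma sum_sum_walkStep (Z : Finset Fˣ) (ε : F) (N : Fˣ → F → ℝ) :
    ∑ y, ∑ s, walkStep Z ε N y s = (#Z : ℝ) ^ 2 * ∑ y, ∑ s, N y s := by
  have hreindex (w z : Fˣ) : ∑ y, ∑ s, N (y * w / z) (s - ε * y) = ∑ y, ∑ s, N y s := by
    simp only [sum_sub_right (N _), mul_div_assoc]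
    exact Equiv.sum_comp (Equiv.mulRight (w / z)) fun y ↦ ∑ s, N y s
  calc ∑ y, ∑ s, walkStep Z ε N y s
      = ∑ w ∈ Z, ∑ z ∈ Z, ∑ y, ∑ s, N (y * w / z) (s - ε * y) := by
        simp only [walkStep]
        rw [sum_comm_cycle (s := Z)]
        exact (sum_congr rfl fun y _ ↦ sum_comm_cycle (s := Z)).symm
    _ = (#Z : ℝ) ^ 2 * ∑ y, ∑ s, N y s := by
        simp only [hreindex, sum_const, nsmul_eq_mul]
        ring

lemma sum_walkStep_le {φ : F → ℝ} (hN : ∀ y s, 0 ≤ N y s)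
    (hS : ∀ y s, walkStep Z ε N y s ≠ 0 → (y : F) ∈ S) (hφ : ∀ s, ∑ y, N y s ≤ φ s) (s : F) :
    ∑ y, walkStep Z ε N y s ≤ #Z * ∑ x ∈ S, φ (s - ε * x) := by
  have hφ₀ (s : F) : 0 ≤ φ s := (sum_nonneg fun y _ ↦ hN y s).trans (hφ s)
  have hstep (y : Fˣ) : walkStep Z ε N y s ≤ #Z * φ (s - ε * y) := by
    rw [← nsmul_eq_mul]
    refine sum_le_card_nsmul _ _ _ fun w _ ↦ le_trans ?_ (hφ _)
    rw [← sum_image (f := fun t ↦ N t (s - ε * y)) (g := fun z ↦ y * w / z)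
      (div_right_injective.injOn)]
    exact sum_le_sum_of_subset_of_nonneg (subset_univ _) fun t _ _ ↦ hN t _
  let T : Finset Fˣ := {y | (y : F) ∈ S}
  calc ∑ y, walkStep Z ε N y s
      = ∑ y ∈ T, walkStep Z ε N y s :=
        (sum_filter_of_ne fun y _ hy ↦ hS y s hy).symm
    _ ≤ ∑ y ∈ T, #Z * φ (s - ε * y) := sum_le_sum fun y _ ↦ hstep y
    _ = #Z * ∑ x ∈ T.image Units.val, φ (s - ε * x) := by
        rw [sum_image Units.val_injective.injOn, mul_sum]
    _ ≤ #Z * ∑ x ∈ S, φ (s - ε * x) := by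
        gcongr
        · exact fun x _ _ ↦ hφ₀ _
        · exact image_subset_iff.2 fun y hy ↦ (mem_filter.1 hy).2

/-- The coefficients of the product of `dilationMatrix Z * translationMatrix α` and `k` factors
`(dilationMatrix Z)ᵀ * dilationMatrix Z * translationMatrix (± α)` with alternating signs, as an
affine combination. -/
def walkWeight (Z : Finset Fˣ) : ℕ → Fˣ → F → ℝ
  | 0 => fun y s ↦ if y ∈ Z⁻¹ ∧ s = y then 1 else 0
  | k + 1 => walkStep Z ((-1) ^ (k + 1)) (walkWeight Z k)

omit [Fintype F] in
lemma walkWeight_two_mul_add_one (Z : Finset Fˣ) (n : ℕ) :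
    walkWeight (F := F) Z (2 * n + 1) = walkStep Z (-1) (walkWeight Z (2 * n)) := by
  rw [walkWeight, (odd_two_mul_add_one n).neg_one_pow]

omit [Fintype F] in
lemma walkWeight_two_mul_add_two (Z : Finset Fˣ) (n : ℕ) :
    walkWeight (F := F) Z (2 * n + 2) = walkStep Z 1 (walkWeight Z (2 * n + 1)) := by
  rw [walkWeight, (odd_two_mul_add_one n).add_one.neg_one_pow]

omit [Fintype F] in
lemma walkWeight_nonneg (Z : Finset Fˣ) (k : ℕ) (y : Fˣ) (s : F) : 0 ≤ walkWeight Z k y s := by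
  induction k generalizing y s with
  | zero => exact ite_nonneg zero_le_one le_rfl
  | succ k ih => exact walkStep_nonneg ih y s

omit [Fintype F] in
lemma mem_of_walkWeight_ne_zero (k : ℕ) {y : Fˣ} {s : F} (h : walkWeight Z k y s ≠ 0) :
    y ∈ Z⁻¹ * (Z / Z) ^ k := by
  induction k generalizing y s with
  | zero => simpa using (ite_ne_right_iff.1 h).1.1
  | succ k ih =>
    rw [pow_succ, ← mul_assoc]
    exact mem_mul_div_of_walkStep_ne_zero (fun y s ↦ ih) h

lemma sum_sum_walkWeight (Z : Finset Fˣ) (k : ℕ) :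
    ∑ y, ∑ s, walkWeight Z k y s = (#Z : ℝ) ^ (2 * k + 1) := by
  induction k with
  | zero =>
    simp only [walkWeight, ite_and, sum_ite_irrel, sum_const_zero, sum_ite_eq', mem_univ, if_true,
      sum_ite_mem, univ_inter, sum_const, card_inv, nsmul_eq_mul, mul_one, mul_zero, zero_add,
      pow_one]
  | succ k ih =>
    rw [walkWeight, sum_sum_walkStep, ih]
    ring

lemma sum_walkWeight_zero_le (hS : ∀ y ∈ Z⁻¹, (y : F) ∈ S) (s : F) :
    ∑ y, walkWeight Z 0 y s ≤ diffReps S 1 0 s := by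
  rw [diffReps_one_zero]
  split_ifs with hs
  · simp only [walkWeight, sum_boole]
    refine mod_cast card_le_one.2 fun y hy y' hy' ↦ Units.ext ?_
    exact (mem_filter.1 hy).2.2.symm.trans (mem_filter.1 hy').2.2
  · refine (sum_eq_zero fun y _ ↦ if_neg ?_).le
    rintro ⟨hy, rfl⟩
    exact hs (hS y hy)

lemma sum_walkWeight_le {n : ℕ} (hS : ∀ k ≤ 2 * n + 1, ∀ y ∈ Z⁻¹ * (Z / Z) ^ k, (y : F) ∈ S)
    (s : F) :
    ∑ y, walkWeight Z (2 * n + 1) y s ≤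
      (#Z : ℝ) ^ (2 * n + 1) * diffReps S (n + 1) (n + 1) s := by
  have hstep {k : ℕ} (hk : k + 1 ≤ 2 * n + 1) {φ : F → ℝ}
      (hφ : ∀ s, ∑ y, walkWeight Z k y s ≤ φ s) (s : F) :
      ∑ y, walkWeight Z (k + 1) y s ≤ #Z * ∑ x ∈ S, φ (s - (-1) ^ (k + 1) * x) :=
    sum_walkStep_le (walkWeight_nonneg Z k)
      (fun y s hy ↦ hS _ hk y (mem_of_walkWeight_ne_zero (k + 1) hy)) hφ s
  induction n generalizing s with
  | zero =>
    refine (hstep le_rfl (sum_walkWeight_zero_le (by simpa using hS 0 zero_le_one)) s).trans_eq ?_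
    simp [diffReps_succ_right]
  | succ n ih =>
    have heven (s : F) : ∑ y, walkWeight Z (2 * n + 2) y s ≤
        (#Z : ℝ) ^ (2 * n + 2) * diffReps S (n + 2) (n + 1) s := by
      refine (hstep (by lia) (fun s ↦ ih (fun k hk ↦ hS k (by lia)) s
        fun hk ↦ hstep (by lia)) s).trans_eq ?_
      rw [diffReps_succ_left, ← mul_sum, ← mul_assoc, ← pow_succ',
        (odd_two_mul_add_one n).add_one.neg_one_pow]
      simp only [one_mul]
    refine (hstep le_rfl heven s).trans_eq ?_
    rw [diffReps_succ_right, ← mul_sum, ← mul_assoc, ← pow_succ',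
      (odd_two_mul_add_one _).neg_one_pow]
    simp only [neg_one_mul, sub_neg_eq_add]
    rfl

lemma dilationMatrix_mul_translationMatrix (Z : Finset Fˣ) (α : F) :
    dilationMatrix Z * translationMatrix α = affineCombination α (walkWeight Z 0) := by
  have hperm (z : Fˣ) :
      Equiv.addRight α * MulAction.toPerm z = affinePerm z⁻¹ (α * (z⁻¹ : Fˣ)) := by
    ext v
    simp [affinePerm, Units.smul_def, mul_left_comm]
  simp only [dilationMatrix, translationMatrix, sum_mul, ← permMatrix_mul, affineCombination,
    walkWeight, hperm, ite_and, ite_smul, one_smul, zero_smul, sum_ite_irrel, sum_ite_eq', mem_univ,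
    if_true, sum_const_zero, sum_ite_mem, univ_inter]
  rw [← image_inv_eq_inv, sum_image inv_injective.injOn]

lemma sumProductMatrix_mul_transpose_pow (Z : Finset Fˣ) (α : F) (n : ℕ) :
    (sumProductMatrix Z α * (sumProductMatrix Z α)ᵀ) ^ (n + 1) =
      affineCombination α (walkWeight Z (2 * n + 1)) * (dilationMatrix Z)ᵀ := by
  rw [transpose_sumProductMatrix]
  induction n with
  | zero =>
    rw [walkWeight_two_mul_add_one, mul_zero, ← affineCombination_mul,
      ← dilationMatrix_mul_translationMatrix]
    simp only [sumProductMatrix, zero_add, pow_one, neg_one_mul, Matrix.mul_assoc]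
  | succ n ih =>
    rw [pow_succ, ih, walkWeight_two_mul_add_one Z (n + 1), mul_add_one,
      walkWeight_two_mul_add_two, ← affineCombination_mul, ← affineCombination_mul]
    simp only [sumProductMatrix, neg_one_mul, one_mul, Matrix.mul_assoc]

lemma trace_affineCombination_mul_le {α : F} (hα : α ≠ 0) (hN : ∀ y s, 0 ≤ N y s) :
    (affineCombination α N * (dilationMatrix Z)ᵀ).trace ≤
      #Z * ∑ y, ∑ s, N y s + Fintype.card F * ∑ y, N y 0 := by
  have hperm (z y : Fˣ) (b : F) :
      (MulAction.toPerm z)⁻¹ * affinePerm y b = affinePerm (y * z) b := by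
    ext v
    simp [affinePerm, mul_smul]
  have hfix (z y : Fˣ) (s : F) :
      ((Function.fixedPoints (affinePerm (y * z) (α * s))).ncard : ℝ) ≤
        1 + if y = z⁻¹ ∧ s = 0 then (Fintype.card F : ℝ) else 0 := by
    simpa only [mul_eq_one_iff_eq_inv, mul_eq_zero, hα, false_or] using
      ncard_fixedPoints_affinePerm_le (y * z) (α * s)
  have hsingle (z : Fˣ) :
      ∑ y, ∑ s, (if y = z⁻¹ ∧ s = 0 then N y s * (Fintype.card F : ℝ) else 0) =
        N z⁻¹ 0 * Fintype.card F := by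
    simp only [ite_and, sum_ite_irrel, sum_ite_eq', mem_univ, if_true, sum_const_zero]
  calc (affineCombination α N * (dilationMatrix Z)ᵀ).trace
      = ∑ z ∈ Z, ∑ y, ∑ s,
          N y s * (Function.fixedPoints (affinePerm (y * z) (α * s))).ncard := by
        simp only [affineCombination, dilationMatrix, transpose_sum, transpose_permMatrix, mul_sum,
          sum_mul, smul_mul_assoc, ← permMatrix_mul, hperm, trace_sum, trace_smul,
          trace_permutation, smul_eq_mul]
    _ ≤ ∑ z ∈ Z, ∑ y, ∑ s, N y s * (1 + if y = z⁻¹ ∧ s = 0 then (Fintype.card F : ℝ) else 0) := by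
        gcongr with z _ y _ s
        · exact hN y s
        · exact hfix z y s
    _ = #Z * ∑ y, ∑ s, N y s + Fintype.card F * ∑ y ∈ Z⁻¹, N y 0 := by
        simp only [mul_add, mul_one, mul_ite, mul_zero, sum_add_distrib, hsingle, sum_const,
          nsmul_eq_mul]
        rw [← image_inv_eq_inv, sum_image inv_injective.injOn, ← sum_mul, mul_comm (∑ z ∈ Z, _)]
    _ ≤ _ := by
        gcongr
        · exact fun y _ _ ↦ hN y 0
        · exact subset_univ _

lemma trace_sumProductMatrix_pow_le {α : F} (hα : α ≠ 0) {n : ℕ}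
    (hS : ∀ k ≤ 2 * n + 1, ∀ y ∈ Z⁻¹ * (Z / Z) ^ k, (y : F) ∈ S) :
    ((sumProductMatrix Z α * (sumProductMatrix Z α)ᵀ) ^ (n + 1)).trace ≤
      (#Z : ℝ) ^ (4 * (n + 1)) +
        Fintype.card F * ((#Z : ℝ) ^ (2 * n + 1) * ∑ x, sumReps S (n + 1) x ^ 2) := by
  have hmarginal := sum_walkWeight_le hS 0
  rw [diffReps_self_zero] at hmarginal
  calc ((sumProductMatrix Z α * (sumProductMatrix Z α)ᵀ) ^ (n + 1)).trace
      ≤ #Z * ∑ y, ∑ s, walkWeight Z (2 * n + 1) y s +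
          Fintype.card F * ∑ y, walkWeight Z (2 * n + 1) y 0 := by
        rw [sumProductMatrix_mul_transpose_pow]
        exact trace_affineCombination_mul_le hα (walkWeight_nonneg Z _)
    _ ≤ #Z * (#Z : ℝ) ^ (2 * (2 * n + 1) + 1) +
          Fintype.card F * ((#Z : ℝ) ^ (2 * n + 1) * ∑ x, sumReps S (n + 1) x ^ 2) := by
        rw [sum_sum_walkWeight]
        gcongr
    _ = _ := by ring

theorem sumProductMatrix_discrepancy_pow_le {α : F} (hα : α ≠ 0) (J : ℕ)
    (hS : ∀ k < 2 * 2 ^ (J + 1), ∀ y ∈ Z⁻¹ * (Z / Z) ^ k, (y : F) ∈ S) (V U : Finset F) :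
    (∑ v ∈ V, ∑ u ∈ U, sumProductMatrix Z α v u - (#Z : ℝ) ^ 2 * #V * #U / Fintype.card F) ^
        (2 * 2 ^ (J + 1)) ≤
      (#V * #U : ℝ) ^ 2 ^ (J + 1) *
        (Fintype.card F *
          ((#Z : ℝ) ^ (2 * 2 ^ (J + 1) - 1) * ∑ x, sumReps S (2 ^ (J + 1)) x ^ 2)) := by
  refine (discrepancy_pow_le (sumProductMatrix_mulVec_one Z α) (one_vecMul_sumProductMatrix Z α)
    V U J).trans ?_
  obtain ⟨n, hn⟩ : ∃ n, 2 ^ (J + 1) = n + 1 := ⟨_, (Nat.sub_add_cancel Nat.one_le_two_pow).symm⟩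
  rw [hn] at hS ⊢
  have htrace := trace_sumProductMatrix_pow_le hα (n := n) fun k hk ↦ hS k (by lia)
  gcongr
  rw [show 2 * (n + 1) - 1 = 2 * n + 1 by lia, ← pow_mul, ← mul_assoc 2, sub_le_iff_le_add']
  exact htrace

end SumProductMatrix

section PowerQuotients

variable {G : Type*} [CommGroup G] [DecidableEq G] {Z : Finset G}

lemma card_pow_div_pow_le (hZ : Z.Nonempty) {K : ℝ} (hZZ : #(Z * Z) ≤ K * #Z) (m n : ℕ) :
    #(Z ^ m / Z ^ n) ≤ K ^ (m + n) * #Z := by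
  have hcard : (0 : ℝ) < #Z := mod_cast hZ.card_pos
  have hruzsa := (NNRat.cast_le (K := ℝ)).2 (pluennecke_ruzsa_inequality_pow_div_pow_mul hZ Z m n)
  push_cast at hruzsa
  refine hruzsa.trans ?_
  gcongr
  rwa [div_le_iff₀ hcard]

lemma inv_mul_div_pow_subset (hZ : Z.Nonempty) {k m : ℕ} (hk : k ≤ m) :
    Z⁻¹ * (Z / Z) ^ k ⊆ Z ^ m / Z ^ (m + 1) := by
  have hone : (1 : G) ∈ Z / Z := hZ.one_mem_div
  calc Z⁻¹ * (Z / Z) ^ k ⊆ Z⁻¹ * (Z / Z) ^ m := mul_subset_mul_left (pow_subset_pow_right hone hk)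
    _ = Z ^ m / Z ^ (m + 1) := by
        rw [div_pow, pow_succ, ← div_div, div_eq_mul_inv _ Z, mul_comm]

lemma mul_pow_div_pow_subset (Z : Finset G) (i m : ℕ) :
    Z * (Z ^ i / Z ^ m) ⊆ Z ^ (i + 1) / Z ^ m := by
  rw [← mul_div_assoc, pow_succ']

lemma card_le_card_pow_div_pow_succ (hZ : Z.Nonempty) (i m : ℕ) :
    #Z ≤ #(Z ^ i / Z ^ (m + 1)) :=
  calc #Z ≤ #(Z ^ m * Z) := card_le_card_mul_left hZ.pow
    _ = #(Z ^ (m + 1))⁻¹ := by rw [card_inv, pow_succ]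
    _ ≤ #(Z ^ i / Z ^ (m + 1)) := by
        rw [div_eq_mul_inv]
        exact card_le_card_mul_left hZ.pow

end PowerQuotients

section PrimeField

variable {p : ℕ} [Fact p.Prime] {Z : Finset (ZMod p)ˣ} {K M : ℝ}

lemma sum_sumReps_pow_div_pow_sq_le (hK : 2 ≤ K) (hZ : Z.Nonempty) (hZZ : #(Z * Z) ≤ K * #Z)
    (hKM : K ^ 2 ≤ M) (hMZ : M ^ flatteningExponent < #Z) {J : ℕ} (hpM : p ≤ M ^ J) {n : ℕ}
    (hn : n = 2 ^ J) :
    ∑ x, sumReps ((Z ^ (2 * n) / Z ^ (2 * n + 1)).image ((↑) : (ZMod p)ˣ → ZMod p)) n x ^ 2 ≤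
      (K ^ (6 * n) * #Z) ^ (2 * n) * (M ^ flatteningExponent / p) := by
  have hp : (0 : ℝ) < p := mod_cast (Fact.out : p.Prime).pos
  have hM : 2 ≤ M := by nlinarith
  let S (i : ℕ) : Finset (ZMod p) := (Z ^ (2 * n + i) / Z ^ (2 * n + 1)).image (↑)
  have hcard (i : ℕ) : #(S i) = #(Z ^ (2 * n + i) / Z ^ (2 * n + 1)) :=
    card_image_of_injective _ Units.val_injective
  have hstep (i : ℕ) : Z • S i ⊆ S (i + 1) := by
    refine smul_subset_iff.2 fun z hz s hs ↦ ?_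
    obtain ⟨y, hy, rfl⟩ := mem_image.1 hs
    exact mem_image_of_mem _ (mul_pow_div_pow_subset Z _ _ (mul_mem_mul hz hy))
  have hupper (i : ℕ) (hi : i ≤ J) : (#(S i) : ℝ) ≤ K ^ (6 * n) * #Z := by
    have hJn : J < n := hn ▸ Nat.lt_two_pow_self
    rw [hcard]
    refine (card_pow_div_pow_le hZ hZZ _ _).trans ?_
    gcongr <;> [linarith; lia]
  have hdiv : (#(Z / Z) : ℝ) ≤ M * #Z := by
    refine (by simpa using card_pow_div_pow_le hZ hZZ 1 1 : (#(Z / Z) : ℝ) ≤ K ^ 2 * #Z).trans ?_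
    gcongr
  have hmax : max (M ^ J)⁻¹ (M ^ flatteningExponent / p) = M ^ flatteningExponent / p := by
    refine max_eq_right ?_
    rw [inv_eq_one_div]
    gcongr
    exact one_le_pow₀ (by linarith)
  have hflat := sum_sumReps_two_pow_sq_le hM hZ hdiv hMZ hstep
    (fun i ↦ hcard i ▸ card_le_card_pow_div_pow_succ hZ _ _) hupper le_rfl
  rwa [hmax, Nat.sub_self, ← hn] at hflat

theorem sumProductMatrix_discrepancy_pow_le_of_card_mul_le (hK : 2 ≤ K) (hZ : Z.Nonempty)
    (hZZ : #(Z * Z) ≤ K * #Z) (hKM : K ^ 2 ≤ M) (hMZ : M ^ flatteningExponent < #Z) {J n : ℕ}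
    (hpM : p ≤ M ^ (J + 1)) (hn : n = 2 ^ (J + 1)) {α : ZMod p} (hα : α ≠ 0)
    (V U : Finset (ZMod p)) :
    (∑ v ∈ V, ∑ u ∈ U, sumProductMatrix Z α v u - (#Z : ℝ) ^ 2 * #V * #U / p) ^ (2 * n) ≤
      (#V * #U : ℝ) ^ n * (#Z : ℝ) ^ (4 * n) *
        (K ^ (12 * n ^ 2) * M ^ flatteningExponent / #Z) := by
  have hp : (0 : ℝ) < p := mod_cast (Fact.out : p.Prime).pos
  have hdisc := sumProductMatrix_discrepancy_pow_le (Z := Z) hα J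
    (S := (Z ^ (2 * n) / Z ^ (2 * n + 1)).image (↑))
    (fun k hk y hy ↦ mem_image_of_mem _ (inv_mul_div_pow_subset hZ (by lia) hy)) V U
  rw [ZMod.card, ← hn] at hdisc
  obtain ⟨m, rfl⟩ : ∃ m, n = m + 1 := ⟨n - 1, (Nat.sub_add_cancel (hn ▸ Nat.one_le_two_pow)).symm⟩
  calc (∑ v ∈ V, ∑ u ∈ U, sumProductMatrix Z α v u - (#Z : ℝ) ^ 2 * #V * #U / p) ^ (2 * (m + 1))
      ≤ (#V * #U : ℝ) ^ (m + 1) * (p * ((#Z : ℝ) ^ (2 * (m + 1) - 1) *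
          ((K ^ (6 * (m + 1)) * #Z) ^ (2 * (m + 1)) * (M ^ flatteningExponent / p)))) := by
        refine hdisc.trans ?_
        gcongr
        exact sum_sumReps_pow_div_pow_sq_le hK hZ hZZ hKM hMZ hpM hn
    _ = _ := by
        rw [show 2 * (m + 1) - 1 = 2 * m + 1 by lia, mul_pow (K ^ _), ← pow_mul]
        field_simp
        ring

end PrimeField

section Parameters

variable {K P δ : ℝ}

/-- The number of doublings of the number of summands after which a gain of `M⁻¹` per doubling,
where `M = p ^ (δ / (4 * flatteningExponent))`, amounts to at least `p⁻¹`. -/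
noncomputable def doublingCount (δ : ℝ) : ℕ :=
  ⌊4 * flatteningExponent / δ⌋₊ + 1

/-- The exponent of `p⁻¹` saved over the trivial bound by a set of at least `p ^ δ` dilations. -/
noncomputable def savingExponent (δ : ℝ) : ℝ :=
  δ / (4 * 2 ^ doublingCount δ)

lemma exp_div_mul_le_of_div_log_le {a x y : ℝ} (hx : 0 < x) (hxy : x < y) (hδ : 0 < δ)
    (h : a / Real.log (y / x) ≤ δ) : Real.exp (a / δ) * x ≤ y := by
  have hratio : 1 < y / x := (one_lt_div hx).2 hxy
  rw [← le_div_iff₀ hx, ← Real.le_log_iff_exp_le (by linarith), div_le_iff₀ hδ]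
  linarith [(div_le_iff₀ (Real.log_pos hratio)).1 h]

lemma pow_le_rpow_of_mul_log_le (hK : 0 < K) (hP : 0 < P) {m : ℕ}
    (h : m * Real.log K ≤ δ * Real.log P) : K ^ m ≤ P ^ δ := by
  rwa [← Real.log_le_log_iff (by positivity) (by positivity), Real.log_pow, Real.log_rpow hP]

lemma four_pow_le_exp (n : ℕ) : (4 : ℝ) ^ n ≤ Real.exp (2 * n) := by
  have htwo : (2 : ℝ) ≤ Real.exp 1 := by linarith [Real.add_one_le_exp (1 : ℝ)]
  calc (4 : ℝ) ^ n = 2 ^ (2 * n) := by rw [pow_mul]; norm_num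
    _ ≤ Real.exp 1 ^ (2 * n) := by gcongr
    _ = Real.exp (2 * n) := by rw [← Real.exp_nat_mul]; simp

lemma four_pow_floor_div_le_exp {a : ℝ} (ha : 0 ≤ a) (hδ : 0 < δ) (hδ₁ : δ ≤ 1) :
    4 ^ (⌊a / δ⌋₊ + 4) / δ ≤ Real.exp ((2 * a + 9) / δ) := by
  have hinv : 1 ≤ δ⁻¹ := (one_le_inv₀ hδ).2 hδ₁
  have hfloor : (⌊a / δ⌋₊ : ℝ) ≤ a / δ := Nat.floor_le (by positivity)
  calc 4 ^ (⌊a / δ⌋₊ + 4) / δ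
      ≤ Real.exp (2 * (⌊a / δ⌋₊ + 4 : ℕ)) * Real.exp δ⁻¹ := by
        rw [div_eq_mul_inv]
        gcongr
        · exact four_pow_le_exp _
        · linarith [Real.add_one_le_exp δ⁻¹]
    _ = Real.exp (2 * (⌊a / δ⌋₊ + 4) + δ⁻¹) := by rw [← Real.exp_add]; push_cast; rfl
    _ ≤ Real.exp (2 * (a / δ + 4 * δ⁻¹) + δ⁻¹) := by
        gcongr
        linarith
    _ = Real.exp ((2 * a + 9) / δ) := by ring_nf

lemma flatteningExponent_pos : (0 : ℝ) < flatteningExponent := by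
  norm_num [flatteningExponent]

lemma sq_le_rpow_of_div_log_le (hK : 1 < K) (hP : 0 < P) (hKP : Real.log K < Real.log P)
    (hδ : 0 < δ)
    (h : (8 * flatteningExponent + 9) / Real.log (Real.log P / Real.log K) ≤ δ) :
    K ^ 2 ≤ P ^ (δ / (4 * flatteningExponent)) := by
  have hC := flatteningExponent_pos
  have hlog : 0 < Real.log K := Real.log_pos hK
  refine pow_le_rpow_of_mul_log_le (by linarith) hP ?_
  calc (2 : ℕ) * Real.log K
      = δ / (4 * flatteningExponent) * (8 * flatteningExponent / δ * Real.log K) := by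
        push_cast
        field_simp
        norm_num
    _ ≤ δ / (4 * flatteningExponent) *
          (Real.exp ((8 * flatteningExponent + 9) / δ) * Real.log K) := by
        gcongr
        refine le_trans ?_ ((le_add_of_nonneg_right zero_le_one).trans (Real.add_one_le_exp _))
        gcongr
        linarith
    _ ≤ δ / (4 * flatteningExponent) * Real.log P := by
        gcongr
        exact exp_div_mul_le_of_div_log_le hlog hKP hδ h

lemma pow_sq_two_pow_doublingCount_le (hK : 1 < K) (hP : 0 < P) (hKP : Real.log K < Real.log P)
    (hδ : 0 < δ) (hδ₁ : δ ≤ 1)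
    (h : (8 * flatteningExponent + 9) / Real.log (Real.log P / Real.log K) ≤ δ) :
    K ^ (12 * (2 ^ doublingCount δ) ^ 2) ≤ P ^ (δ / 4) := by
  have hC := flatteningExponent_pos
  have hlog : 0 < Real.log K := Real.log_pos hK
  refine pow_le_rpow_of_mul_log_le (by linarith) hP ?_
  set m := ⌊4 * (flatteningExponent : ℝ) / δ⌋₊ with hm
  calc (12 * (2 ^ doublingCount δ) ^ 2 : ℕ) * Real.log K
      = δ / 4 * (12 * 4 ^ (m + 2) / δ * Real.log K) := by
        rw [doublingCount, ← hm]
        push_cast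
        rw [← pow_mul, mul_comm _ 2, pow_mul]
        field_simp
        ring
    _ ≤ δ / 4 * (4 ^ (m + 4) / δ * Real.log K) := by
        gcongr
        rw [pow_add _ m 4, pow_add _ m 2]
        linarith [pow_pos (four_pos (α := ℝ)) m]
    _ ≤ δ / 4 * (Real.exp ((8 * flatteningExponent + 9) / δ) * Real.log K) := by
        have hexp := four_pow_floor_div_le_exp (a := 4 * flatteningExponent) (by positivity) hδ hδ₁
        rw [← hm, ← mul_assoc, show (2 * 4 : ℝ) = 8 by norm_num] at hexp
        gcongr
    _ ≤ δ / 4 * Real.log P := by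
        gcongr
        exact exp_div_mul_le_of_div_log_le hlog hKP hδ h

lemma le_rpow_pow_doublingCount (hP : 1 ≤ P) (hδ : 0 < δ) :
    P ≤ (P ^ (δ / (4 * flatteningExponent))) ^ doublingCount δ := by
  have hC := flatteningExponent_pos
  rw [← Real.rpow_mul_natCast (by linarith)]
  refine Real.self_le_rpow_of_one_le hP ?_
  calc (1 : ℝ) = δ / (4 * flatteningExponent) * (4 * flatteningExponent / δ) := by field_simp
    _ ≤ δ / (4 * flatteningExponent) * doublingCount δ := by
        gcongr
        rw [doublingCount, Nat.cast_succ]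
        exact (Nat.lt_floor_add_one _).le

lemma pow_mul_rpow_div_le (hK : 1 < K) (hP : 0 < P) (hKP : Real.log K < Real.log P)
    (hδ : 0 < δ) (hδ₁ : δ ≤ 1)
    (h : (8 * flatteningExponent + 9) / Real.log (Real.log P / Real.log K) ≤ δ) {N : ℝ}
    (hN : P ^ δ ≤ N) :
    K ^ (12 * (2 ^ doublingCount δ) ^ 2) * (P ^ (δ / (4 * flatteningExponent))) ^ flatteningExponent
        / N ≤ (P ^ (-savingExponent δ)) ^ (2 * 2 ^ doublingCount δ) := by
  have hC := flatteningExponent_pos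
  have hflat : (P ^ (δ / (4 * flatteningExponent))) ^ flatteningExponent = P ^ (δ / 4) := by
    rw [← Real.rpow_mul_natCast hP.le]
    congr 1
    field_simp
  have hsaving : (P ^ (-savingExponent δ)) ^ (2 * 2 ^ doublingCount δ) = P ^ (-(δ / 2)) := by
    rw [← Real.rpow_mul_natCast hP.le, savingExponent]
    push_cast
    congr 1
    field_simp
    norm_num
  rw [hflat, hsaving, div_le_iff₀ ((Real.rpow_pos_of_pos hP δ).trans_le hN)]
  calc K ^ (12 * (2 ^ doublingCount δ) ^ 2) * P ^ (δ / 4) ≤ P ^ (δ / 4) * P ^ (δ / 4) := by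
        gcongr
        exact pow_sq_two_pow_doublingCount_le hK hP hKP hδ hδ₁ h
    _ = P ^ (-(δ / 2)) * P ^ δ := by
        rw [← Real.rpow_add hP, ← Real.rpow_add hP]
        ring_nf
    _ ≤ P ^ (-(δ / 2)) * N := by gcongr

lemma exists_inv_sixteen_pow_le_savingExponent (hδ : 0 < δ) (hδ₁ : δ ≤ 1) :
    ∃ k : ℕ, 1 ≤ k ∧ k ≤ (4 * flatteningExponent + 5) / δ ∧ 1 / 16 ^ k ≤ savingExponent δ := by
  have hinv : 1 ≤ 1 / δ := (one_le_div hδ).2 hδ₁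
  have hfloor : (⌊4 * flatteningExponent / δ⌋₊ : ℝ) ≤ 4 * flatteningExponent / δ :=
    Nat.floor_le (by positivity)
  have hceil : (⌈1 / δ⌉₊ : ℝ) < 1 / δ + 1 := Nat.ceil_lt_add_one (by positivity)
  have hpow : 1 / δ ≤ 2 ^ ⌈1 / δ⌉₊ :=
    (Nat.le_ceil _).trans (mod_cast Nat.lt_two_pow_self.le)
  refine ⟨doublingCount δ + 2 + ⌈1 / δ⌉₊, by lia, ?_, ?_⟩
  · rw [doublingCount, show (4 * flatteningExponent + 5) / δ =
      4 * flatteningExponent / δ + 5 * (1 / δ) by ring]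
    push_cast
    linarith
  · calc (1 : ℝ) / 16 ^ (doublingCount δ + 2 + ⌈1 / δ⌉₊)
        ≤ 1 / 2 ^ (doublingCount δ + 2 + ⌈1 / δ⌉₊) := by gcongr; norm_num
      _ = 1 / (4 * 2 ^ doublingCount δ * 2 ^ ⌈1 / δ⌉₊) := by ring
      _ ≤ 1 / (4 * 2 ^ doublingCount δ * (1 / δ)) := by gcongr
      _ = savingExponent δ := by
          rw [savingExponent]
          field_simp

lemma savingExponent_le (hδ : 0 < δ) : savingExponent δ ≤ δ := by
  refine div_le_self hδ.le ?_
  linarith [one_le_pow₀ (M₀ := ℝ) one_le_two (n := doublingCount δ)]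

lemma one_le_mul_rpow_neg_savingExponent (hP : 1 ≤ P) (hδ : 0 < δ) {N : ℝ} (hN : P ^ δ ≤ N) :
    1 ≤ N * P ^ (-savingExponent δ) :=
  calc (1 : ℝ) ≤ P ^ (δ + -savingExponent δ) :=
        Real.one_le_rpow hP (by linarith [savingExponent_le hδ])
    _ = P ^ δ * P ^ (-savingExponent δ) := Real.rpow_add (by linarith) _ _
    _ ≤ N * P ^ (-savingExponent δ) := by gcongr

end Parameters

theorem sum_sumProductMatrix_le {p : ℕ} [Fact p.Prime] {Z : Finset (ZMod p)ˣ} {K δ : ℝ}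
    (hK : 2 ≤ K) (hZZ : #(Z * Z) ≤ K * #Z) (hKp : Real.log K < Real.log p)
    (hδ : 0 < δ) (hδ₁ : δ ≤ 1)
    (h : (8 * flatteningExponent + 9) / Real.log (Real.log p / Real.log K) ≤ δ)
    (hpZ : (p : ℝ) ^ δ ≤ #Z) {α : ZMod p} (hα : α ≠ 0) (V U : Finset (ZMod p)) :
    ∑ v ∈ V, ∑ u ∈ U, sumProductMatrix Z α v u ≤
      (#Z : ℝ) ^ 2 * (#V * #U / p + √(#V * #U) * (p : ℝ) ^ (-savingExponent δ)) := by
  have hC := flatteningExponent_pos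
  have hp : 1 < (p : ℝ) := mod_cast (Fact.out : p.Prime).one_lt
  have hp₀ : 0 < (p : ℝ) := by linarith
  have hcard : (0 : ℝ) < #Z := (Real.rpow_pos_of_pos hp₀ δ).trans_le hpZ
  have hMZ : ((p : ℝ) ^ (δ / (4 * flatteningExponent))) ^ flatteningExponent < #Z := by
    refine lt_of_lt_of_le ?_ hpZ
    rw [← Real.rpow_mul_natCast hp₀.le]
    refine Real.rpow_lt_rpow_of_exponent_lt hp ?_
    field_simp
    norm_num
  set ρ := (p : ℝ) ^ (-savingExponent δ) with hρ
  set n := 2 ^ doublingCount δ with hn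
  have hdisc := sumProductMatrix_discrepancy_pow_le_of_card_mul_le hK
    (card_pos.1 (mod_cast hcard)) hZZ (sq_le_rpow_of_div_log_le (by linarith) hp₀ hKp hδ h) hMZ
    (le_rpow_pow_doublingCount hp.le hδ) hn hα V U
  have hpow : (∑ v ∈ V, ∑ u ∈ U, sumProductMatrix Z α v u - (#Z : ℝ) ^ 2 * #V * #U / p) ^ (2 * n) ≤
      ((#Z : ℝ) ^ 2 * √(#V * #U) * ρ) ^ (2 * n) :=
    calc _ ≤ (#V * #U : ℝ) ^ n * (#Z : ℝ) ^ (4 * n) * ρ ^ (2 * n) := by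
          refine hdisc.trans ?_
          gcongr
          exact pow_mul_rpow_div_le (by linarith) hp₀ hKp hδ hδ₁ h hpZ
      _ = (√(#V * #U) ^ 2) ^ n * (#Z : ℝ) ^ (4 * n) * ρ ^ (2 * n) := by
          rw [Real.sq_sqrt (by positivity)]
      _ = ((#Z : ℝ) ^ 2 * √(#V * #U) * ρ) ^ (2 * n) := by ring
  have hn₀ : 2 * n ≠ 0 := by positivity
  rw [← (even_two_mul n).pow_abs, pow_le_pow_iff_left₀ (abs_nonneg _) (by positivity) hn₀] at hpow
  calc ∑ v ∈ V, ∑ u ∈ U, sumProductMatrix Z α v u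
      ≤ (#Z : ℝ) ^ 2 * #V * #U / p + (#Z : ℝ) ^ 2 * √(#V * #U) * ρ := by
        linarith [le_of_abs_le hpow]
    _ = _ := by ring

section Hyperbola

variable {F : Type*} [Field F] [DecidableEq F]

lemma image_val_mul (Z : Finset Fˣ) (A : Finset F) : Z.image (↑) * A = Z • A :=
  image₂_image_left ..

lemma card_image_val_mul_image_val (Z : Finset Fˣ) :
    #(Z.image ((↑) : Fˣ → F) * Z.image (↑)) = #(Z * Z) := by
  rw [← card_image_of_injective (Z * Z) (Units.val_injective (α := F))]
  exact congrArg card (image_mul (Units.coeHom F)).symm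

lemma card_smul_mul_le {X Y : Finset F} {Z : Finset Fˣ} {K L : ℝ} (hXY : #X * #Y = L * #(X * Y))
    (hXZ : #(Z • X) ≤ K * #X) : #(Z • (X * Y)) ≤ K * L * #(X * Y) :=
  calc (#(Z • (X * Y)) : ℝ) ≤ #(Z • X) * #Y := by
        rw [← smul_mul_assoc]
        exact mod_cast card_mul_le
    _ ≤ K * #X * #Y := by gcongr
    _ = K * L * #(X * Y) := by rw [mul_assoc, hXY, mul_assoc]

lemma card_mul_card_le_of_card_smul_le {α : F} {A B : Finset F} {Z : Finset Fˣ} {L : ℝ}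
    (hA : #(Z • A) ≤ L * #A) (hB : #(Z • B) ≤ L * #B) :
    (#(α • (Z • B)⁻¹) * #(Z • A)⁻¹ : ℝ) ≤ L ^ 2 * (#A * #B) :=
  calc (#(α • (Z • B)⁻¹) * #(Z • A)⁻¹ : ℝ) ≤ #(Z • B) * #(Z • A) := by
        rw [card_inv]
        exact mod_cast Nat.mul_le_mul_right _ (card_smul_finset_le.trans (card_inv (Z • B)).le)
    _ ≤ L * #B * (L * #A) := by gcongr; exact (Nat.cast_nonneg _).trans hB
    _ = L ^ 2 * (#A * #B) := by ring

lemma card_mul_sq_le_sum_sumProductMatrix [Fintype F] (Z : Finset Fˣ) {α β : F} (hβ : β ≠ 0)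
    (A : Finset F) {B : Finset F} (hB : ∀ b ∈ B, b ≠ 0) :
    (#{b ∈ B | α * b + β ≠ 0 ∧ b / (α * b + β) ∈ A} : ℝ) * #Z ^ 2 ≤
      ∑ v ∈ β • (Z • B)⁻¹, ∑ u ∈ (Z • A)⁻¹, sumProductMatrix Z α v u := by
  set V := β • (Z • B)⁻¹
  set U := (Z • A)⁻¹
  set B' := {b ∈ B | α * b + β ≠ 0 ∧ b / (α * b + β) ∈ A}
  have hpair (z w : Fˣ) (hz : z ∈ Z) (hw : w ∈ Z) :
      #B' ≤ #{q ∈ V ×ˢ U | z • q.1 + α = w • q.2} := by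
    refine card_le_card_of_injOn (fun b ↦ (β • (z • b)⁻¹, (w • (b / (α * b + β)))⁻¹)) ?_ ?_
    · intro b hb
      obtain ⟨hbB, hden, hbA⟩ := mem_filter.1 hb
      have hb₀ := hB b hbB
      refine mem_filter.2 ⟨mem_product.2 ⟨smul_mem_smul_finset (inv_mem_inv (smul_mem_smul hz hbB)),
        inv_mem_inv (smul_mem_smul hw hbA)⟩, ?_⟩
      simp only [Units.smul_def, smul_eq_mul]
      field_simp [hden]
      ring
    · intro b _ c _ hbc
      have hfst : β • (z • b)⁻¹ = β • (z • c)⁻¹ := (Prod.mk.inj hbc).1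
      exact smul_left_cancel z (inv_injective (smul_right_injective F hβ hfst))
  calc (#B' : ℝ) * #Z ^ 2 = ∑ _ ∈ Z, ∑ _ ∈ Z, (#B' : ℝ) := by
        simp only [sum_const, nsmul_eq_mul]
        ring
    _ ≤ ∑ z ∈ Z, ∑ w ∈ Z, (#{q ∈ V ×ˢ U | z • q.1 + α = w • q.2} : ℝ) := by
        gcongr with z hz w hw
        exact hpair z w hz hw
    _ = ∑ v ∈ V, ∑ u ∈ U, sumProductMatrix Z α v u := by
        simp only [sumProductMatrix_apply, ← sum_boole]
        rw [← sum_product' V U, sum_comm_cycle]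

lemma ncard_graph_le {α β : F} (hα : α ≠ 0) {f : F → F}
    (hf : ∀ x, α * x + β ≠ 0 → f x = x / (α * x + β)) (A B : Finset F) :
    {q : F × F | q.1 ∈ A ∧ q.2 ∈ B ∧ q.1 = f q.2}.ncard ≤
      #{b ∈ B | α * b + β ≠ 0 ∧ b / (α * b + β) ∈ A} + 1 := by
  set B' := {b ∈ B | α * b + β ≠ 0 ∧ b / (α * b + β) ∈ A}
  have hsub : {q : F × F | q.1 ∈ A ∧ q.2 ∈ B ∧ q.1 = f q.2} ⊆
      (insert (-β / α) B').image fun b ↦ (f b, b) := by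
    rintro ⟨a, b⟩ ⟨hA, hB, hab⟩
    obtain rfl : a = f b := hab
    refine mem_image.2 ⟨b, ?_, rfl⟩
    by_cases hden : α * b + β = 0
    · exact mem_insert.2 (.inl ((eq_div_iff hα).2 (by linear_combination hden)))
    · exact mem_insert_of_mem (mem_filter.2 ⟨hB, hden, hf b hden ▸ hA⟩)
  refine (Set.ncard_le_ncard hsub (finite_toSet _)).trans ?_
  rw [Set.ncard_coe_finset]
  exact card_image_le.trans (card_insert_le _ _)

lemma card_le_mul_sqrt {X Y₁ Y₂ : Finset F} {Z : Finset Fˣ} {K : ℝ} (hX : ∃ x ∈ X, x ≠ 0)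
    (hY₁ : ∃ y ∈ Y₁, y ≠ 0) (hY₂ : ∃ y ∈ Y₂, y ≠ 0) (hXZ : #(Z • X) ≤ K * #X) (hK : 0 ≤ K) :
    #Z ≤ K * √(#(X * Y₁) * #(X * Y₂)) := by
  obtain ⟨x, hxX, hx⟩ := hX
  have hX₁ : #X ≤ #(X * Y₁) := hY₁.elim fun _ hy ↦ card_le_card_mul_right₀ hy.1 hy.2
  have hX₂ : #X ≤ #(X * Y₂) := hY₂.elim fun _ hy ↦ card_le_card_mul_right₀ hy.1 hy.2
  have hZ : #Z ≤ #(Z • X) :=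
    card_le_card_of_injOn (· • x) (fun z hz ↦ smul_mem_smul hz hxX) fun z _ w _ hzw ↦
      Units.ext (mul_right_cancel₀ hx hzw)
  calc (#Z : ℝ) ≤ #(Z • X) := mod_cast hZ
    _ ≤ K * #X := hXZ
    _ ≤ K * √(#(X * Y₁) * #(X * Y₂)) := by
        gcongr
        refine Real.le_sqrt_of_sq_le ?_
        rw [sq]
        gcongr

end Hyperbola

theorem ncard_graph_le_of_card_mul_le {p : ℕ} [Fact p.Prime] {α β : ZMod p} (hα : α ≠ 0)
    (hβ : β ≠ 0) {f : ZMod p → ZMod p} (hf : ∀ x, α * x + β ≠ 0 → f x = x / (α * x + β))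
    {A B : Finset (ZMod p)} (hB : ∀ b ∈ B, b ≠ 0) {Z : Finset (ZMod p)ˣ} {K L δ : ℝ} (hL : 0 ≤ L)
    (hA : #(Z • A) ≤ L * #A) (hZB : #(Z • B) ≤ L * #B)
    (hK : 2 ≤ K) (hZZ : #(Z * Z) ≤ K * #Z) (hKp : Real.log K < Real.log p)
    (hδ : 0 < δ) (hδ₁ : δ ≤ 1)
    (h : (8 * flatteningExponent + 9) / Real.log (Real.log p / Real.log K) ≤ δ)
    (hpZ : (p : ℝ) ^ δ ≤ #Z) :
    ({q : ZMod p × ZMod p | q.1 ∈ A ∧ q.2 ∈ B ∧ q.1 = f q.2}.ncard : ℝ) ≤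
      L ^ 2 * #A * #B / p + L * √(#A * #B) * (p : ℝ) ^ (-savingExponent δ) + 1 := by
  have hp : 0 < (p : ℝ) := mod_cast (Fact.out : p.Prime).pos
  have hcard : (0 : ℝ) < #Z := (Real.rpow_pos_of_pos hp δ).trans_le hpZ
  set V := β • (Z • B)⁻¹
  set U := (Z • A)⁻¹
  set B' := {b ∈ B | α * b + β ≠ 0 ∧ b / (α * b + β) ∈ A}
  have hVU : (#V * #U : ℝ) ≤ L ^ 2 * (#A * #B) := card_mul_card_le_of_card_smul_le hA hZB
  have hB' : (#B' : ℝ) ≤ #V * #U / p + √(#V * #U) * (p : ℝ) ^ (-savingExponent δ) := by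
    refine le_of_mul_le_mul_right ?_ (sq_pos_of_pos hcard)
    exact (card_mul_sq_le_sum_sumProductMatrix Z hβ A hB).trans <|
      (sum_sumProductMatrix_le hK hZZ hKp hδ hδ₁ h hpZ hα V U).trans_eq (mul_comm _ _)
  calc ({q : ZMod p × ZMod p | q.1 ∈ A ∧ q.2 ∈ B ∧ q.1 = f q.2}.ncard : ℝ) ≤ #B' + 1 :=
        mod_cast ncard_graph_le hα hf A B
    _ ≤ L ^ 2 * (#A * #B) / p + √(L ^ 2 * (#A * #B)) * (p : ℝ) ^ (-savingExponent δ) + 1 := by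
        gcongr
        refine hB'.trans ?_
        gcongr
    _ = _ := by rw [Real.sqrt_mul (sq_nonneg L), Real.sqrt_sq hL, mul_assoc _ (#A : ℝ)]

lemma mul_add_one_le_two_mul {K L M s ρ τ : ℝ} (hK : 1 ≤ K) (hL : 1 ≤ L) (hM : 1 ≤ M) (hs : 0 ≤ s)
    (hρ : 0 ≤ ρ) (hρτ : ρ ≤ τ) (h : 1 ≤ K * s * ρ) :
    K * L * s * ρ + 1 ≤ 2 * K ^ 2 * L ^ 2 * M * s * τ :=
  calc K * L * s * ρ + 1 ≤ K * L * s * ρ + K * 1 * s * ρ := by rw [mul_one]; gcongr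
    _ ≤ K * L * s * ρ + K * L * s * ρ := by gcongr
    _ = 2 * (K * L) * 1 * s * ρ := by ring
    _ ≤ 2 * (K * L) ^ 2 * M * s * τ := by
        gcongr
        exact le_self_pow₀ (one_le_mul_of_one_le_of_one_le hK hL) two_ne_zero
    _ = 2 * K ^ 2 * L ^ 2 * M * s * τ := by ring

end ModularHyperbola

open ModularHyperbola

theorem stmt5 :
    ∃ C0 C1 C2 : ℝ, 0 < C0 ∧ 0 < C1 ∧ 0 < C2 ∧
      ∀ (p : ℕ) [Fact p.Prime],
        ∀ α β : ZMod p, α ≠ 0 → β ≠ 0 →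
          ∀ f : ZMod p → ZMod p,
            (∀ x : ZMod p, (α * x + β ≠ 0 → f x = x / (α * x + β)) ∧
              (α * x + β = 0 → f x = α⁻¹)) →
            ∀ X Y1 Y2 Z : Finset (ZMod p),
              X.Nonempty → Y1.Nonempty → Y2.Nonempty → Z.Nonempty →
              (∀ x ∈ X, x ≠ 0) → (∀ y ∈ Y1, y ≠ 0) → (∀ y ∈ Y2, y ≠ 0) →
              (∀ z ∈ Z, z ≠ 0) →
              ∀ A B : Finset (ZMod p), A = X * Y1 → B = X * Y2 →
                ∀ Kstar K Kt : ℝ, 1 ≤ Kstar → 1 ≤ K → 2 ≤ Kt →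
                  ((X.card : ℝ) * Y1.card = Kstar * A.card) →
                  ((X.card : ℝ) * Y2.card = Kstar * B.card) →
                  (((X * Z).card : ℝ) ≤ K * X.card) →
                  (((Z * Z).card : ℝ) ≤ Kt * Z.card) →
                  Real.log Kt < Real.log p →
                  ∀ δ : ℝ, 0 < δ → δ ≤ 1 →
                    C0 / Real.log (Real.log p / Real.log Kt) ≤ δ →
                    (p : ℝ) ^ δ ≤ Z.card →
                    ∃ k : ℕ, 1 ≤ k ∧ (k : ℝ) ≤ C1 / δ ∧
                      (Set.ncard {q : ZMod p × ZMod p |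
                          q.1 ∈ A ∧ q.2 ∈ B ∧ q.1 = f q.2} : ℝ)
                          - K ^ 2 * Kstar ^ 2 * A.card * B.card / p
                        ≤ C2 * K ^ 2 * Kstar ^ 2 * Kt *
                            Real.sqrt ((A.card : ℝ) * B.card) *
                            (p : ℝ) ^ (-(1 : ℝ) / 16 ^ k) := by
  refine ⟨8 * flatteningExponent + 9, 4 * flatteningExponent + 5, 2, by positivity, by positivity,
    two_pos, ?_⟩
  rintro p _ α β hα hβ f hf X Y₁ Y₂ Z ⟨x, hx⟩ ⟨y₁, hy₁⟩ ⟨y₂, hy₂⟩ hZ hX₀ hY₁₀ hY₂₀ hZ₀ _ _ rfl rfl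
    Kstar K Kt hKstar hK hKt hXY₁ hXY₂ hXZ hZZ hKp δ hδ hδ₁ hδp hpZ
  have hp : 1 ≤ (p : ℝ) := mod_cast (Fact.out : p.Prime).one_le
  lift Z to Finset (ZMod p)ˣ using fun z hz ↦ (hZ₀ z hz).isUnit
  rw [mul_comm, image_val_mul] at hXZ
  rw [card_image_val_mul_image_val] at hZZ
  rw [Finset.card_image_of_injective Z Units.val_injective] at hZZ hpZ
  obtain ⟨k, hk, hkδ, hkle⟩ := exists_inv_sixteen_pow_le_savingExponent hδ hδ₁
  refine ⟨k, hk, hkδ, ?_⟩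
  have hB₀ : ∀ b ∈ X * Y₂, b ≠ 0 := fun b hb ↦ by
    obtain ⟨x, hx, y, hy, rfl⟩ := Finset.mem_mul.1 hb
    exact mul_ne_zero (hX₀ x hx) (hY₂₀ y hy)
  have hcount := ncard_graph_le_of_card_mul_le hα hβ (fun x ↦ (hf x).1) hB₀ (by positivity)
    (card_smul_mul_le hXY₁ hXZ) (card_smul_mul_le hXY₂ hXZ) hKt hZZ hKp hδ hδ₁ hδp hpZ
  have hone := one_le_mul_rpow_neg_savingExponent hp hδ <| hpZ.trans <| card_le_mul_sqrt
    ⟨x, hx, hX₀ x hx⟩ ⟨y₁, hy₁, hY₁₀ y₁ hy₁⟩ ⟨y₂, hy₂, hY₂₀ y₂ hy₂⟩ hXZ (by positivity)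
  have hsaving : (p : ℝ) ^ (-savingExponent δ) ≤ (p : ℝ) ^ (-(1 : ℝ) / 16 ^ k) := by
    gcongr
    rw [neg_div]
    exact neg_le_neg hkle
  rw [mul_pow] at hcount
  linarith [mul_add_one_le_two_mul hK hKstar (by linarith : 1 ≤ Kt) (Real.sqrt_nonneg _)
    (by positivity) hsaving hone]
end

section
/- There exist absolute constants C > 0 and κ ∈ (0,1) with the following property. Let p ≥ 16 be a prime, g a primitive root modulo p, a, b ∈ F_p^*, and let n be an integer with exp(C·log p / log log p) ≤ n ≤ p/2. Set I = {a·g^i : 0 ≤ i ≤ n−1} and J = {b·g^i : 0 ≤ i ≤ n−1} (each of cardinality n). Then #{(x, y) ∈ I × J : x = f_*(y)} ≤ (1 − κ)·n. -/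
open scoped BigOperators

/-!
Inversion turns `f_*` into the reflection `ρ x = 1 - x`, so it is enough to show that `ρ` cannot
almost map a geometric progression `A` of ratio `h` onto another one, `B`. Both are almost
invariant under the dilation `σ x = h * x`, and the commutator of `ρ` and `σ ^ k` is the
translation by `1 - h ^ k`. If `ρ` almost maps `A` onto `B`, it follows that `A` is almost
invariant under translation by `h ^ i - h ^ j` for all small `i`, `j`, and, since defects add up,
under translation by sums of a few elements `h ^ i * (h ^ j - h ^ k)`. By a sum-product argument on
`G = {h ^ i}` such sums contain a nonzero multiple of a set `G + ξ • G` with more than `4 / 3 * #A`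
elements, while double counting shows that at most `4 / 3 * #A` translations move only a quarter of
`A` out of `A`.
-/

section Defect

open Finset
open scoped commutatorElement

variable {α : Type*} [DecidableEq α] (σ τ ρ : Equiv.Perm α) (X Y Z : Finset α)

/-- The number of points of `X` that `σ` does not map into `Y`. When `#X = #Y`, a small defect
says that `σ` almost maps `X` onto `Y`. -/
def defect (σ : Equiv.Perm α) (X Y : Finset α) : ℕ := #{x ∈ X | σ x ∉ Y}

lemma defect_mul_le : defect (τ * σ) X Z ≤ defect σ X Y + defect τ Y Z := by
  have via_Y : #{x ∈ X | σ x ∈ Y ∧ τ (σ x) ∉ Z} ≤ defect τ Y Z :=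
    card_le_card_of_injOn σ (fun x hx ↦ by simp_all) σ.injective.injOn
  have cover : ({x ∈ X | (τ * σ) x ∉ Z} : Finset α) ⊆
      {x ∈ X | σ x ∉ Y} ∪ {x ∈ X | σ x ∈ Y ∧ τ (σ x) ∉ Z} := by
    intro x hx
    obtain ⟨hxX, hxZ⟩ := mem_filter.1 hx
    by_cases hσx : σ x ∈ Y
    · exact mem_union_right _ (mem_filter.2 ⟨hxX, hσx, hxZ⟩)
    · exact mem_union_left _ (mem_filter.2 ⟨hxX, hσx⟩)
  calc defect (τ * σ) X Z
    _ ≤ defect σ X Y + #{x ∈ X | σ x ∈ Y ∧ τ (σ x) ∉ Z} :=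
        (card_le_card cover).trans (card_union_le _ _)
    _ ≤ defect σ X Y + defect τ Y Z := by gcongr

variable {X Y} in
lemma defect_inv (hXY : #X = #Y) : defect σ⁻¹ Y X = defect σ X Y := by
  have stays : #{x ∈ X | σ x ∈ Y} = #{y ∈ Y | σ⁻¹ y ∈ X} :=
    card_nbij' σ ↑σ⁻¹ (fun x hx ↦ by simp_all) (fun y hy ↦ by simp_all)
      (fun x _ ↦ by simp) (fun y _ ↦ by simp)
  have hX := card_filter_add_card_filter_not (s := X) (σ · ∈ Y)
  have hY := card_filter_add_card_filter_not (s := Y) (σ⁻¹ · ∈ X)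
  simp only [defect]
  omega

lemma defect_pow_le (k : ℕ) : defect (σ ^ k) X X ≤ k * defect σ X X := by
  induction k with
  | zero => simp [defect]
  | succ k ih =>
    calc defect (σ ^ (k + 1)) X X
      _ ≤ defect σ X X + defect (σ ^ k) X X := pow_succ σ k ▸ defect_mul_le ..
      _ ≤ (k + 1) * defect σ X X := by linarith

lemma defect_conj_le : defect (σ * τ * σ⁻¹) X X ≤ defect τ X X + 2 * defect σ X X := by
  have outer := defect_mul_le σ⁻¹ (σ * τ) X X X
  have inner := defect_mul_le τ σ X X X
  rw [defect_inv σ rfl] at outer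
  omega

variable {X Y} in
lemma defect_commutator_le (hXY : #X = #Y) :
    defect ⁅ρ⁻¹, σ⁆ X X ≤ 2 * defect ρ X Y + defect σ X X + defect σ Y Y := by
  have first := defect_mul_le σ⁻¹ (ρ⁻¹ * σ * ρ) X X X
  have second := defect_mul_le ρ (ρ⁻¹ * σ) X Y X
  have third := defect_mul_le σ ρ⁻¹ Y Y X
  rw [defect_inv σ rfl] at first
  rw [defect_inv ρ hXY] at third
  rw [commutatorElement_def, inv_inv]
  omega

end Defect

section TranslationDefect

open Finset

variable {G : Type*} [AddGroup G] [DecidableEq G] (A : Finset G)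

/-- The number of points of `A` that leave `A` under translation by `t`. -/
def translationDefect (t : G) : ℕ := defect (Equiv.addRight t) A A

lemma translationDefect_add_le (s t : G) :
    translationDefect A (s + t) ≤ translationDefect A s + translationDefect A t := by
  have comp : Equiv.addRight (s + t) = Equiv.addRight t * Equiv.addRight s := by
    ext x; simp [add_assoc]
  rw [translationDefect, comp]
  exact defect_mul_le ..

lemma translationDefect_neg (t : G) : translationDefect A (-t) = translationDefect A t :=
  defect_inv (Equiv.addRight t) rfl

variable {A} in
/-- Every pair `(x, y) ∈ A × A` is joined by exactly one translation, while a translation of defect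
at most `#A / 4` joins at least `3 * #A / 4` pairs. -/
lemma three_mul_card_le_of_translationDefect_le (hA : A.Nonempty) {T : Finset G}
    (hT : ∀ t ∈ T, 4 * translationDefect A t ≤ #A) : 3 * #T ≤ 4 * #A := by
  have many_stay : ∀ t ∈ T, 3 * #A ≤ 4 * #{x ∈ A | x + t ∈ A} := by
    intro t ht
    have split := card_filter_add_card_filter_not (s := A) (· + t ∈ A)
    have few_leave : 4 * #{x ∈ A | x + t ∉ A} ≤ #A := hT t ht
    omega
  have few_join : ∀ x ∈ A, #{t ∈ T | x + t ∈ A} ≤ #A := fun x _ ↦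
    card_le_card_of_injOn (x + ·) (fun t ht ↦ by simp_all) (add_right_injective x).injOn
  have double_count : #T * (3 * #A) ≤ 4 * (#A * #A) :=
    calc #T * (3 * #A)
      _ ≤ ∑ t ∈ T, 4 * #{x ∈ A | x + t ∈ A} := card_nsmul_le_sum _ _ _ many_stay
      _ = 4 * ∑ x ∈ A, #{t ∈ T | x + t ∈ A} := by
          rw [← mul_sum]
          exact congrArg _ (sum_card_bipartiteAbove_eq_sum_card_bipartiteBelow fun t x ↦ x + t ∈ A)
      _ ≤ 4 * (#A * #A) := by gcongr; exact sum_le_card_nsmul _ _ _ few_join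
  exact Nat.le_of_mul_le_mul_right (by linarith) hA.card_pos

end TranslationDefect

section SlopeSums

open Finset
open scoped Pointwise Combinatorics.Additive

variable {F : Type*} [Field F] [DecidableEq F] {s t P : Finset F} {ξ : F}

lemma addEnergy_smul_eq_card_filter (hξ : ξ ≠ 0) :
    E[s, ξ • t] = #{w ∈ (s ×ˢ s) ×ˢ t ×ˢ t | w.1.1 + ξ * w.2.1 = w.1.2 + ξ * w.2.2} := by
  refine (card_nbij (fun w ↦ (w.1, ξ • w.2)) ?_ ?_ ?_).symm
  · rintro ⟨⟨x, x'⟩, y, y'⟩ hw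
    have mem_smul {z : F} (hz : z ∈ t) : ξ * z ∈ ξ • t := smul_mem_smul_finset hz
    simp_all
  · rintro ⟨⟨x, x'⟩, y, y'⟩ - ⟨⟨z, z'⟩, v, v'⟩ - hwz
    simpa [hξ] using hwz
  · rintro ⟨⟨x, x'⟩, y, y'⟩ hw
    simp only [mem_coe, mem_filter, mem_product, mem_smul_finset] at hw
    obtain ⟨⟨hx, ⟨z, hz, rfl⟩, z', hz', rfl⟩, heq⟩ := hw
    exact ⟨((x, x'), z, z'), by simp_all, rfl⟩

/-- A nontrivial solution of `x + ξ * y = x' + ξ * y'` determines the slope `ξ`. -/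
lemma card_slopes_le (x x' y y' : F) :
    #{ξ ∈ P | x + ξ * y = x' + ξ * y'} ≤ (if x = x' ∧ y = y' then #P else 0) + 1 := by
  split_ifs with htriv
  · exact (card_filter_le _ _).trans (Nat.le_succ _)
  · rw [zero_add, card_le_one]
    intro ξ hξ η hη
    simp only [mem_filter] at hξ hη
    have hprod : (ξ - η) * (y - y') = 0 := by linear_combination hξ.2 - hη.2
    rcases mul_eq_zero.1 hprod with h | h
    · exact sub_eq_zero.1 h
    · obtain rfl := sub_eq_zero.1 h
      exact absurd ⟨add_right_cancel hξ.2, rfl⟩ htriv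

lemma sum_addEnergy_smul_le (hP : 0 ∉ P) :
    ∑ ξ ∈ P, E[s, ξ • t] ≤ #P * (#s * #t) + (#s * #t) ^ 2 := by
  set W := (s ×ˢ s) ×ˢ t ×ˢ t
  have trivial_count : #{w ∈ W | w.1.1 = w.1.2 ∧ w.2.1 = w.2.2} = #s * #t := by
    have : ({w ∈ W | w.1.1 = w.1.2 ∧ w.2.1 = w.2.2} : Finset _) = s.diag ×ˢ t.diag := by
      ext ⟨⟨x, x'⟩, y, y'⟩
      simp only [W, mem_filter, mem_product, mem_diag]
      grind
    rw [this, card_product, diag_card, diag_card]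
  calc ∑ ξ ∈ P, E[s, ξ • t]
    _ = ∑ ξ ∈ P, #{w ∈ W | w.1.1 + ξ * w.2.1 = w.1.2 + ξ * w.2.2} :=
        sum_congr rfl fun ξ hξ ↦ addEnergy_smul_eq_card_filter (ne_of_mem_of_not_mem hξ hP)
    _ = ∑ w ∈ W, #{ξ ∈ P | w.1.1 + ξ * w.2.1 = w.1.2 + ξ * w.2.2} :=
        sum_card_bipartiteAbove_eq_sum_card_bipartiteBelow _
    _ ≤ ∑ w ∈ W, ((if w.1.1 = w.1.2 ∧ w.2.1 = w.2.2 then #P else 0) + 1) :=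
        sum_le_sum fun w _ ↦ card_slopes_le ..
    _ = #P * (#s * #t) + (#s * #t) ^ 2 := by
        rw [sum_add_distrib, ← sum_filter, sum_const, trivial_count, sum_const]
        simp only [W, card_product, smul_eq_mul]
        ring

lemma exists_mem_card_add_smul_ge (hs : s.Nonempty) (ht : t.Nonempty) (hP : P.Nonempty)
    (hP0 : 0 ∉ P) :
    ∃ ξ ∈ P, #P * (#s * #t) ≤ #(s + ξ • t) * (#P + #s * #t) := by
  have average : ∑ ξ ∈ P, #P * E[s, ξ • t] ≤ ∑ _ξ ∈ P, (#P * (#s * #t) + (#s * #t) ^ 2) := by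
    rw [← mul_sum, sum_const, smul_eq_mul]
    exact Nat.mul_le_mul_left _ (sum_addEnergy_smul_le hP0)
  obtain ⟨ξ, hξ, energy_le⟩ := exists_le_of_sum_le hP average
  have cauchy_schwarz : #s ^ 2 * #t ^ 2 ≤ #(s + ξ • t) * E[s, ξ • t] := by
    simpa only [card_smul_finset₀ (ne_of_mem_of_not_mem hξ hP0)] using
      le_card_add_mul_addEnergy s (ξ • t)
  refine ⟨ξ, hξ, Nat.le_of_mul_le_mul_right ?_ (Nat.mul_pos hs.card_pos ht.card_pos)⟩
  calc #P * (#s * #t) * (#s * #t)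
    _ = #P * (#s ^ 2 * #t ^ 2) := by ring
    _ ≤ #P * (#(s + ξ • t) * E[s, ξ • t]) := by gcongr
    _ = #(s + ξ • t) * (#P * E[s, ξ • t]) := by ring
    _ ≤ #(s + ξ • t) * (#P * (#s * #t) + (#s * #t) ^ 2) := by gcongr
    _ = #(s + ξ • t) * (#P + #s * #t) * (#s * #t) := by ring

lemma card_add_smul_of_notMem_div (hξ : ξ ∉ (s - s) / (t - t)) : #(s + ξ • t) = #s * #t := by
  have inj : (s ×ˢ t : Set (F × F)).InjOn fun w ↦ w.1 + ξ * w.2 := by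
    rintro ⟨x, y⟩ ⟨hx, hy⟩ ⟨x', y'⟩ ⟨hx', hy'⟩ heq
    dsimp only at heq hx hy hx' hy'
    suffices y = y' by simp_all
    by_contra hne
    refine hξ (mem_div.2 ⟨x' - x, sub_mem_sub hx' hx, y - y', sub_mem_sub hy hy', ?_⟩)
    rw [div_eq_iff (sub_ne_zero.2 hne)]
    linear_combination -heq
  have himage : s + ξ • t = image₂ (fun x y ↦ x + ξ * y) s t := image₂_image_right ..
  rw [himage, card_image₂_iff.2 inj]

lemma exists_natCast_card_add_smul_ge (hs : s.Nonempty) (ht : t.Nonempty) {M : ℕ} (hM : 0 < M)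
    (hchar : Set.InjOn (Nat.cast : ℕ → F) (Set.Iic M)) :
    ∃ k : ℕ, M * (#s * #t) ≤ #(s + (k : F) • t) * (M + #s * #t) := by
  let P : Finset F := (Icc 1 M).image Nat.cast
  have hPM : #P = M := by
    rw [card_image_of_injOn (hchar.mono fun k hk ↦ (mem_Icc.1 hk).2), Nat.card_Icc,
      Nat.add_sub_cancel]
  have hP0 : 0 ∉ P := by
    intro h
    obtain ⟨k, hk, hk0⟩ := mem_image.1 h
    obtain ⟨hk1, hkM⟩ := mem_Icc.1 hk
    have : k = 0 := hchar hkM (Nat.zero_le M) (hk0.trans Nat.cast_zero.symm)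
    omega
  obtain ⟨ξ, hξ, large⟩ := exists_mem_card_add_smul_ge hs ht (card_pos.1 (hPM ▸ hM)) hP0
  obtain ⟨k, -, rfl⟩ := mem_image.1 hξ
  exact ⟨k, hPM ▸ large⟩

lemma exists_mul_mem_sub_of_mem_div (ht : t.Nontrivial) (hξ : ξ ∈ (s - s) / (t - t)) :
    ∃ δ ∈ t - t, δ ≠ 0 ∧ ξ * δ ∈ s - s := by
  obtain ⟨u, hu, v, hv, rfl⟩ := mem_div.1 hξ
  rcases eq_or_ne v 0 with rfl | hv0
  · obtain ⟨x, hx, y, hy, hxy⟩ := ht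
    refine ⟨x - y, sub_mem_sub hx hy, sub_ne_zero.2 hxy, ?_⟩
    rw [div_zero, zero_mul]
    exact (Nonempty.of_sub_left ⟨u, hu⟩).zero_mem_sub
  · exact ⟨v, hv, hv0, by rwa [div_mul_cancel₀ u hv0]⟩

/-- Either every natural number is a quotient of differences of `s`, and the best slope among
`1, …, M` will do, or some `k` is such a quotient and `k + 1` is not, and then the slope `k + 1`
is injective on `s × s`. -/
lemma exists_slope_of_injOn_natCast (hs : s.Nontrivial) {M : ℕ} (hM : 0 < M)
    (hchar : Set.InjOn (Nat.cast : ℕ → F) (Set.Iic M)) :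
    ∃ ξ, ∃ δ ∈ s - s, δ ≠ 0 ∧ ξ * δ ∈ (s - s) + (s - s) ∧
      M * #s ^ 2 ≤ #(s + ξ • s) * (M + #s ^ 2) := by
  have zero_mem : 0 ∈ s - s := hs.nonempty.zero_mem_sub
  by_cases hstep : ∃ k : ℕ, (k : F) ∈ (s - s) / (s - s) ∧ (k + 1 : F) ∉ (s - s) / (s - s)
  · obtain ⟨k, hk, hk1⟩ := hstep
    obtain ⟨δ, hδ, hδ0, hkδ⟩ := exists_mul_mem_sub_of_mem_div hs hk
    refine ⟨k + 1, δ, hδ, hδ0, ?_, ?_⟩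
    · rw [add_one_mul]
      exact add_mem_add hkδ hδ
    · rw [card_add_smul_of_notMem_div hk1, ← sq, mul_comm]
      gcongr
      exact Nat.le_add_right ..
  · push Not at hstep
    have all_mem (k : ℕ) : (k : F) ∈ (s - s) / (s - s) := by
      induction k with
      | zero => exact mem_div.2 ⟨0, zero_mem, 0, zero_mem, by simp⟩
      | succ k ih => exact_mod_cast hstep k ih
    obtain ⟨k, large⟩ := exists_natCast_card_add_smul_ge hs.nonempty hs.nonempty hM hchar
    obtain ⟨δ, hδ, hδ0, hkδ⟩ := exists_mul_mem_sub_of_mem_div hs (all_mem k)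
    refine ⟨k, δ, hδ, hδ0, ?_, ?_⟩
    · simpa only [add_zero] using add_mem_add hkδ zero_mem
    · rwa [← sq] at large

end SlopeSums

section GeomProg

open Finset
open scoped Pointwise

variable {M : Type*} [DecidableEq M] {n : ℕ}

/-- The geometric progression `a, a * g, …, a * g ^ (n - 1)`, as a set. -/
def geomProg [Monoid M] (a g : M) (n : ℕ) : Finset M := (range n).image fun i ↦ a * g ^ i

lemma mem_geomProg [Monoid M] {a g x : M} : x ∈ geomProg a g n ↔ ∃ i < n, a * g ^ i = x := by
  simp only [geomProg, mem_image, mem_range]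

lemma card_geomProg [MonoidWithZero M] [IsLeftCancelMulZero M] {a g : M} (ha : a ≠ 0)
    (hg : Set.InjOn (g ^ · : ℕ → M) (Set.Iio n)) : #(geomProg a g n) = n := by
  rw [geomProg, card_image_of_injOn, card_range]
  rw [coe_range]
  exact (mul_right_injective₀ ha).comp_injOn hg

lemma zero_notMem_geomProg [MonoidWithZero M] [NoZeroDivisors M] {a g : M} (ha : a ≠ 0)
    (hg : g ≠ 0) : 0 ∉ geomProg a g n := by
  rw [mem_geomProg]
  rintro ⟨i, -, h⟩
  exact mul_ne_zero ha (pow_ne_zero i hg) h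

lemma inv_geomProg [DivisionCommMonoid M] (a g : M) :
    (geomProg a g n)⁻¹ = geomProg a⁻¹ g⁻¹ n := by
  simp only [geomProg, ← image_inv_eq_inv, image_image, Function.comp_def, mul_inv, inv_pow]

lemma defect_mulLeft_geomProg_le_one [CommMonoid M] (a : M) (h : Mˣ) :
    defect h.mulLeft (geomProg a h n) (geomProg a h n) ≤ 1 := by
  have only_last : ({x ∈ geomProg a (h : M) n | h.mulLeft x ∉ geomProg a (h : M) n} : Finset M) ⊆
      {a * (h : M) ^ (n - 1)} := by
    intro x hx
    obtain ⟨hx, hhx⟩ := mem_filter.1 hx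
    obtain ⟨i, hi, rfl⟩ := mem_geomProg.1 hx
    have : n ≤ i + 1 := by
      by_contra! hlt
      exact hhx (mem_geomProg.2 ⟨i + 1, hlt, by
        rw [Units.mulLeft_apply, pow_succ', mul_left_comm]⟩)
    rw [mem_singleton, show i = n - 1 by omega]
  exact (card_le_card only_last).trans_eq (card_singleton _)

end GeomProg

section Dilation

open Finset
open scoped commutatorElement

lemma defect_mulLeft_pow_le {M : Type*} [Monoid M] [DecidableEq M] {A : Finset M} {h : Mˣ}
    (hA : defect h.mulLeft A A ≤ 1) (k : ℕ) : defect (h ^ k).mulLeft A A ≤ k := by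
  have hpow : (h ^ k).mulLeft = h.mulLeft ^ k := by
    ext x
    simp [Equiv.Perm.coe_pow]
  rw [hpow]
  exact (defect_pow_le ..).trans (mul_le_of_le_one_right' hA)

variable {R : Type*} [Ring R] [DecidableEq R] {A B : Finset R} {h : Rˣ}

variable (A h) in
lemma translationDefect_mul_le (t : R) :
    translationDefect A (h * t) ≤ translationDefect A t + 2 * defect h.mulLeft A A := by
  have hconj : Equiv.addRight (h * t) = h.mulLeft * Equiv.addRight t * h.mulLeft⁻¹ := by
    ext x
    simp [mul_add]
  rw [translationDefect, hconj]
  exact defect_conj_le ..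

variable (h) in
lemma translationDefect_one_sub_le (hAB : #A = #B) :
    translationDefect A (1 - h) ≤ 2 * defect (Equiv.subLeft 1) A B + defect h.mulLeft A A +
      defect h.mulLeft B B := by
  have hcomm : Equiv.addRight (1 - h : R) = ⁅(Equiv.subLeft 1 : Equiv.Perm R)⁻¹, h.mulLeft⁆ := by
    ext x
    change x + (1 - h) = -(h * (1 - ↑h⁻¹ * x)) + 1
    rw [mul_sub, mul_one, h.mul_inv_cancel_left]
    abel
  rw [translationDefect, hcomm]
  exact defect_commutator_le _ _ hAB

lemma translationDefect_pow_sub_pow_le (hAB : #A = #B) (hA : defect h.mulLeft A A ≤ 1)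
    (hB : defect h.mulLeft B B ≤ 1) (i j : ℕ) :
    translationDefect A (h ^ i - h ^ j) ≤ 2 * defect (Equiv.subLeft 1) A B + 2 * max i j := by
  wlog hij : i ≤ j generalizing i j
  · rw [max_comm, ← neg_sub, translationDefect_neg]
    exact this j i (le_of_not_ge hij)
  obtain ⟨k, rfl⟩ := Nat.exists_eq_add_of_le hij
  have factor : (h ^ i - h ^ (i + k) : R) = (h ^ i : Rˣ) * (1 - (h ^ k : Rˣ)) := by
    push_cast
    rw [mul_sub, mul_one, pow_add]
  have dilate := translationDefect_mul_le A (h ^ i) (1 - (h ^ k : Rˣ))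
  have commute := translationDefect_one_sub_le (h ^ k) hAB
  have hAi := defect_mulLeft_pow_le hA i
  have hAk := defect_mulLeft_pow_le hA k
  have hBk := defect_mulLeft_pow_le hB k
  rw [factor]
  omega

end Dilation

section AlmostInvariant

open Finset
open scoped Pointwise

variable {F : Type*} [Field F] [DecidableEq F] {A B : Finset F} {h : Fˣ}

lemma translationDefect_mul_le_of_mem_geomProg (hAB : #A = #B) (hA : defect h.mulLeft A A ≤ 1)
    (hB : defect h.mulLeft B B ≤ 1) {m : ℕ} {x u : F} (hx : x ∈ geomProg 1 (h : F) m)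
    (hu : u ∈ geomProg 1 (h : F) m - geomProg 1 (h : F) m) :
    translationDefect A (x * u) ≤ 2 * defect (Equiv.subLeft 1) A B + 4 * m := by
  obtain ⟨i, hi, rfl⟩ := mem_geomProg.1 hx
  obtain ⟨y, hy, z, hz, rfl⟩ := mem_sub.1 hu
  obtain ⟨j, hj, rfl⟩ := mem_geomProg.1 hy
  obtain ⟨k, hk, rfl⟩ := mem_geomProg.1 hz
  have dilate := translationDefect_mul_le A (h ^ i) (h ^ j - h ^ k : F)
  have difference := translationDefect_pow_sub_pow_le hAB hA hB j k
  have hAi := defect_mulLeft_pow_le hA i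
  simp only [one_mul]
  push_cast at dilate
  omega

/-- Each element of `δ • (G + ξ • G)` is a sum of three products `x * u` with `x ∈ G` and
`u ∈ G - G`, so that it translates `A` with defect at most `#A / 4`. -/
lemma three_mul_card_add_smul_geomProg_le (hA₀ : A.Nonempty) (hAB : #A = #B)
    (hA : defect h.mulLeft A A ≤ 1) (hB : defect h.mulLeft B B ≤ 1) {m : ℕ}
    (hm : 24 * defect (Equiv.subLeft 1) A B + 48 * m ≤ #A) {ξ δ : F} (hδ₀ : δ ≠ 0)
    (hδ : δ ∈ geomProg 1 (h : F) m - geomProg 1 (h : F) m)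
    (hξδ : ξ * δ ∈ (geomProg 1 (h : F) m - geomProg 1 (h : F) m) +
      (geomProg 1 (h : F) m - geomProg 1 (h : F) m)) :
    3 * #(geomProg 1 (h : F) m + ξ • geomProg 1 (h : F) m) ≤ 4 * #A := by
  rw [← card_smul_finset₀ hδ₀]
  refine three_mul_card_le_of_translationDefect_le hA₀ fun t ht ↦ ?_
  obtain ⟨w, hw, rfl⟩ := mem_smul_finset.1 ht
  obtain ⟨x, hx, w', hw', rfl⟩ := mem_add.1 hw
  obtain ⟨y, hy, rfl⟩ := mem_smul_finset.1 hw'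
  obtain ⟨u, hu, v, hv, huv⟩ := mem_add.1 hξδ
  have expand : δ • (x + ξ • y) = x * δ + (y * u + y * v) := by
    simp only [smul_eq_mul]
    linear_combination -y * huv
  have hxδ := translationDefect_mul_le_of_mem_geomProg hAB hA hB hx hδ
  have hyu := translationDefect_mul_le_of_mem_geomProg hAB hA hB hy hu
  have hyv := translationDefect_mul_le_of_mem_geomProg hAB hA hB hy hv
  have outer := translationDefect_add_le A (x * δ) (y * u + y * v)
  have inner := translationDefect_add_le A (y * u) (y * v)
  rw [expand]
  omega

theorem card_le_mul_defect_subLeft_one (hn : 50000 ≤ #A) (hAB : #A = #B)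
    (hA : defect h.mulLeft A A ≤ 1) (hB : defect h.mulLeft B B ≤ 1)
    (hh : Set.InjOn ((h : F) ^ · : ℕ → F) (Set.Iio #A))
    (hchar : Set.InjOn (Nat.cast : ℕ → F) (Set.Iio (2 * #A))) :
    #A ≤ 50 * defect (Equiv.subLeft 1) A B := by
  by_contra! hdefect
  set n := #A
  obtain ⟨m, hm⟩ : ∃ m, m = n / 100 := ⟨_, rfl⟩
  obtain ⟨M, hM⟩ : ∃ M, M + 1 = 2 * n := ⟨2 * n - 1, by omega⟩
  have hG : #(geomProg 1 (h : F) m) = m :=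
    card_geomProg one_ne_zero (hh.mono (Set.Iio_subset_Iio (by omega)))
  obtain ⟨ξ, δ, hδ, hδ₀, hξδ, large⟩ := exists_slope_of_injOn_natCast (s := geomProg 1 (h : F) m)
    (one_lt_card_iff_nontrivial.1 (by omega)) (M := M) (by omega)
    (hchar.mono fun k hk ↦ by simp only [Set.mem_Iic, Set.mem_Iio] at hk ⊢; omega)
  have small := three_mul_card_add_smul_geomProg_le (card_pos.1 (by omega)) hAB hA hB
    (by omega) hδ₀ hδ hξδ
  rw [hG] at large
  have hcontra : 3 * (M * m ^ 2) ≤ 4 * n * (M + m ^ 2) :=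
    calc 3 * (M * m ^ 2)
      _ ≤ 3 * (#(geomProg 1 (h : F) m + ξ • geomProg 1 (h : F) m) * (M + m ^ 2)) := by gcongr
      _ ≤ 4 * n * (M + m ^ 2) := by
          rw [← mul_assoc]
          gcongr
  have hm500 : 500 ≤ m := by omega
  have hn101 : n ≤ 101 * m := by omega
  nlinarith

end AlmostInvariant

section FStar

open Finset
open scoped Pointwise

/-- The map `f_*` on a field: `x ↦ x / (x - 1)` for `x ≠ 1`, and `1 ↦ 1`. -/
def fStar {F : Type*} [Field F] [DecidableEq F] (x : F) : F := if x = 1 then 1 else x / (x - 1)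

variable {F : Type*} [Field F] [DecidableEq F] {I J : Finset F}

lemma fStar_inv {u : F} (hu₀ : u ≠ 0) (hu₁ : u ≠ 1) : fStar u⁻¹ = (1 - u)⁻¹ := by
  have : 1 - u ≠ 0 := sub_ne_zero.2 hu₁.symm
  have : u⁻¹ - 1 ≠ 0 := sub_ne_zero.2 (inv_ne_one.2 hu₁)
  rw [fStar, if_neg (inv_ne_one.2 hu₁)]
  field_simp

lemma defect_inv_le_card_filter_fStar (hJ : 0 ∉ J) :
    defect (Equiv.subLeft 1) J⁻¹ I⁻¹ ≤ #{y ∈ J | fStar y ∉ I} + 1 := by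
  have cover : ({u ∈ J⁻¹ | Equiv.subLeft 1 u ∉ I⁻¹} : Finset F) ⊆
      insert 1 {y ∈ J | fStar y ∉ I}⁻¹ := by
    intro u hu
    rw [mem_filter, mem_inv', mem_inv', Equiv.subLeft_apply] at hu
    rw [mem_insert, mem_inv', mem_filter, or_iff_not_imp_left]
    intro hu₁
    have hu₀ : u ≠ 0 := by
      rintro rfl
      exact hJ (inv_zero (G₀ := F) ▸ hu.1)
    rwa [fStar_inv hu₀ hu₁]
  calc defect (Equiv.subLeft 1) J⁻¹ I⁻¹
    _ ≤ #{y ∈ J | fStar y ∉ I}⁻¹ + 1 := (card_le_card cover).trans (card_insert_le _ _)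
    _ = #{y ∈ J | fStar y ∉ I} + 1 := by rw [card_inv]

lemma ncard_graph {α β : Type*} [DecidableEq α] (f : β → α) (I : Finset α) (J : Finset β) :
    Set.ncard {q : α × β | q.1 ∈ I ∧ q.2 ∈ J ∧ q.1 = f q.2} = #{y ∈ J | f y ∈ I} := by
  have graph : {q : α × β | q.1 ∈ I ∧ q.2 ∈ J ∧ q.1 = f q.2} =
      (fun y ↦ (f y, y)) '' ({y ∈ J | f y ∈ I} : Finset β) := by
    ext ⟨x, y⟩
    simp only [coe_filter, Set.mem_image, Set.mem_ofPred_eq, Prod.mk.injEq]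
    grind
  rw [graph, Set.ncard_image_of_injective _ fun y y' h ↦ congrArg Prod.snd h,
    Set.ncard_coe_finset]

variable {a b g : F} {n : ℕ}

lemma le_mul_card_filter_fStar_notMem (ha : a ≠ 0) (hb : b ≠ 0) (hn : 50000 ≤ n)
    (hg : Set.InjOn (g ^ · : ℕ → F) (Set.Iio n))
    (hchar : Set.InjOn (Nat.cast : ℕ → F) (Set.Iio (2 * n))) :
    n ≤ 100 * #{y ∈ geomProg b g n | fStar y ∉ geomProg a g n} := by
  have hg₀ : g ≠ 0 := by
    rintro rfl
    have : 1 = 2 := hg (show 1 < n by omega) (show 2 < n by omega) (by simp)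
    omega
  lift g to Fˣ using hg₀.isUnit
  have hg' : Set.InjOn ((g⁻¹ : Fˣ) ^ · : ℕ → F) (Set.Iio n) := fun i hi j hj hij ↦
    hg hi hj (by simpa using hij)
  have hA : #(geomProg b⁻¹ (g⁻¹ : Fˣ) n) = n := card_geomProg (inv_ne_zero hb) hg'
  have hB : #(geomProg a⁻¹ (g⁻¹ : Fˣ) n) = n := card_geomProg (inv_ne_zero ha) hg'
  have reflect := card_le_mul_defect_subLeft_one (hn.trans_eq hA.symm) (hA.trans hB.symm)
    (defect_mulLeft_geomProg_le_one _ g⁻¹) (defect_mulLeft_geomProg_le_one _ g⁻¹)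
    (by rwa [hA]) (by rwa [hA])
  have transfer := defect_inv_le_card_filter_fStar (I := geomProg a g n)
    (zero_notMem_geomProg (n := n) hb g.ne_zero)
  rw [inv_geomProg, inv_geomProg, ← Units.val_inv_eq_inv_val] at transfer
  omega

theorem stmt6_general (ha : a ≠ 0) (hb : b ≠ 0) (hn : 50000 ≤ n)
    (hg : Set.InjOn (g ^ · : ℕ → F) (Set.Iio n))
    (hchar : Set.InjOn (Nat.cast : ℕ → F) (Set.Iio (2 * n))) :
    (Set.ncard {q : F × F | q.1 ∈ geomProg a g n ∧ q.2 ∈ geomProg b g n ∧ q.1 = fStar q.2} : ℝ)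
      ≤ (1 - 1 / 100) * n := by
  have split := card_filter_add_card_filter_not (s := geomProg b g n) (fStar · ∈ geomProg a g n)
  have missed := le_mul_card_filter_fStar_notMem ha hb hn hg hchar
  rw [card_geomProg hb hg] at split
  rw [ncard_graph]
  have : 100 * #{y ∈ geomProg b g n | fStar y ∈ geomProg a g n} ≤ 99 * n := by omega
  have : (100 * #{y ∈ geomProg b g n | fStar y ∈ geomProg a g n} : ℝ) ≤ 99 * n := mod_cast this
  linarith

end FStar

lemma le_exp_mul_log_div_log_log {C x : ℝ} (hC : 0 ≤ C) (hx : Real.exp 1 < x) :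
    C ≤ Real.exp (C * Real.log x / Real.log (Real.log x)) := by
  have hlog : 1 < Real.log x := (Real.lt_log_iff_exp_lt ((Real.exp_pos 1).trans hx)).2 hx
  have hratio : C ≤ C * Real.log x / Real.log (Real.log x) := by
    rw [le_div_iff₀ (Real.log_pos hlog)]
    gcongr
    exact Real.log_le_self ((Real.exp_pos 1).le.trans hx.le)
  linarith [Real.add_one_le_exp (C * Real.log x / Real.log (Real.log x))]

theorem stmt6 :
    ∃ C κ : ℝ, 0 < C ∧ 0 < κ ∧ κ < 1 ∧
      ∀ (p : ℕ) [Fact p.Prime], 16 ≤ p →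
        ∀ g : ZMod p, IsPrimitiveRoot g (p - 1) →
          ∀ a b : ZMod p, a ≠ 0 → b ≠ 0 →
            ∀ n : ℕ,
              Real.exp (C * Real.log p / Real.log (Real.log p)) ≤ n →
              (n : ℝ) ≤ (p : ℝ) / 2 →
              ∀ I J : Finset (ZMod p),
                I = (Finset.range n).image (fun i => a * g ^ i) →
                J = (Finset.range n).image (fun i => b * g ^ i) →
                I.card = n → J.card = n →
                (Set.ncard {q : ZMod p × ZMod p |
                    q.1 ∈ I ∧ q.2 ∈ J ∧
                    q.1 = (if q.2 = 1 then 1 else q.2 / (q.2 - 1))} : ℝ)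
                  ≤ (1 - κ) * n := by
  refine ⟨50000, 1 / 100, by norm_num, by norm_num, by norm_num, ?_⟩
  rintro p _ hp g hg a b ha hb n hexp hnp I J rfl rfl - -
  have hp' : Real.exp 1 < p := by
    have : (16 : ℝ) ≤ p := mod_cast hp
    linarith [Real.exp_one_lt_d9]
  have hn : 50000 ≤ n := mod_cast (le_exp_mul_log_div_log_log (by norm_num) hp').trans hexp
  have hn2p : 2 * n ≤ p := by
    have : (2 * n : ℝ) ≤ p := by linarith
    exact_mod_cast this
  exact stmt6_general ha hb hn
    (hg.injOn_pow.mono fun i hi ↦ by simp only [Set.mem_Iio, Finset.coe_range] at hi ⊢; omega)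
    ((CharP.natCast_injOn_Iio (ZMod p) p).mono (Set.Iio_subset_Iio hn2p))
end
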